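/- arXiv:2208.14773 — 9 statements merged into one kernel-verified Lean document; each statement's English description precedes it below -/
import Mathlib

section
/- Let q be a prime power, k ≥ 1, and n = 2k+1. Let B = B_0 ∪ B_{n-1} be a blocking set with respect to k-spaces in PG(2k+1,q) consisting of points and hyperplanes, and let ρ be a (k-1)-space containing no point of B_0. If the number N of hyperplanes of B_{n-1} containing ρ satisfies q^k·N = (q+1)·q^k - |B_0|, then every k-space containing ρ contains at most one point of B_0, and q^k divides |B_0|. -/
lemma aux_cover {α β : Type*} [Finite α] [Finite β] (S : Set β) (f : β → Set α) (c : ℕ)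
    (hf : ∀ b ∈ S, (f b).ncard ≤ c) : (⋃ b ∈ S, f b).ncard ≤ S.ncard * c := by
  classical
  induction S, S.toFinite using Set.Finite.induction_on with
  | empty => simp
  | @insert a s ha hs ih =>
    rw [Set.biUnion_insert, Set.ncard_insert_of_notMem ha hs]
    have h1 := Set.ncard_union_le (f a) (⋃ b ∈ s, f b)
    have h2 := ih (fun b hb => hf b (Set.mem_insert_of_mem _ hb))
    have h3 := hf a (Set.mem_insert _ _)
    linarith

lemma aux_card {F V : Type*} [Field F] [Fintype F] [AddCommGroup V] [Module F V] [Finite V]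
    (A : Submodule F V) : (A : Set V).ncard = Fintype.card F ^ Module.finrank F A := by
  rw [← Nat.card_coe_set_eq, ← Nat.card_eq_fintype_card]
  exact Module.natCard_eq_pow_finrank (K := F) (V := A)

lemma aux_diff {F V : Type*} [Field F] [Fintype F] [AddCommGroup V] [Module F V] [Finite V]
    (A B : Submodule F V) :
    ((A : Set V) \ B).ncard + Fintype.card F ^ Module.finrank F (A ⊓ B : Submodule F V)
      = Fintype.card F ^ Module.finrank F A := by
  rw [← aux_card, ← aux_card, Submodule.coe_inf, add_comm]
  exact Set.ncard_inter_add_ncard_sdiff_eq_ncard _ _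

lemma aux_diff_le {F V : Type*} [Field F] [Fintype F] [AddCommGroup V] [Module F V] [Finite V]
    (A B : Submodule F V) (a : ℕ) (hA : Module.finrank F A = a + 1)
    (hAB : a ≤ Module.finrank F (A ⊓ B : Submodule F V)) :
    ((A : Set V) \ B).ncard ≤ (Fintype.card F - 1) * Fintype.card F ^ a := by
  have h := aux_diff A B
  have hq : 0 < Fintype.card F := Fintype.card_pos
  have := Nat.pow_le_pow_right hq hAB
  rw [hA, pow_succ] at h
  rw [Nat.sub_mul, one_mul]
  rw [mul_comm] at h
  omega


/-- Let `B = B0 ∪ Bn` be a blocking set of points and hyperplanes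
with respect to `k`-spaces in `PG(2k+1,q)` and let `ρ` be a `(k-1)`-space containing
no point of `B0`.  If the number `N` of hyperplanes of `Bn` through `ρ` satisfies
`q^k·N = (q+1)·q^k - |B0|` (i.e. `q^k·N + |B0| = (q+1)·q^k`), then every `k`-space
through `ρ` contains at most one point of `B0`, and `q^k` divides `|B0|`. -/
theorem stmt_8 {F : Type} [Field F] [Fintype F] (k : ℕ) (hk : 1 ≤ k)
    (B0 Bn : Set (Submodule F (Fin (2 * k + 2) → F)))
    (hB0 : ∀ p ∈ B0, Module.finrank F p = 1)
    (hBn : ∀ H ∈ Bn, Module.finrank F H = 2 * k + 1)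
    (hblock : ∀ W : Submodule F (Fin (2 * k + 2) → F), Module.finrank F W = k + 1 →
      (∃ p ∈ B0, p ≤ W) ∨ (∃ H ∈ Bn, W ≤ H))
    (ρ : Submodule F (Fin (2 * k + 2) → F)) (hρ : Module.finrank F ρ = k)
    (hρB0 : ∀ p ∈ B0, ¬ p ≤ ρ)
    (heq : (Fintype.card F) ^ k * {H ∈ Bn | ρ ≤ H}.ncard + B0.ncard =
      (Fintype.card F + 1) * (Fintype.card F) ^ k) :
    (∀ W : Submodule F (Fin (2 * k + 2) → F), Module.finrank F W = k + 1 → ρ ≤ W →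
      {p ∈ B0 | p ≤ W}.ncard ≤ 1) ∧
    (Fintype.card F) ^ k ∣ B0.ncard := by
  classical
  have hq : 2 ≤ Fintype.card F := Fintype.one_lt_card
  obtain ⟨r, hr⟩ : ∃ r, Fintype.card F = r + 1 := ⟨Fintype.card F - 1, by omega⟩
  have hr1 : Fintype.card F - 1 = r := by omega
  have hr0 : 0 < r := by omega
  have hqk : 0 < Fintype.card F ^ k := by positivity
  have htop : Module.finrank F (⊤ : Submodule F (Fin (2 * k + 2) → F)) = 2 * k + 2 := by
    simp
  -- size of the join of `ρ` with a point outside it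
  have hjoin : ∀ p : Submodule F (Fin (2 * k + 2) → F), Module.finrank F p = 1 → ¬ p ≤ ρ →
      Module.finrank F (ρ ⊔ p : Submodule F (Fin (2 * k + 2) → F)) = k + 1 := by
    intro p hp hpρ
    have h1 := Submodule.finrank_sup_add_finrank_inf_eq ρ p
    have h2 : ρ < ρ ⊔ p := by
      refine lt_of_le_of_ne le_sup_left ?_
      intro h
      exact hpρ (h ▸ le_sup_right)
    have h3 := Submodule.finrank_lt_finrank_of_lt h2
    omega
  have hpc : ∀ p ∈ B0, (((ρ ⊔ p : Submodule F (Fin (2 * k + 2) → F)) : Set (Fin (2 * k + 2) → F))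
      \ ρ).ncard ≤ r * Fintype.card F ^ k := by
    intro p hp
    rw [← hr1]
    apply aux_diff_le _ _ _ (hjoin p (hB0 p hp) (hρB0 p hp))
    rw [inf_eq_right.mpr le_sup_left, hρ]
  -- every vector off `ρ` is covered
  have hcov : ∀ v : Fin (2 * k + 2) → F, v ∉ ρ →
      (∃ p ∈ B0, v ∈ ρ ⊔ p) ∨ (∃ H ∈ Bn, ρ ≤ H ∧ v ∈ H) := by
    intro v hv
    have hv0 : v ≠ 0 := fun h => hv (h ▸ ρ.zero_mem)
    have hW := hjoin (Submodule.span F {v}) (finrank_span_singleton hv0)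
      (fun h => hv (h (Submodule.mem_span_singleton_self v)))
    have hvW : v ∈ ρ ⊔ Submodule.span F {v} :=
      (le_sup_right : _ ≤ ρ ⊔ Submodule.span F {v}) (Submodule.mem_span_singleton_self v)
    rcases hblock _ hW with ⟨p, hp, hpW⟩ | ⟨H, hH, hWH⟩
    · left
      refine ⟨p, hp, ?_⟩
      have : ρ ⊔ p = ρ ⊔ Submodule.span F {v} := by
        apply Submodule.eq_of_le_of_finrank_eq (sup_le le_sup_left hpW)
        rw [hW, hjoin p (hB0 p hp) (hρB0 p hp)]
      rw [this]
      exact hvW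
    · right
      exact ⟨H, hH, le_sup_left.trans hWH, hWH hvW⟩
  constructor
  · intro W hW hρW
    by_contra hcon
    push Not at hcon
    obtain ⟨p, ⟨hp, hpW⟩, p', ⟨hp', hpW'⟩, hne⟩ := (Set.one_lt_ncard_iff_nontrivial).mp hcon
    have hjW : ∀ p ∈ B0, p ≤ W → ρ ⊔ p = W := by
      intro p hp hpW
      apply Submodule.eq_of_le_of_finrank_eq (sup_le hρW hpW)
      rw [hW, hjoin p (hB0 p hp) (hρB0 p hp)]
    have hcov' : ∀ v : Fin (2 * k + 2) → F, v ∉ ρ →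
        (∃ p ∈ B0 \ {p'}, v ∈ ρ ⊔ p) ∨ (∃ H ∈ Bn, ρ ≤ H ∧ v ∈ H) := by
      intro v hv
      rcases hcov v hv with ⟨x, hx, hvx⟩ | h
      · left
        by_cases hxp : x = p'
        · subst hxp
          exact ⟨p, ⟨hp, hne⟩, by rw [hjW p hp hpW, ← hjW x hx hpW']; exact hvx⟩
        · exact ⟨x, ⟨hx, hxp⟩, hvx⟩
      · exact Or.inr h
    have hB0c : (B0 \ {p'}).ncard + 1 = B0.ncard := Set.ncard_sdiff_singleton_add_one hp'
    have hP := aux_cover (B0 \ {p'})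
      (fun p => ((ρ ⊔ p : Submodule F (Fin (2 * k + 2) → F)) : Set (Fin (2 * k + 2) → F)) \ ρ)
      (r * Fintype.card F ^ k) (fun p hp => hpc p hp.1)
    rcases Set.eq_empty_or_nonempty {H ∈ Bn | ρ ≤ H} with hE | ⟨H0, hH0, hρH0⟩
    · rw [hE, Set.ncard_empty] at heq
      have hsub : ((⊤ : Submodule F (Fin (2 * k + 2) → F)) : Set (Fin (2 * k + 2) → F)) \ ρ ⊆
          ⋃ p ∈ B0 \ {p'}, ((ρ ⊔ p : Submodule F (Fin (2 * k + 2) → F)) :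
            Set (Fin (2 * k + 2) → F)) \ ρ := by
        intro v hv
        rcases hcov' v hv.2 with ⟨x, hx, hvx⟩ | ⟨H, hH, hρH, -⟩
        · exact Set.mem_biUnion hx ⟨hvx, hv.2⟩
        · have : H ∈ {H ∈ Bn | ρ ≤ H} := ⟨hH, hρH⟩
          rw [hE] at this
          exact this.elim
      have h1 := (Set.ncard_le_ncard hsub (Set.toFinite _)).trans hP
      have h2 := aux_diff (⊤ : Submodule F (Fin (2 * k + 2) → F)) ρ
      rw [top_inf_eq, htop, hρ] at h2
      have h3 : (Fintype.card F) ^ (2 * k + 2) =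
          (Fintype.card F) ^ k * (Fintype.card F) ^ k * (Fintype.card F) ^ 2 := by ring
      have h4 : (Fintype.card F) ^ 1 ≤ (Fintype.card F) ^ k := Nat.pow_le_pow_right (by omega) hk
      rw [h3] at h2
      generalize (Fintype.card F) ^ k = Q at *
      generalize (B0 \ {p'}).ncard = b at *
      generalize Fintype.card F = q at *
      subst hr
      have h5 : b + 1 = (r + 1 + 1) * Q := by linarith
      have h6 : Q * Q * (r + 1) ^ 2 ≤ b * (r * Q) + Q := by linarith
      have h7 : Q * (Q * (r + 1) ^ 2) ≤ Q * (b * r + 1) := by linarith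
      have h8 := Nat.le_of_mul_le_mul_left h7 hqk
      have h9 : (b + 1) * r = (r + 1 + 1) * Q * r := by rw [h5]
      nlinarith
    · have hNc : ({H ∈ Bn | ρ ≤ H} \ {H0}).ncard + 1 = {H ∈ Bn | ρ ≤ H}.ncard :=
        Set.ncard_sdiff_singleton_add_one (show H0 ∈ {H ∈ Bn | ρ ≤ H} from ⟨hH0, hρH0⟩)
      have hHH := aux_cover ({H ∈ Bn | ρ ≤ H} \ {H0})
        (fun H => (H : Set (Fin (2 * k + 2) → F)) \ H0)
        (r * Fintype.card F ^ (2 * k)) (by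
          intro H hH
          rw [← hr1]
          apply aux_diff_le _ _ _ (hBn H hH.1.1)
          have h1 := Submodule.finrank_sup_add_finrank_inf_eq H H0
          have h2 := Submodule.finrank_le (H ⊔ H0)
          have h3 := hBn H hH.1.1
          have h4 := hBn H0 hH0
          rw [Module.finrank_fin_fun] at h2
          omega)
      have hsub : ((⊤ : Submodule F (Fin (2 * k + 2) → F)) : Set (Fin (2 * k + 2) → F)) \ H0 ⊆
          (⋃ p ∈ B0 \ {p'}, ((ρ ⊔ p : Submodule F (Fin (2 * k + 2) → F)) :
            Set (Fin (2 * k + 2) → F)) \ ρ) ∪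
          (⋃ H ∈ {H ∈ Bn | ρ ≤ H} \ {H0}, (H : Set (Fin (2 * k + 2) → F)) \ H0) := by
        intro v hv
        have hvρ : v ∉ ρ := fun h => hv.2 (hρH0 h)
        rcases hcov' v hvρ with ⟨x, hx, hvx⟩ | ⟨H, hH, hρH, hvH⟩
        · exact Or.inl (Set.mem_biUnion hx ⟨hvx, hvρ⟩)
        · refine Or.inr (Set.mem_biUnion (show H ∈ {H ∈ Bn | ρ ≤ H} \ {H0} from
            ⟨⟨hH, hρH⟩, ?_⟩) ⟨hvH, hv.2⟩)
          intro h
          rw [Set.mem_singleton_iff] at h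
          exact hv.2 (h ▸ hvH)
      have h1 := (Set.ncard_le_ncard hsub (Set.toFinite _)).trans
        ((Set.ncard_union_le _ _).trans (add_le_add hP hHH))
      have h2 := aux_diff (⊤ : Submodule F (Fin (2 * k + 2) → F)) H0
      rw [top_inf_eq, htop, hBn H0 hH0] at h2
      have h3 : (Fintype.card F) ^ (2 * k + 2) =
          (Fintype.card F) ^ k * (Fintype.card F) ^ k * (Fintype.card F) ^ 2 := by ring
      have h4 : (Fintype.card F) ^ (2 * k + 1) =
          (Fintype.card F) ^ k * (Fintype.card F) ^ k * (Fintype.card F) := by ring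
      have h5 : (Fintype.card F) ^ (2 * k) =
          (Fintype.card F) ^ k * (Fintype.card F) ^ k := by ring
      rw [h3, h4] at h2
      rw [h5] at h1
      rw [← hNc, ← hB0c] at heq
      generalize (Fintype.card F) ^ k = Q at *
      generalize (B0 \ {p'}).ncard = b at *
      generalize ({H ∈ Bn | ρ ≤ H} \ {H0}).ncard = N at *
      generalize Fintype.card F = q at *
      subst hr
      have h7 : (r * Q) * (Q * (r + 1)) ≤ (r * Q) * (b + N * Q) := by linarith
      have h8 := Nat.le_of_mul_le_mul_left h7 (by positivity)
      linarith
  · have hd : Fintype.card F ^ k ∣ Fintype.card F ^ k * {H ∈ Bn | ρ ≤ H}.ncard + B0.ncard := by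
      rw [heq]
      exact Dvd.intro_left _ rfl
    exact (Nat.dvd_add_right (Nat.dvd_mul_right _ _)).mp hd
end

section
/- Let q be a prime power, k ≥ 1, and n = 2k+1. Let B = B_0 ∪ B_{n-1} be a blocking set with respect to k-spaces in PG(2k+1,q) consisting of points and hyperplanes with |B| = (q+1)·q^k. Then no hyperplane of B_{n-1} contains a point of B_0. -/
namespace PHBlock

open Module

variable {F : Type} [Field F] [Fintype F]

lemma card_sub {V : Type} [AddCommGroup V] [Module F V] [FiniteDimensional F V]
    (U : Submodule F V) : (U : Set V).ncard = Fintype.card F ^ finrank F U := by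
  have := Module.natCard_eq_pow_finrank (K := F) (V := U)
  rw [← Nat.card_eq_fintype_card, ← this]
  rfl

lemma finiteV (F : Type) [Field F] [Fintype F]
    (V : Type) [AddCommGroup V] [Module F V] [FiniteDimensional F V] : Finite V :=
  Module.finite_of_finite F

/-- Covering bound: if `V` is covered by hyperplanes through `U` and by spans `U ⊔ p`. -/
lemma cover_bound {V : Type} [AddCommGroup V] [Module F V] [FiniteDimensional F V]
    (k : ℕ) (hV : finrank F V = 2 * k + 2)
    (U : Submodule F V) (hU : finrank F U = k) (T P : Finset (Submodule F V))
    (hT : ∀ H ∈ T, finrank F H = 2 * k + 1) (hP : ∀ p ∈ P, finrank F p = 1)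
    (hcov : ∀ v, v ∉ U → (∃ H ∈ T, v ∈ H) ∨ ∃ p ∈ P, v ∈ U ⊔ p)
    (hTU : ∀ H ∈ T, U ≤ H) :
    Fintype.card F ^ k * (Fintype.card F + 1) ≤ T.card * Fintype.card F ^ k + P.card := by
  classical
  have := finiteV F V
  have := Fintype.ofFinite V
  set q := Fintype.card F with hq
  have hq2 : 1 < q := Fintype.one_lt_card
  let S : Submodule F V → Finset V := fun X => (X : Set V).toFinset
  have hS : ∀ X, (S X).card = q ^ finrank F X := by
    intro X
    rw [← card_sub X, Set.ncard_eq_toFinset_card']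
  have hmS : ∀ X v, v ∈ S X ↔ v ∈ X := by intro X v; simp [S]
  have hSmono : ∀ X Y : Submodule F V, X ≤ Y → S X ⊆ S Y := by
    intro X Y h v hv
    rw [hmS] at *
    exact h hv
  -- the hyperplane part
  have key1 : (S U ∪ T.biUnion S).card ≤ q ^ (2 * k) + T.card * (q ^ (2 * k + 1) - q ^ (2 * k)) := by
    rcases T.eq_empty_or_nonempty with h | ⟨H0, hH0⟩
    · subst h
      simp only [Finset.biUnion_empty, Finset.union_empty, Finset.card_empty, zero_mul, add_zero]
      rw [hS, hU]
      exact Nat.pow_le_pow_right (by omega) (by omega)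
    · have hsub : S U ∪ T.biUnion S ⊆ S H0 ∪ (T.erase H0).biUnion (fun H => S H \ S H0) := by
        intro v hv
        simp only [Finset.mem_union, Finset.mem_biUnion, Finset.mem_sdiff, hmS,
          Finset.mem_erase] at *
        by_cases h0 : v ∈ H0
        · exact Or.inl h0
        · right
          rcases hv with hv | ⟨H, hH, hv⟩
          · exact absurd (hTU _ hH0 hv) h0
          · exact ⟨H, ⟨fun h => h0 (h ▸ hv), hH⟩, hv, h0⟩
      have hb : ∀ H ∈ T.erase H0, (S H \ S H0).card ≤ q ^ (2 * k + 1) - q ^ (2 * k) := by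
        intro H hH
        have hH' := hT H (Finset.mem_of_mem_erase hH)
        have h1 : (S (H ⊓ H0)).card ≥ q ^ (2 * k) := by
          rw [hS]
          apply Nat.pow_le_pow_right (by omega)
          have := Submodule.finrank_sup_add_finrank_inf_eq H H0
          have h2 := Submodule.finrank_le (H ⊔ H0)
          have := hT H0 hH0
          omega
        have h3 : S H \ S H0 ⊆ S H \ S (H ⊓ H0) :=
          Finset.sdiff_subset_sdiff le_rfl (hSmono _ _ inf_le_right)
        have h4 := Finset.card_le_card h3
        rw [Finset.card_sdiff_of_subset (hSmono _ _ inf_le_left), hS H, hH'] at h4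
        omega
      have hc := (Finset.card_le_card hsub).trans (Finset.card_union_le _ _)
      have hc2 := Finset.card_biUnion_le_card_mul _ _ _ hb
      rw [hS, hT _ hH0] at hc
      rw [Finset.card_erase_of_mem hH0] at hc2
      have hpos : 0 < T.card := Finset.card_pos.mpr ⟨_, hH0⟩
      obtain ⟨t, ht⟩ : ∃ t, T.card = t + 1 := ⟨T.card - 1, by omega⟩
      rw [ht] at hc2 ⊢
      have : q ^ (2 * k) ≤ q ^ (2 * k + 1) := Nat.pow_le_pow_right (by omega) (by omega)
      rw [add_mul]
      simp only [Nat.add_sub_cancel] at hc2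
      omega
  have key2 : (P.biUnion (fun p => S (U ⊔ p) \ S U)).card ≤ P.card * (q ^ (k + 1) - q ^ k) := by
    apply Finset.card_biUnion_le_card_mul
    intro p hp
    rw [Finset.card_sdiff_of_subset (hSmono _ _ le_sup_left), hS, hS, hU]
    apply Nat.sub_le_sub_right
    apply Nat.pow_le_pow_right (by omega)
    have := Submodule.finrank_add_le_finrank_add_finrank U p
    have := hP p hp
    omega
  have hall : (Finset.univ : Finset V) ⊆
      (S U ∪ T.biUnion S) ∪ P.biUnion (fun p => S (U ⊔ p) \ S U) := by
    intro v _
    simp only [Finset.mem_union, Finset.mem_biUnion, Finset.mem_sdiff, hmS]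
    by_cases h : v ∈ U
    · exact Or.inl (Or.inl h)
    · rcases hcov v h with h1 | ⟨p, hp, h2⟩
      · exact Or.inl (Or.inr h1)
      · exact Or.inr ⟨p, hp, h2, h⟩
  have hfin := (Finset.card_le_card hall).trans (Finset.card_union_le _ _)
  have hVc : (Finset.univ : Finset V).card = q ^ (2 * k + 2) := by
    rw [Finset.card_univ, ← hV, Module.card_eq_pow_finrank (K := F)]
  rw [hVc] at hfin
  have hfin2 := hfin.trans (Nat.add_le_add key1 key2)
  obtain ⟨r, hr⟩ : ∃ r, q = r + 1 := ⟨q - 1, by omega⟩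
  have e1 : q ^ (2 * k + 1) - q ^ (2 * k) = q ^ k * (q ^ k * r) := by
    have : q ^ (2 * k + 1) = q ^ (2 * k) + q ^ k * (q ^ k * r) := by
      rw [pow_succ, hr]; ring
    omega
  have e2 : q ^ (k + 1) - q ^ k = q ^ k * r := by
    have : q ^ (k + 1) = q ^ k + q ^ k * r := by
      rw [pow_succ, hr]; ring
    omega
  have e3 : q ^ (2 * k + 2) = q ^ (2 * k) + q ^ k * r * (q ^ k * (q + 1)) := by
    rw [pow_add, hr]; ring
  rw [e1, e2, e3] at hfin2
  have hpos : 0 < q ^ k * r := Nat.mul_pos (pow_pos (by omega) _) (by omega)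
  apply Nat.le_of_mul_le_mul_left _ hpos
  have : q ^ k * r * (T.card * q ^ k + P.card) =
    T.card * (q ^ k * (q ^ k * r)) + P.card * (q ^ k * r) := by ring
  omega

/-- Blocking `k`-spaces with points and hyperplanes. -/
structure Blk {V : Type} [AddCommGroup V] [Module F V] (k : ℕ)
    (B0 Bn : Finset (Submodule F V)) : Prop where
  pt : ∀ p ∈ B0, finrank F p = 1
  hyp : ∀ H ∈ Bn, finrank F H = 2 * k + 1
  blk : ∀ W : Submodule F V, finrank F W = k + 1 → (∃ p ∈ B0, p ≤ W) ∨ ∃ H ∈ Bn, W ≤ H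

open Classical in
lemma local_cover {V : Type} [AddCommGroup V] [Module F V] [FiniteDimensional F V]
    {k : ℕ} (hV : finrank F V = 2 * k + 2) {B0 Bn : Finset (Submodule F V)}
    (hB : Blk k B0 Bn) (U : Submodule F V) (hU : finrank F U = k)
    (hav : ∀ p ∈ B0, ¬ p ≤ U) (P : Finset (Submodule F V)) (hPB : P ⊆ B0)
    (hPc : ∀ p ∈ B0, p ∉ P → ∃ H ∈ Bn, U ≤ H ∧ p ≤ H) :
    Fintype.card F ^ k * (Fintype.card F + 1) ≤
      (Bn.filter (fun H => U ≤ H)).card * Fintype.card F ^ k + P.card := by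
  apply cover_bound k hV U hU
  · intro H hH
    exact hB.hyp H (Finset.mem_of_mem_filter _ hH)
  · intro p hp
    exact hB.pt p (hPB hp)
  · intro v hv
    have hv0 : v ≠ 0 := fun h => hv (h ▸ U.zero_mem)
    have hW : finrank F (U ⊔ F ∙ v : Submodule F V) = k + 1 := by
      rw [Submodule.finrank_sup_span_singleton hv, hU]
    rcases hB.blk _ hW with ⟨p, hp, hpW⟩ | ⟨H, hH, hWH⟩
    · have hUp : U ⊔ p = U ⊔ F ∙ v := by
        apply Submodule.eq_of_le_of_finrank_le (sup_le le_sup_left hpW)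
        rw [hW]
        have : U < U ⊔ p := by
          rw [left_lt_sup]
          exact hav p hp
        have := Submodule.finrank_lt_finrank_of_lt this
        omega
      have hvp : v ∈ U ⊔ p := by
        rw [hUp]
        exact Submodule.mem_sup_right (Submodule.mem_span_singleton_self v)
      by_cases hpP : p ∈ P
      · exact Or.inr ⟨p, hpP, hvp⟩
      · obtain ⟨H, hH, hUH, hpH⟩ := hPc p hp hpP
        exact Or.inl ⟨H, Finset.mem_filter.mpr ⟨hH, hUH⟩, sup_le hUH hpH hvp⟩
    · exact Or.inl ⟨H, Finset.mem_filter.mpr ⟨hH, le_sup_left.trans hWH⟩,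
        hWH (Submodule.mem_sup_right (Submodule.mem_span_singleton_self v))⟩
  · intro H hH
    exact (Finset.mem_filter.mp hH).2

/-- number of hyperplanes of a `(k+1)`-dimensional space -/
lemma many_hyp {V : Type} [AddCommGroup V] [Module F V] [FiniteDimensional F V]
    {k : ℕ} (W : Submodule F V) (hW : finrank F W = k + 1) :
    ∃ 𝒰 : Finset (Submodule F V), (∀ U ∈ 𝒰, finrank F U = k ∧ U ≤ W) ∧
      𝒰.card = ∑ i ∈ Finset.range (k + 1), Fintype.card F ^ i := by
  classical
  have := finiteV F V
  have : Finite (Dual F W) := finiteV F _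
  have : Finite (Projectivization F (Dual F W)) :=
    (Projectivization.finite_iff_of_finite (k := F) (V := Dual F W)).mpr inferInstance
  have := Fintype.ofFinite (Projectivization F (Dual F W))
  let f : Projectivization F (Dual F W) → Submodule F V :=
    fun x => (x.submodule.dualCoannihilator).map W.subtype
  have hf : Function.Injective f := by
    intro x y h
    have h1 := Submodule.map_injective_of_injective W.injective_subtype h
    have h2 := congrArg Submodule.dualAnnihilator h1
    rw [Subspace.dualCoannihilator_dualAnnihilator_eq,
      Subspace.dualCoannihilator_dualAnnihilator_eq] at h2
    exact Projectivization.submodule_injective h2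
  refine ⟨Finset.univ.image f, ?_, ?_⟩
  · intro U hU
    obtain ⟨x, -, rfl⟩ := Finset.mem_image.mp hU
    refine ⟨?_, Submodule.map_subtype_le _ _⟩
    have h1 := Subspace.finrank_add_finrank_dualCoannihilator_eq x.submodule
    have h2 := x.finrank_submodule
    have h3 : finrank F (f x) = finrank F x.submodule.dualCoannihilator :=
      Submodule.finrank_map_subtype_eq _ _
    omega
  · rw [Finset.card_image_of_injective _ hf, Finset.card_univ, ← Nat.card_eq_fintype_card,
      Projectivization.card_of_finrank F (Dual F W) (n := k + 1) (by rw [Subspace.dual_finrank_eq, hW]),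
      Nat.card_eq_fintype_card]

lemma theta_ge {q k : ℕ} (hk : 1 ≤ k) :
    q ^ k + q ^ (k - 1) ≤ ∑ i ∈ Finset.range (k + 1), q ^ i := by
  obtain ⟨j, rfl⟩ : ∃ j, k = j + 1 := ⟨k - 1, by omega⟩
  rw [Finset.sum_range_succ, Finset.sum_range_succ]
  simp only [Nat.add_sub_cancel]
  omega

open Classical in
/-- Private space counting. -/
lemma private_count {V : Type} [AddCommGroup V] [Module F V] [FiniteDimensional F V]
    {k : ℕ} (hV : finrank F V = 2 * k + 2) {B0 Bn : Finset (Submodule F V)}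
    (hB : Blk k B0 Bn) (H : Submodule F V) (hH : H ∈ Bn)
    (W : Submodule F V) (hW : finrank F W = k + 1) (hWH : W ≤ H)
    (hpr : ∀ H' ∈ Bn, W ≤ H' → H' = H) (τ : ℕ)
    (hτ : ∀ U : Submodule F V, finrank F U = k → U ≤ W →
      τ + 1 ≤ (Bn.filter (fun H => U ≤ H)).card) :
    1 + (∑ i ∈ Finset.range (k + 1), Fintype.card F ^ i) * τ ≤ Bn.card := by
  obtain ⟨𝒰, h𝒰, hcard⟩ := many_hyp W hW
  rw [← hcard]
  have h1 : 𝒰.card • τ ≤ (Bn.erase H).card • 1 := by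
    apply Finset.card_nsmul_le_card_nsmul (fun (U H' : Submodule F V) => U ≤ H')
    · intro U hU
      obtain ⟨hU1, hU2⟩ := h𝒰 U hU
      have h2 := hτ U hU1 hU2
      have h3 : (Finset.bipartiteAbove (fun (U H' : Submodule F V) => U ≤ H') (Bn.erase H) U)
          = (Bn.filter (fun H => U ≤ H)).erase H := by
        ext X
        simp [Finset.bipartiteAbove]
        tauto
      rw [h3, Finset.card_erase_of_mem (Finset.mem_filter.mpr ⟨hH, hU2.trans hWH⟩)]
      simp only [Nat.cast_id]
      exact Nat.le_sub_of_add_le h2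
    · intro H' hH'
      obtain ⟨hne, hH'⟩ := Finset.mem_erase.mp hH'
      simp only [Nat.cast_id]
      rw [Finset.card_le_one]
      have hlt : finrank F (W ⊓ H' : Submodule F V) < k + 1 := by
        rw [← hW]
        apply Submodule.finrank_lt_finrank_of_lt
        rw [inf_lt_left]
        exact fun h => hne (hpr H' hH' h)
      have huniq : ∀ U ∈ Finset.bipartiteBelow (fun (U H' : Submodule F V) => U ≤ H') 𝒰 H',
          U = W ⊓ H' := by
        intro U hU
        obtain ⟨hU1, hU2⟩ := Finset.mem_filter.mp hU
        obtain ⟨hU3, hU4⟩ := h𝒰 U hU1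
        apply Submodule.eq_of_le_of_finrank_le (le_inf hU4 hU2)
        omega
      intro a ha b hb
      rw [huniq a ha, huniq b hb]
  have h2 : 0 < Bn.card := Finset.card_pos.mpr ⟨_, hH⟩
  rw [Finset.card_erase_of_mem hH] at h1
  simp only [smul_eq_mul] at h1
  omega

/-- Lower bound on the number of hyperplanes when there is an essential one. -/
lemma lemA {V : Type} [AddCommGroup V] [Module F V] [FiniteDimensional F V]
    {k : ℕ} (hV : finrank F V = 2 * k + 2) {B0 Bn : Finset (Submodule F V)}
    (hB : Blk k B0 Bn) (H : Submodule F V) (hH : H ∈ Bn)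
    (W : Submodule F V) (hW : finrank F W = k + 1) (hWH : W ≤ H)
    (hpr : ∀ H' ∈ Bn, W ≤ H' → H' = H) (hpt : ∀ p ∈ B0, ¬ p ≤ W) :
    1 + (∑ i ∈ Finset.range (k + 1), Fintype.card F ^ i) *
      (Fintype.card F - B0.card / Fintype.card F ^ k) ≤ Bn.card := by
  classical
  apply private_count hV hB H hH W hW hWH hpr
  intro U hU hUW
  have h1 := local_cover hV hB U hU (fun p hp h => hpt p hp (h.trans hUW)) B0 subset_rfl
    (fun p hp h => absurd hp h)
  have hpos : 0 < Fintype.card F ^ k := pow_pos Fintype.card_pos _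
  have hmem : H ∈ Bn.filter (fun H => U ≤ H) := Finset.mem_filter.mpr ⟨hH, hUW.trans hWH⟩
  have hpos2 : 0 < (Bn.filter (fun H => U ≤ H)).card := Finset.card_pos.mpr ⟨_, hmem⟩
  have h2 : Fintype.card F + 1 ≤ (Bn.filter (fun H => U ≤ H)).card + B0.card / Fintype.card F ^ k := by
    have h := (Nat.le_div_iff_mul_le hpos).2
      ((mul_comm _ _).trans_le (h1.trans_eq (add_comm _ _)))
    rw [Nat.add_mul_div_right _ _ hpos] at h
    exact h.trans_eq (add_comm _ _)
  have h3 : ∀ s, s = (Bn.filter (fun H => U ≤ H)).card → 0 < s →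
    Fintype.card F + 1 ≤ s + B0.card / Fintype.card F ^ k →
    Fintype.card F - B0.card / Fintype.card F ^ k + 1 ≤ s := by
    intro s _ h h'
    omega
  exact h3 _ rfl hpos2 h2

open Classical in
lemma blk_dual {V : Type} [AddCommGroup V] [Module F V] [FiniteDimensional F V]
    {k : ℕ} (hV : finrank F V = 2 * k + 2) {B0 Bn : Finset (Submodule F V)}
    (hB : Blk k B0 Bn) :
    Blk (V := Dual F V) k (Bn.image Submodule.dualAnnihilator)
      (B0.image Submodule.dualAnnihilator) where
  pt := by
    intro p hp
    obtain ⟨H, hH, rfl⟩ := Finset.mem_image.mp hp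
    have := Subspace.finrank_add_finrank_dualAnnihilator_eq H
    have := hB.hyp H hH
    omega
  hyp := by
    intro p hp
    obtain ⟨H, hH, rfl⟩ := Finset.mem_image.mp hp
    have := Subspace.finrank_add_finrank_dualAnnihilator_eq H
    have := hB.pt H hH
    omega
  blk := by
    intro W hW
    have h1 := Subspace.finrank_add_finrank_dualCoannihilator_eq W
    have h2 : W.dualCoannihilator.dualAnnihilator = W :=
      Subspace.dualCoannihilator_dualAnnihilator_eq
    rcases hB.blk W.dualCoannihilator (by omega) with ⟨p, hp, h⟩ | ⟨H, hH, h⟩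
    · right
      refine ⟨_, Finset.mem_image_of_mem _ hp, ?_⟩
      have := Submodule.dualAnnihilator_anti h
      rwa [h2] at this
    · left
      refine ⟨_, Finset.mem_image_of_mem _ hH, ?_⟩
      have := Submodule.dualAnnihilator_anti h
      rwa [h2] at this

lemma ann_inj {V : Type} [AddCommGroup V] [Module F V] :
    Function.Injective (Submodule.dualAnnihilator : Submodule F V → Submodule F (Dual F V)) :=
  fun _ _ h => Subspace.dualAnnihilator_inj.mp h

lemma lemA_dual {V : Type} [AddCommGroup V] [Module F V] [FiniteDimensional F V]
    {k : ℕ} (hV : finrank F V = 2 * k + 2) {B0 Bn : Finset (Submodule F V)}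
    (hB : Blk k B0 Bn) (z : Submodule F V) (hz : z ∈ B0)
    (W : Submodule F V) (hW : finrank F W = k + 1) (hzW : z ≤ W)
    (hpr : ∀ p ∈ B0, p ≤ W → p = z) (hpt : ∀ H ∈ Bn, ¬ W ≤ H) :
    1 + (∑ i ∈ Finset.range (k + 1), Fintype.card F ^ i) *
      (Fintype.card F - Bn.card / Fintype.card F ^ k) ≤ B0.card := by
  classical
  have h := lemA (V := Dual F V) (by rw [Subspace.dual_finrank_eq, hV]) (blk_dual hV hB)
    z.dualAnnihilator (Finset.mem_image_of_mem _ hz) W.dualAnnihilator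
    (by have := Subspace.finrank_add_finrank_dualAnnihilator_eq W; omega)
    (Submodule.dualAnnihilator_anti hzW)
    (by
      intro H' hH' h
      obtain ⟨p, hp, rfl⟩ := Finset.mem_image.mp hH'
      rw [hpr p hp (Subspace.dualAnnihilator_le_dualAnnihilator_iff.mp h)])
    (by
      intro p hp h
      obtain ⟨H, hH, rfl⟩ := Finset.mem_image.mp hp
      exact hpt H hH (Subspace.dualAnnihilator_le_dualAnnihilator_iff.mp h))
  rwa [Finset.card_image_of_injective _ ann_inj, Finset.card_image_of_injective _ ann_inj] at h

open Classical in
lemma essential_hyp {V : Type} [AddCommGroup V] [Module F V]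
    {k : ℕ} {B0 Bn : Finset (Submodule F V)}
    (hB : Blk k B0 Bn) (H : Submodule F V) (hne : ¬ Blk k B0 (Bn.erase H)) :
    ∃ W : Submodule F V, finrank F W = k + 1 ∧ W ≤ H ∧
      (∀ H' ∈ Bn, W ≤ H' → H' = H) ∧ ∀ p ∈ B0, ¬ p ≤ W := by
  by_contra hcon
  apply hne
  refine ⟨hB.pt, fun H' h => hB.hyp H' (Finset.mem_of_mem_erase h), ?_⟩
  intro W hW
  by_contra hc
  push Not at hc
  obtain ⟨hc1, hc2⟩ := hc
  have hpr : ∀ H' ∈ Bn, W ≤ H' → H' = H := by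
    intro H' h1 h2
    by_contra h3
    exact hc2 H' (Finset.mem_erase.mpr ⟨h3, h1⟩) h2
  rcases hB.blk W hW with ⟨p, hp, h⟩ | ⟨H', hH', h⟩
  · exact hc1 p hp h
  · exact hcon ⟨W, hW, hpr H' hH' h ▸ h, hpr, hc1⟩

open Classical in
lemma essential_pt {V : Type} [AddCommGroup V] [Module F V]
    {k : ℕ} {B0 Bn : Finset (Submodule F V)}
    (hB : Blk k B0 Bn) (z : Submodule F V) (hne : ¬ Blk k (B0.erase z) Bn) :
    ∃ W : Submodule F V, finrank F W = k + 1 ∧ z ≤ W ∧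
      (∀ p ∈ B0, p ≤ W → p = z) ∧ ∀ H ∈ Bn, ¬ W ≤ H := by
  by_contra hcon
  apply hne
  refine ⟨fun H' h => hB.pt H' (Finset.mem_of_mem_erase h), hB.hyp, ?_⟩
  intro W hW
  by_contra hc
  push Not at hc
  obtain ⟨hc1, hc2⟩ := hc
  have hpr : ∀ p ∈ B0, p ≤ W → p = z := by
    intro H' h1 h2
    by_contra h3
    exact hc1 H' (Finset.mem_erase.mpr ⟨h3, h1⟩) h2
  rcases hB.blk W hW with ⟨p, hp, h⟩ | ⟨H', hH', h⟩
  · exact hcon ⟨W, hW, hpr p hp h ▸ h, hpr, hc2⟩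
  · exact hc2 H' hH' h

/-- arithmetic core -/
lemma arith {q k x y θ : ℕ} (hq : 2 ≤ q) (hk : 1 ≤ k) (hθ : q ^ k + q ^ (k - 1) ≤ θ)
    (hne : x ≠ 0 ∨ y ≠ 0)
    (h1 : y ≠ 0 → 1 + θ * (q - x / q ^ k) ≤ y)
    (h2 : x ≠ 0 → 1 + θ * (q - y / q ^ k) ≤ x) 
    (hlt : x / q ^ k + y / q ^ k ≤ q) : q ^ k * (q + 1) < x + y := by
  have e : q * q ^ (k - 1) = q ^ k := by
    rw [← pow_succ']; congr 1; omega
  have hθq : q ^ k * (q + 1) ≤ θ * q := by nlinarith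
  by_cases hx : x = 0
  · have := h1 (by omega)
    subst hx
    simp at this
    omega
  by_cases hy : y = 0
  · have := h2 (by omega)
    subst hy
    simp at this
    omega
  have a1 := h1 hy
  have a2 := h2 hx
  have a3 : θ * q ≤ θ * ((q - x / q ^ k) + (q - y / q ^ k)) := by
    apply Nat.mul_le_mul_left
    omega
  rw [mul_add] at a3
  omega

lemma lower {V : Type} [AddCommGroup V] [Module F V] [FiniteDimensional F V]
    {k : ℕ} (hk : 1 ≤ k) (hV : finrank F V = 2 * k + 2) (N : ℕ) :
    ∀ B0 Bn : Finset (Submodule F V), Blk k B0 Bn → B0.card + Bn.card = N →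
      Fintype.card F ^ k * (Fintype.card F + 1) ≤ N := by
  classical
  induction N with
  | zero =>
    intro B0 Bn hB hN
    exfalso
    obtain ⟨f, hf⟩ := exists_linearIndependent_of_le_finrank (R := F) (M := V) (n := k + 1) (by omega)
    obtain ⟨W, hW⟩ : ∃ W : Submodule F V, finrank F W = k + 1 :=
      ⟨Submodule.span F (Set.range f), by rw [finrank_span_eq_card hf, Fintype.card_fin]⟩
    have h1 : B0 = ∅ := Finset.card_eq_zero.mp (by omega)
    have h2 : Bn = ∅ := Finset.card_eq_zero.mp (by omega)
    subst h1 h2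
    rcases hB.blk W hW with ⟨p, hp, _⟩ | ⟨p, hp, _⟩ <;> simp at hp
  | succ N ih =>
    intro B0 Bn hB hN
    by_cases c1 : ∃ H ∈ Bn, Blk k B0 (Bn.erase H)
    · obtain ⟨H, hH, h⟩ := c1
      have := ih _ _ h (by rw [Finset.card_erase_of_mem hH]; have := Finset.card_pos.mpr ⟨_, hH⟩; omega)
      omega
    by_cases c2 : ∃ z ∈ B0, Blk k (B0.erase z) Bn
    · obtain ⟨H, hH, h⟩ := c2
      have := ih _ _ h (by rw [Finset.card_erase_of_mem hH]; have := Finset.card_pos.mpr ⟨_, hH⟩; omega)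
      omega
    push Not at c1 c2
    by_contra hcon
    push Not at hcon
    have hq : 2 ≤ Fintype.card F := Fintype.one_lt_card
    have hpos : 0 < Fintype.card F ^ k := pow_pos Fintype.card_pos _
    have := arith (x := B0.card) (y := Bn.card) hq hk (theta_ge hk) (by omega)
      (by
        intro h
        obtain ⟨H, hH⟩ := Finset.card_ne_zero.mp h
        obtain ⟨W, hW, a, b, c⟩ := essential_hyp hB H (c1 H hH)
        exact lemA hV hB H hH W hW a b c)
      (by
        intro h
        obtain ⟨H, hH⟩ := Finset.card_ne_zero.mp h
        obtain ⟨W, hW, a, b, c⟩ := essential_pt hB H (c2 H hH)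
        exact lemA_dual hV hB H hH W hW a b c)
      (by
        have e1 := Nat.div_mul_le_self B0.card (Fintype.card F ^ k)
        have e2 := Nat.div_mul_le_self Bn.card (Fintype.card F ^ k)
        by_contra h
        push Not at h
        have := Nat.mul_le_mul_right (Fintype.card F ^ k) (Nat.succ_le_of_lt h)
        rw [Nat.succ_eq_add_one, mul_comm, add_mul (B0.card / _)] at this
        omega)
    omega

lemma main {V : Type} [AddCommGroup V] [Module F V] [FiniteDimensional F V]
    {k : ℕ} (hk : 1 ≤ k) (hV : finrank F V = 2 * k + 2)
    (B0 Bn : Finset (Submodule F V)) (hB : Blk k B0 Bn)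
    (hN : B0.card + Bn.card = Fintype.card F ^ k * (Fintype.card F + 1)) :
    ∀ H ∈ Bn, ∀ p ∈ B0, ¬ p ≤ H := by
  classical
  have c1 : ∀ H ∈ Bn, ¬ Blk k B0 (Bn.erase H) := by
    intro H hH h
    have h1 := lower hk hV _ _ _ h rfl
    rw [Finset.card_erase_of_mem hH] at h1
    have := Finset.card_pos.mpr ⟨_, hH⟩
    omega
  have c2 : ∀ z ∈ B0, ¬ Blk k (B0.erase z) Bn := by
    intro H hH h
    have h1 := lower hk hV _ _ _ h rfl
    rw [Finset.card_erase_of_mem hH] at h1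
    have := Finset.card_pos.mpr ⟨_, hH⟩
    omega
  have hq : 2 ≤ Fintype.card F := Fintype.one_lt_card
  have hpos : 0 < Fintype.card F ^ k := pow_pos Fintype.card_pos _
  have hpos2 : 0 < Fintype.card F ^ (k - 1) := pow_pos Fintype.card_pos _
  have hθ := theta_ge (q := Fintype.card F) hk
  intro H hH z hz hzH
  have hsum : Fintype.card F + 1 ≤ B0.card / Fintype.card F ^ k + Bn.card / Fintype.card F ^ k := by
    by_contra hcon
    have := arith (x := B0.card) (y := Bn.card) hq hk hθ
      (Or.inl (Finset.card_ne_zero.mpr ⟨_, hz⟩))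
      (by
        intro h
        obtain ⟨H, hH⟩ := Finset.card_ne_zero.mp h
        obtain ⟨W, hW, a, b, c⟩ := essential_hyp hB H (c1 H hH)
        exact lemA hV hB H hH W hW a b c)
      (by
        intro h
        obtain ⟨H, hH⟩ := Finset.card_ne_zero.mp h
        obtain ⟨W, hW, a, b, c⟩ := essential_pt hB H (c2 H hH)
        exact lemA_dual hV hB H hH W hW a b c)
      (by omega)
    omega
  have e1 := Nat.div_mul_le_self B0.card (Fintype.card F ^ k)
  have e2 := Nat.div_mul_le_self Bn.card (Fintype.card F ^ k)
  have e3 := Nat.mul_le_mul_right (Fintype.card F ^ k) hsum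
  rw [mul_comm, add_mul (B0.card / _)] at e3
  set β := Bn.card / Fintype.card F ^ k with hβ
  have hy : Bn.card = β * Fintype.card F ^ k := by omega
  obtain ⟨W, hW, hWH, hpr, hpt⟩ := essential_hyp hB H (c1 H hH)
  have hfin := private_count hV hB H hH W hW hWH hpr β (by
    intro U hU hUW
    have h1 := local_cover hV hB U hU (fun p hp h => hpt p hp (h.trans hUW)) (B0.erase z)
      (Finset.erase_subset _ _)
      (fun p hp h => by
        have : p = z := by
          by_contra h'
          exact h (Finset.mem_erase.mpr ⟨h', hp⟩)
        exact ⟨H, hH, hUW.trans hWH, this ▸ hzH⟩)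
    rw [Finset.card_erase_of_mem hz, ← hN, hy] at h1
    have := Finset.card_pos.mpr ⟨_, hz⟩
    apply Nat.succ_le_of_lt
    apply Nat.lt_of_mul_lt_mul_right (a := Fintype.card F ^ k)
    omega)
  have h5 := Nat.mul_le_mul_right β (le_trans (Nat.le_add_right _ _) hθ)
  rw [mul_comm] at h5
  omega

end PHBlock


/-- Let `B = B0 ∪ Bn` be a blocking set of points and hyperplanes
with respect to `k`-spaces in `PG(2k+1,q)` with `|B| = (q+1)·q^k`.  Then no
hyperplane of `Bn` contains a point of `B0`. -/
theorem stmt_9 {F : Type} [Field F] [Fintype F] (k : ℕ) (hk : 1 ≤ k)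
    (B0 Bn : Set (Submodule F (Fin (2 * k + 2) → F)))
    (hB0 : ∀ p ∈ B0, Module.finrank F p = 1)
    (hBn : ∀ H ∈ Bn, Module.finrank F H = 2 * k + 1)
    (hblock : ∀ W : Submodule F (Fin (2 * k + 2) → F), Module.finrank F W = k + 1 →
      (∃ p ∈ B0, p ≤ W) ∨ (∃ H ∈ Bn, W ≤ H))
    (hsize : B0.ncard + Bn.ncard = (Fintype.card F + 1) * (Fintype.card F) ^ k) :
    ∀ H ∈ Bn, ∀ p ∈ B0, ¬ p ≤ H := by
  classical
  have : Finite (Fin (2 * k + 2) → F) := inferInstance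
  have : Finite (Submodule F (Fin (2 * k + 2) → F)) := inferInstance
  have f0 := Set.toFinite B0
  have fn := Set.toFinite Bn
  have h := PHBlock.main hk (by simp) f0.toFinset fn.toFinset
    ⟨by simpa using hB0, by simpa using hBn, by simpa using hblock⟩
    (by rw [← Set.ncard_eq_toFinset_card B0 f0, ← Set.ncard_eq_toFinset_card Bn fn, hsize, mul_comm])
  intro H hH p hp
  exact h H (by simpa using hH) p (by simpa using hp)
end

section
/- Let q be a prime power, k ≥ 1, and n = 2k+1. Let B = B_0 ∪ B_{n-1} be a blocking set with respect to k-spaces in PG(2k+1,q) consisting of points and hyperplanes with |B| = (q+1)·q^k, and let ρ be a (k-1)-space containing no point of B_0. If there exists a k-space through ρ that contains exactly one point of B_0 and is contained in no hyperplane of B_{n-1}, then every k-space containing ρ contains at most one point of B_0. -/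
set_option linter.unusedSectionVars false

section helpers
open Module
variable {F V : Type} [Field F] [Fintype F] [AddCommGroup V] [Module F V] [Fintype V]

open Classical in
noncomputable def fsOf (W : Submodule F V) : Finset V := Finset.univ.filter (· ∈ W)

theorem mem_fsOf (W : Submodule F V) (v : V) : v ∈ fsOf W ↔ v ∈ W := by
  simp [fsOf]

theorem card_fsOf (W : Submodule F V) : (fsOf W).card = Fintype.card F ^ finrank F W := by
  classical
  rw [← Module.card_eq_pow_finrank (K := F) (V := W), fsOf, Fintype.card_subtype]

theorem finrank_sup_point (ρ p : Submodule F V) (hp : finrank F p = 1) (h : ¬ p ≤ ρ) :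
    finrank F ↥(p ⊔ ρ) = finrank F ρ + 1 := by
  have : FiniteDimensional F V := Module.Finite.of_finite
  have h1 := Submodule.finrank_sup_add_finrank_inf_eq p ρ
  have h2 : finrank F ↥(p ⊓ ρ) < finrank F p := by
    apply Submodule.finrank_lt_finrank_of_lt
    exact lt_of_le_of_ne inf_le_left (fun h' => h (inf_eq_left.1 h'))
  omega

theorem card_cover (k : ℕ) (hV : finrank F V = 2 * k + 2)
    (A : Finset (Submodule F V)) (hA : ∀ H ∈ A, finrank F H = 2 * k + 1) [DecidableEq V] :
    (A.biUnion fsOf).card + A.card * (Fintype.card F) ^ (2 * k) ≤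
      (Fintype.card F) ^ (2 * k) + A.card * (Fintype.card F) ^ (2 * k + 1) := by
  classical
  have : FiniteDimensional F V := Module.Finite.of_finite
  induction A using Finset.induction_on with
  | empty => simp
  | insert H A hHA ih =>
    have ih' := ih (fun H hH => hA H (Finset.mem_insert_of_mem hH))
    have hH := hA H (Finset.mem_insert_self _ _)
    rw [Finset.biUnion_insert, Finset.card_insert_of_notMem hHA]
    rcases A.eq_empty_or_nonempty with rfl | ⟨G, hG⟩
    · simp [card_fsOf, hH]; omega
    · have h1 := Finset.card_union_add_card_inter (fsOf H) (A.biUnion fsOf)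
      have h2 : fsOf (H ⊓ G) ⊆ fsOf H ∩ A.biUnion fsOf := by
        intro v hv
        rw [mem_fsOf] at hv
        simp only [Finset.mem_inter, Finset.mem_biUnion, mem_fsOf]
        exact ⟨hv.1, G, hG, hv.2⟩
      have h3 := Finset.card_le_card h2
      have h4 : 2 * k ≤ finrank F ↥(H ⊓ G) := by
        have h5 := Submodule.finrank_sup_add_finrank_inf_eq H G
        have h6 := Submodule.finrank_le (H ⊔ G)
        have h7 := hA G (Finset.mem_insert_of_mem hG)
        omega
      have h8 : (Fintype.card F) ^ (2 * k) ≤ (Fintype.card F) ^ (finrank F ↥(H ⊓ G)) :=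
        Nat.pow_le_pow_right Fintype.card_pos h4
      rw [card_fsOf] at h3
      rw [card_fsOf, hH] at h1
      rw [add_mul, add_mul]
      omega

theorem key (k : ℕ) (hV : finrank F V = 2 * k + 2)
    (B0 Bn S : Finset (Submodule F V))
    (hB0 : ∀ p ∈ B0, finrank F p = 1)
    (hBn : ∀ H ∈ Bn, finrank F H = 2 * k + 1)
    (hblock : ∀ W : Submodule F V, finrank F W = k + 1 →
      (∃ p ∈ B0, p ≤ W) ∨ (∃ H ∈ Bn, W ≤ H))
    (ρ : Submodule F V) (hρ : finrank F ρ = k)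
    (hρB0 : ∀ p ∈ B0, ¬ p ≤ ρ) (hSB : S ⊆ B0)
    (hS : ∀ p ∈ B0, ∃ p' ∈ S, p' ⊔ ρ = p ⊔ ρ) [DecidablePred fun H : Submodule F V => ρ ≤ H] :
    (Fintype.card F + 1) * (Fintype.card F) ^ k ≤
      S.card + (Bn.filter (fun H => ρ ≤ H)).card * (Fintype.card F) ^ k := by
  classical
  have : FiniteDimensional F V := Module.Finite.of_finite
  set A := Bn.filter (fun H => ρ ≤ H) with hAdef
  have hA : ∀ H ∈ A, finrank F H = 2 * k + 1 := fun H hH => hBn H (Finset.mem_filter.1 hH).1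
  have hq : 1 < Fintype.card F := Fintype.one_lt_card
  set q := Fintype.card F with hqdef
  have hc := card_cover k hV A hA
  have hc' : (A.biUnion fsOf ∪ fsOf ρ).card + A.card * q ^ (2 * k) ≤
      q ^ (2 * k) + A.card * q ^ (2 * k + 1) := by
    rcases A.eq_empty_or_nonempty with h | ⟨G, hG⟩
    · rw [h]
      simp only [Finset.biUnion_empty, Finset.empty_union, card_fsOf, hρ, Finset.card_empty, ← hqdef]
      have : q ^ k ≤ q ^ (2 * k) := Nat.pow_le_pow_right (by omega) (by omega)
      omega
    · have : fsOf ρ ⊆ A.biUnion fsOf := by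
        intro v hv
        simp only [Finset.mem_biUnion, mem_fsOf] at hv ⊢
        exact ⟨G, hG, (Finset.mem_filter.1 hG).2 hv⟩
      rw [Finset.union_eq_left.2 this]
      exact hc
  have hcov : (Finset.univ : Finset V) ⊆
      (A.biUnion fsOf ∪ fsOf ρ) ∪ S.biUnion (fun p => fsOf (p ⊔ ρ) \ fsOf ρ) := by
    intro v _
    by_cases hv : v ∈ A.biUnion fsOf ∪ fsOf ρ
    · exact Finset.mem_union_left _ hv
    · apply Finset.mem_union_right
      simp only [Finset.mem_union, Finset.mem_biUnion, mem_fsOf, not_or, not_exists,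
        not_and] at hv
      obtain ⟨hv1, hv2⟩ := hv
      have hv0 : v ≠ 0 := fun h => hv2 (h ▸ ρ.zero_mem)
      have hr := finrank_sup_point ρ (Submodule.span F {v}) (finrank_span_singleton hv0)
        (by simpa using hv2)
      have hvm : v ∈ Submodule.span F {v} ⊔ ρ :=
        Submodule.mem_sup_left (Submodule.mem_span_singleton_self v)
      rcases hblock _ (by rw [hr, hρ]) with ⟨p, hp, hpW⟩ | ⟨H, hH, hWH⟩
      · obtain ⟨p', hp', he⟩ := hS p hp
        have h9 : p ⊔ ρ = Submodule.span F {v} ⊔ ρ := by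
          apply Submodule.eq_of_le_of_finrank_eq (sup_le hpW le_sup_right)
          rw [hr, finrank_sup_point ρ p (hB0 p hp) (hρB0 p hp)]
        simp only [Finset.mem_biUnion, Finset.mem_sdiff, mem_fsOf]
        exact ⟨p', hp', by rw [he, h9]; exact hvm, hv2⟩
      · exact absurd (hWH hvm) (hv1 H (Finset.mem_filter.2 ⟨hH, le_sup_right.trans hWH⟩))
  have h1 := (Finset.card_le_card hcov).trans (Finset.card_union_le _ _)
  have h2 : (S.biUnion (fun p => fsOf (p ⊔ ρ) \ fsOf ρ)).card ≤
      S.card * (q ^ (k + 1) - q ^ k) := by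
    apply Finset.card_biUnion_le_card_mul
    intro p hp
    rw [Finset.card_sdiff_of_subset, card_fsOf, card_fsOf,
      finrank_sup_point ρ p (hB0 p (hSB hp)) (hρB0 p (hSB hp)), hρ]
    intro v hv
    rw [mem_fsOf] at hv ⊢
    exact Submodule.mem_sup_right hv
  rw [Finset.card_univ, Module.card_eq_pow_finrank (K := F), hV] at h1
  rw [← hqdef] at h1
  obtain ⟨r, hr⟩ : ∃ r, q = r + 1 := ⟨q - 1, by omega⟩
  have hr0 : 0 < r := by omega
  have e1 : q ^ (k + 1) - q ^ k = r * q ^ k := by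
    rw [pow_succ, hr, mul_add, mul_one, Nat.add_sub_cancel, mul_comm]
  rw [e1] at h2
  set m := A.card
  have e2 : q ^ (2 * k) = q ^ k * q ^ k := by rw [two_mul, pow_add]
  have e3 : q ^ (2 * k + 1) = (r + 1) * (q ^ k * q ^ k) := by rw [pow_succ, e2, ← hr, mul_comm]
  have e4 : q ^ (2 * k + 2) = (r + 1) * (r + 1) * (q ^ k * q ^ k) := by
    rw [pow_add, e2, ← hr]; ring
  rw [e2, e3] at hc'
  rw [e4] at h1
  have hx : 0 < q ^ k := by positivity
  set x := q ^ k
  rw [hr]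
  have : (r * x) * ((r + 1 + 1) * x) ≤ (r * x) * (S.card + m * x) := by nlinarith
  exact Nat.le_of_mul_le_mul_left this (by positivity)

end helpers


/-- Let `B = B0 ∪ Bn` be a blocking set of points and hyperplanes
with respect to `k`-spaces in `PG(2k+1,q)` with `|B| = (q+1)·q^k`, and let `ρ` be a
`(k-1)`-space containing no point of `B0`.  If some `k`-space through `ρ` contains
exactly one point of `B0` and lies in no hyperplane of `Bn`, then every `k`-space
through `ρ` contains at most one point of `B0`. -/
theorem stmt_10 {F : Type} [Field F] [Fintype F] (k : ℕ) (hk : 1 ≤ k)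
    (B0 Bn : Set (Submodule F (Fin (2 * k + 2) → F)))
    (hB0 : ∀ p ∈ B0, Module.finrank F p = 1)
    (hBn : ∀ H ∈ Bn, Module.finrank F H = 2 * k + 1)
    (hblock : ∀ W : Submodule F (Fin (2 * k + 2) → F), Module.finrank F W = k + 1 →
      (∃ p ∈ B0, p ≤ W) ∨ (∃ H ∈ Bn, W ≤ H))
    (hsize : B0.ncard + Bn.ncard = (Fintype.card F + 1) * (Fintype.card F) ^ k)
    (ρ : Submodule F (Fin (2 * k + 2) → F)) (hρ : Module.finrank F ρ = k)
    (hρB0 : ∀ p ∈ B0, ¬ p ≤ ρ)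
    (hex : ∃ W0 : Submodule F (Fin (2 * k + 2) → F), Module.finrank F W0 = k + 1 ∧ ρ ≤ W0 ∧
      {p ∈ B0 | p ≤ W0}.ncard = 1 ∧ ∀ H ∈ Bn, ¬ W0 ≤ H) :
    ∀ W : Submodule F (Fin (2 * k + 2) → F), Module.finrank F W = k + 1 → ρ ≤ W →
      {p ∈ B0 | p ≤ W}.ncard ≤ 1 := by
  classical
  have : Finite (Submodule F (Fin (2 * k + 2) → F)) :=
    Finite.of_injective (fun W => (W : Set (Fin (2 * k + 2) → F))) SetLike.coe_injective
  have hV : Module.finrank F (Fin (2 * k + 2) → F) = 2 * k + 2 := by simp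
  obtain ⟨W0, hW0, hρW0, hone, hW0n⟩ := hex
  obtain ⟨p0, hp0⟩ := Set.ncard_eq_one.1 hone
  have hp0' : p0 ∈ B0 ∧ p0 ≤ W0 := by
    have : p0 ∈ {p ∈ B0 | p ≤ W0} := by rw [hp0]; rfl
    exact this
  have hp0u : ∀ p ∈ B0, p ≤ W0 → p = p0 := by
    intro p hp hpW
    have : p ∈ {p ∈ B0 | p ≤ W0} := ⟨hp, hpW⟩
    rw [hp0] at this
    exact this
  have hp0r := hB0 p0 hp0'.1
  obtain ⟨e, hep, he0⟩ := Submodule.exists_mem_ne_zero_of_ne_bot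
    (show p0 ≠ ⊥ by rintro rfl; simp at hp0r)
  have hp0e : Submodule.span F {e} = p0 := by
    apply Submodule.eq_of_le_of_finrank_eq
    · simpa using hep
    · rw [finrank_span_singleton he0, hp0r]
  have heρ : e ∉ ρ := by
    intro h
    apply hρB0 p0 hp0'.1
    rw [← hp0e]
    simpa using h
  have hsup : p0 ⊔ ρ = W0 := by
    apply Submodule.eq_of_le_of_finrank_eq (sup_le hp0'.2 hρW0)
    rw [finrank_sup_point ρ p0 hp0r (hρB0 p0 hp0'.1), hρ, hW0]
  -- finset versions
  have hf0 := Set.toFinite B0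
  have hfn := Set.toFinite Bn
  set C0 := hf0.toFinset with hC0
  set Cn := hfn.toFinset with hCn
  have hm0 : ∀ p, p ∈ C0 ↔ p ∈ B0 := fun p => by simp [hC0]
  have hmn : ∀ p, p ∈ Cn ↔ p ∈ Bn := fun p => by simp [hCn]
  rw [Set.ncard_eq_toFinset_card B0 hf0, Set.ncard_eq_toFinset_card Bn hfn] at hsize
  -- the complements of `p0` in `W0`
  let g : Module.Dual F ρ → (ρ →ₗ[F] (Fin (2 * k + 2) → F)) :=
    fun φ => ρ.subtype + φ.smulRight e
  have hg : ∀ φ x, g φ x = (x : Fin (2 * k + 2) → F) + φ x • e := fun φ x => rfl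
  let R : Module.Dual F ρ → Submodule F (Fin (2 * k + 2) → F) := fun φ => LinearMap.range (g φ)
  have hsmul : ∀ c : F, c • e ∈ ρ → c = 0 := by
    intro c hc
    by_contra h
    exact heρ ((Submodule.smul_mem_iff ρ h).1 hc)
  have hginj : ∀ φ, Function.Injective (g φ) := by
    intro φ
    rw [injective_iff_map_eq_zero]
    intro x hx
    rw [hg] at hx
    have h1 : φ x • e ∈ ρ := by
      rw [show φ x • e = -(x : Fin (2 * k + 2) → F) from (neg_eq_of_add_eq_zero_right hx).symm]
      exact ρ.neg_mem x.2
    rw [hsmul _ h1, zero_smul, add_zero] at hx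
    exact Subtype.ext hx
  have hRrank : ∀ φ, Module.finrank F (R φ) = k := fun φ =>
    (LinearMap.finrank_range_of_inj (hginj φ)).trans hρ
  have hRW : ∀ φ, R φ ≤ W0 := by
    rintro φ _ ⟨x, rfl⟩
    rw [hg]
    exact W0.add_mem (hρW0 x.2) (W0.smul_mem _ (hp0'.2 hep))
  have hRB0 : ∀ φ, ∀ p ∈ C0, ¬ p ≤ R φ := by
    intro φ p hp hle
    have := hp0u p ((hm0 p).1 hp) (hle.trans (hRW φ))
    subst this
    obtain ⟨x, hx⟩ := hle hep
    rw [hg] at hx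
    have h1 : (1 - φ x) • e = (x : Fin (2 * k + 2) → F) := by
      rw [sub_smul, one_smul, sub_eq_iff_eq_add]; exact hx.symm
    have h2 := hsmul _ (h1 ▸ x.2)
    rw [h2, zero_smul] at h1
    have h3 : x = 0 := Subtype.ext h1.symm
    rw [h3] at h2
    simp at h2
  have hR0 : R 0 = ρ := by
    have : g 0 = ρ.subtype := by
      ext x : 1
      simp [hg]
    show LinearMap.range (g 0) = ρ
    rw [this, Submodule.range_subtype]
  have hRuniq : ∀ φ ψ, ∀ H ∈ Bn, R φ ≤ H → R ψ ≤ H → φ = ψ := by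
    intro φ ψ H hH h1 h2
    by_contra hne
    obtain ⟨x, hx⟩ : ∃ x, φ x ≠ ψ x := by
      by_contra hcon
      push Not at hcon
      exact hne (LinearMap.ext hcon)
    have h3 : (φ x - ψ x) • e ∈ H := by
      have := H.sub_mem (h1 ⟨x, rfl⟩) (h2 ⟨x, rfl⟩)
      rw [hg, hg] at this
      rw [sub_smul]
      simpa using this
    have heH : e ∈ H := (Submodule.smul_mem_iff H (sub_ne_zero.2 hx)).1 h3
    apply hW0n H hH
    rw [← hsup, ← hp0e]
    refine sup_le (by simpa using heH) ?_
    intro y hy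
    have h4 := h1 ⟨⟨y, hy⟩, rfl⟩
    rw [hg] at h4
    exact (Submodule.add_mem_iff_left H (H.smul_mem _ heH)).1 h4
  have : Finite (Module.Dual F ρ) := Module.finite_of_finite F
  let _ : Fintype (Module.Dual F ρ) := Fintype.ofFinite _
  have hcardD : Fintype.card (Module.Dual F ρ) = Fintype.card F ^ k := by
    rw [Module.card_eq_pow_finrank (K := F), Subspace.dual_finrank_eq, hρ]
  have hsum : ∑ φ : Module.Dual F ρ, (Cn.filter (fun H => R φ ≤ H)).card ≤ Cn.card := by
    rw [← Finset.card_biUnion]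
    · apply Finset.card_le_card
      intro H hH
      simp only [Finset.mem_biUnion, Finset.mem_filter] at hH
      obtain ⟨_, _, h, _⟩ := hH
      exact h
    · intro φ _ ψ _ hne
      rw [Function.onFun, Finset.disjoint_left]
      intro H h1 h2
      rw [Finset.mem_filter] at h1 h2
      exact hne (hRuniq φ ψ H ((hmn H).1 h1.1) h1.2 h2.2)
  have hblock' : ∀ W : Submodule F (Fin (2 * k + 2) → F), Module.finrank F W = k + 1 →
      (∃ p ∈ C0, p ≤ W) ∨ (∃ H ∈ Cn, W ≤ H) := by
    intro W hW
    simpa only [hm0, hmn] using hblock W hW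
  have hkey : ∀ (φ : Module.Dual F ρ) (S : Finset (Submodule F (Fin (2 * k + 2) → F))), S ⊆ C0 →
      (∀ p ∈ C0, ∃ p' ∈ S, p' ⊔ R φ = p ⊔ R φ) →
      (Fintype.card F + 1) * (Fintype.card F) ^ k ≤
      S.card + (Cn.filter (fun H => R φ ≤ H)).card * (Fintype.card F) ^ k :=
    fun φ S hS1 hS2 => key k hV C0 Cn S (fun p hp => hB0 p ((hm0 p).1 hp))
      (fun p hp => hBn p ((hmn p).1 hp)) hblock' (R φ) (hRrank φ) (hRB0 φ) hS1 hS2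
  intro W hW hρW
  by_contra hcon
  push Not at hcon
  obtain ⟨p1, p2, ⟨h1, h1W⟩, ⟨h2, h2W⟩, hne⟩ := (Set.one_lt_ncard_iff (Set.toFinite _)).1 hcon
  have hall : ∀ p ∈ B0, p ≤ W → p ⊔ ρ = W := by
    intro p hp hpW
    apply Submodule.eq_of_le_of_finrank_eq (sup_le hpW hρW)
    rw [finrank_sup_point ρ p (hB0 p hp) (hρB0 p hp), hρ, hW]
  have hstrict := hkey 0 (C0.erase p2) (Finset.erase_subset _ _) (by
    intro p hp
    rw [hR0]
    by_cases h : p = p2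
    · subst h
      exact ⟨p1, Finset.mem_erase.2 ⟨hne, (hm0 _).2 h1⟩, by
        rw [hall p1 h1 h1W, hall p h2 h2W]⟩
    · exact ⟨p, Finset.mem_erase.2 ⟨h, hp⟩, rfl⟩)
  have herase := Finset.card_erase_add_one ((hm0 p2).2 h2)
  have hlt : ∑ φ : Module.Dual F ρ, (Fintype.card F + 1) * (Fintype.card F) ^ k <
      ∑ φ : Module.Dual F ρ,
        (C0.card + (Cn.filter (fun H => R φ ≤ H)).card * (Fintype.card F) ^ k) := by
    apply Finset.sum_lt_sum
    · intro φ _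
      exact hkey φ C0 (Finset.Subset.refl _) (fun p hp => ⟨p, hp, rfl⟩)
    · exact ⟨0, Finset.mem_univ _, by omega⟩
  rw [Finset.sum_add_distrib, Finset.sum_const, Finset.sum_const, ← Finset.sum_mul,
    Finset.card_univ, hcardD, smul_eq_mul, smul_eq_mul, ← hsize] at hlt
  change _ * (C0.card + Cn.card) < _ at hlt
  have := Nat.mul_le_mul_right (Fintype.card F ^ k) hsum
  rw [mul_add] at hlt
  have hc := mul_comm Cn.card (Fintype.card F ^ k)
  omega
end

section
/- Let q be a prime power, k ≥ 1, and n = 2k+1. Let B = B_0 ∪ B_{n-1} be a blocking set with respect to k-spaces in PG(2k+1,q) consisting of points and hyperplanes with |B| = (q+1)·q^k. Then q^k divides |B_0|. -/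
section Helpers
open Finset

structure PGS {L : Type} [Lattice L] (r : L → ℤ) (q : ℕ) : Prop where
  md : ∀ x y, r (x ⊔ y) + r (x ⊓ y) = r x + r y
  mono : ∀ x y, x < y → r x < r y
  up : ∀ x y, x < y → ∃ z, x ≤ z ∧ z ≤ y ∧ r z = r x + 1
  dn : ∀ x y, x < y → ∃ z, x ≤ z ∧ z ≤ y ∧ r z = r y - 1
  line : ∀ x y, x ≤ y → r y = r x + 2 →
    Set.ncard {z | x ≤ z ∧ z ≤ y ∧ r z = r x + 1} = q + 1

theorem PGS.dual {L : Type} [Lattice L] {r : L → ℤ} {q : ℕ} (h : PGS r q) :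
    PGS (L := Lᵒᵈ) (fun x => - r (OrderDual.ofDual x)) q where
  md x y := by
    have := h.md (OrderDual.ofDual x) (OrderDual.ofDual y)
    simp only [_root_.ofDual_sup, _root_.ofDual_inf]
    linarith
  mono x y hxy := by
    have := h.mono (OrderDual.ofDual y) (OrderDual.ofDual x) hxy
    linarith
  up x y hxy := by
    obtain ⟨z, h1, h2, h3⟩ := h.dn (OrderDual.ofDual y) (OrderDual.ofDual x) hxy
    exact ⟨OrderDual.toDual z, h2, h1, by simp only [OrderDual.ofDual_toDual]; linarith⟩
  dn x y hxy := by
    obtain ⟨z, h1, h2, h3⟩ := h.up (OrderDual.ofDual y) (OrderDual.ofDual x) hxy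
    exact ⟨OrderDual.toDual z, h2, h1, by simp only [OrderDual.ofDual_toDual]; linarith⟩
  line x y hxy hr := by
    have hr' : r (OrderDual.ofDual x) = r (OrderDual.ofDual y) + 2 := by linarith
    rw [← h.line (OrderDual.ofDual y) (OrderDual.ofDual x) hxy hr']
    congr 1
    ext z
    constructor
    · rintro ⟨h1, h2, h3⟩
      have h3' : - r (OrderDual.ofDual z) = - r (OrderDual.ofDual x) + 1 := h3
      have : r (OrderDual.ofDual z) = r (OrderDual.ofDual y) + 1 := by linarith
      exact ⟨h2, h1, this⟩
    · rintro ⟨h1, h2, h3⟩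
      have h3' : r (OrderDual.ofDual z) = r (OrderDual.ofDual y) + 1 := h3
      have : - r (OrderDual.ofDual z) = - r (OrderDual.ofDual x) + 1 := by linarith
      exact ⟨h2, h1, this⟩

def NN (q : ℕ) : ℕ → ℕ
  | 0 => 0
  | n + 1 => q * NN q n + 1

section
variable {L : Type} [Lattice L] {r : L → ℤ} {q : ℕ}

theorem PGS.eq_of (h : PGS r q) {x y : L} (hxy : x ≤ y) (hr : r y ≤ r x) : x = y := by
  rcases hxy.lt_or_eq with h1 | h1
  · have := h.mono x y h1; omega
  · exact h1

theorem PGS.le (h : PGS r q) {x y : L} (hxy : x ≤ y) : r x ≤ r y := by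
  rcases hxy.lt_or_eq with h1 | h1
  · exact (h.mono x y h1).le
  · rw [h1]

/-- two distinct points span a line -/
theorem PGS.sup_pts (h : PGS r q) {A x y : L} (hx : A ≤ x) (hy : A ≤ y) (rx : r x = r A + 1)
    (ry : r y = r A + 1) (hne : x ≠ y) : r (x ⊔ y) = r A + 2 ∧ x ⊓ y = A := by
  have h1 : A ≤ x ⊓ y := le_inf hx hy
  have h2 : r (x ⊓ y) ≤ r A := by
    by_contra hc
    have e1 : x ⊓ y = x := h.eq_of inf_le_left (by omega)
    have e2 : x ⊓ y = y := h.eq_of inf_le_right (by omega)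
    exact hne (e1.symm.trans e2)
  have h3 := h.eq_of h1 h2
  have := h.md x y
  rw [← h3] at this
  exact ⟨by linarith, h3.symm⟩

theorem PGS.inf_hyp (h : PGS r q) {C x y : L} (hx : x ≤ C) (hy : y ≤ C) (rx : r x = r C - 1)
    (ry : r y = r C - 1) (hne : x ≠ y) : r (x ⊓ y) = r C - 2 ∧ x ⊔ y = C := by
  have := h.dual.sup_pts (A := OrderDual.toDual C) (x := OrderDual.toDual x)
    (y := OrderDual.toDual y) hx hy (by simp; linarith) (by simp; linarith) (by simpa using hne)
  refine ⟨?_, this.2⟩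
  have h2 := this.1
  simp at h2
  linarith

open Classical in
theorem PGS.card_line [Fintype L] (h : PGS r q) {x y : L} (hxy : x ≤ y) (hr : r y = r x + 2) :
    #{z : L | x ≤ z ∧ z ≤ y ∧ r z = r x + 1} = q + 1 := by
  rw [← h.line x y hxy hr, ← Set.ncard_coe_finset]
  simp

open Classical in
theorem PGS.card_pts [Fintype L] (h : PGS r q) (C : L) (n : ℕ) : ∀ A : L, A ≤ C → r C = r A + n →
    #{z : L | A ≤ z ∧ z ≤ C ∧ r z = r A + 1} = NN q n := by
  induction n with
  | zero =>
    intro A hA hr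
    simp only [NN, card_eq_zero, filter_eq_empty_iff]
    rintro x - ⟨h1, h2, h3⟩
    have := h.le h2
    simp at hr; omega
  | succ n ih =>
    intro A hA hr
    have hlt : A < C := lt_of_le_of_ne hA (by rintro rfl; push_cast at hr; omega)
    obtain ⟨P, hP1, hP2, hP3⟩ := h.up A C hlt
    have hmem : P ∈ ({z : L | A ≤ z ∧ z ≤ C ∧ r z = r A + 1} : Finset L) := by
      simp [hP1, hP2, hP3]
    rw [← card_erase_add_one hmem]
    simp only [NN]
    congr 1
    rw [card_eq_sum_card_fiberwise (f := fun x => x ⊔ P)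
      (t := ({z : L | P ≤ z ∧ z ≤ C ∧ r z = r P + 1} : Finset L))]
    · rw [← ih P hP2 (by push_cast at hr; omega), mul_comm, ← smul_eq_mul]
      apply sum_const_nat
      intro l hl
      simp only [mem_filter, mem_univ, true_and] at hl
      obtain ⟨l1, l2, l3⟩ := hl
      have hc := h.card_line (x := A) (y := l) (hP1.trans l1) (by omega)
      have hmem2 : P ∈ ({z : L | A ≤ z ∧ z ≤ l ∧ r z = r A + 1} : Finset L) := by
        simp [hP1, l1, hP3]
      have : #(({z : L | A ≤ z ∧ z ≤ l ∧ r z = r A + 1} : Finset L).erase P) = q := by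
        rw [card_erase_of_mem hmem2, hc]; simp
      rw [← this]
      congr 1
      ext x
      simp only [mem_filter, mem_erase, mem_univ, true_and]
      constructor
      · rintro ⟨⟨h1, h2, h3, h4⟩, rfl⟩
        exact ⟨h1, h2, le_sup_left, h4⟩
      · rintro ⟨h1, h2, h3, h4⟩
        refine ⟨⟨h1, h2, h3.trans l2, h4⟩, ?_⟩
        apply h.eq_of (sup_le h3 l1)
        have := (h.sup_pts h2 hP1 h4 hP3 h1).1
        omega
    · intro x hx
      simp only [coe_erase, coe_filter, mem_univ, true_and, Set.mem_sdiff, Set.mem_ofPred_eq,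
        Set.mem_singleton_iff] at hx ⊢
      obtain ⟨⟨h1, h2, h3⟩, h4⟩ := hx
      refine ⟨le_sup_right, sup_le h2 hP2, ?_⟩
      have := (h.sup_pts h1 hP1 h3 hP3 h4).1
      omega

open Classical in
theorem PGS.card_hyp [Fintype L] (h : PGS r q) (A C : L) (n : ℕ) (hA : A ≤ C) (hr : r C = r A + n) :
    #{z : L | A ≤ z ∧ z ≤ C ∧ r z = r C - 1} = NN q n := by
  rw [← h.dual.card_pts (OrderDual.toDual A) n (OrderDual.toDual C) hA (by simp; linarith)]
  apply card_bij (fun x _ => OrderDual.toDual x)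
  · intro x hx
    simp only [mem_filter, mem_univ, true_and] at hx ⊢
    exact ⟨hx.2.1, hx.1, by simp; linarith⟩
  · intro x _ y _ hxy; simpa using hxy
  · intro x hx
    simp only [mem_filter, mem_univ, true_and] at hx
    refine ⟨OrderDual.ofDual x, ?_, by simp⟩
    simp only [mem_filter, mem_univ, true_and]
    refine ⟨hx.2.1, hx.1, ?_⟩
    have := hx.2.2
    simp at this; linarith
end

theorem NN_ge (q : ℕ) (m : ℕ) : (q + 1) * q ^ m ≤ NN q (m + 2) := by
  induction m with
  | zero => simp [NN]
  | succ m ih =>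
    have : NN q (m + 1 + 2) = q * NN q (m + 2) + 1 := rfl
    rw [this, pow_succ]
    nlinarith

theorem NN_bound (q : ℕ) (hq : 2 ≤ q) (k : ℕ) :
    (q + 1) * q ^ k * ((q + 1) * q ^ k) + (q + 1) * q ^ k ≤ 2 * (q * NN q (2 * k + 2)) := by
  have h1 := NN_ge q
  have h2 := h1 (2 * k)
  have h3 : q ^ (2 * k) = q ^ k * q ^ k := by rw [two_mul, pow_add]
  have h4 : 1 ≤ q ^ k := Nat.one_le_pow _ _ (by omega)
  rw [h3] at h2
  generalize q ^ k = R at *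
  have h5 : q * ((q + 1) * (R * R)) ≤ q * NN q (2 * k + 2) := Nat.mul_le_mul_left _ h2
  have h6 : (q + 1) * R + 1 ≤ 2 * q * R := by nlinarith
  have h7 : ((q + 1) * R + 1) * ((q + 1) * R) ≤ (2 * q * R) * ((q + 1) * R) :=
    Nat.mul_le_mul_right _ h6
  nlinarith

/-- The numerical contradiction. -/
theorem numeric (q a b y T th : ℤ) (hq : 2 ≤ q) (ha : 0 ≤ a) (hb : 0 ≤ b) (hy : 0 ≤ y) (hT : 1 ≤ T)
    (hth : T * T + T ≤ 2 * (q * th)) (hab : a + b ≤ q * T) (hTth : T ≤ th)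
    (h1 : y * ((q * (q * th + 1) + 1) - b) ≤ a * (q * th + 1))
    (h2 : y ≤ T + 1 → ((q * th + 1) - y) * (T + 1 - y) ≤ b * th) : False := by
  obtain ⟨t, ht⟩ : ∃ t, t = q * th + 1 := ⟨_, rfl⟩
  rw [← ht] at h1 h2
  have ht0 : T + 1 ≤ t := by nlinarith
  have hth0 : 1 ≤ th := by linarith
  by_cases hyT : y ≤ T + 1
  · have h2 := h2 hyT
    obtain ⟨u, hu⟩ : ∃ u, u = T + 1 - y := ⟨_, rfl⟩
    have hu0 : 0 ≤ u := by linarith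
    rw [← hu] at h2
    -- q th + u - 2 u y ≥ 0
    have h3 : 0 ≤ q * th + u - 2 * (u * y) := by
      have : 8 * (u * (2 * y - 1)) ≤ 8 * (q * th) + 1 := by
        have e : 2 * T + 1 = 2 * u + (2 * y - 1) := by linarith
        nlinarith [sq_nonneg (2 * u - (2 * y - 1))]
      have : u * (2 * y - 1) ≤ q * th := by omega
      linarith
    have hty : 0 ≤ t - y := by linarith
    -- (a+b) t th ≥ ...
    have A1 : y * (q * t + 1 - b) * th ≤ a * t * th := mul_le_mul_of_nonneg_right h1 (by linarith)
    have A2 : (t - y) * ((t - y) * u) ≤ (t - y) * (b * th) := mul_le_mul_of_nonneg_left h2 hty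
    have A3 : (a + b) * (t * th) ≤ q * T * (t * th) :=
      mul_le_mul_of_nonneg_right hab (by nlinarith)
    have A4 : 0 ≤ t * (q * th + u - 2 * (u * y)) := mul_nonneg (by linarith) h3
    have hTe : T = u + y - 1 := by linarith
    have A5 : y * th + u * y ^ 2 ≤ 0 := by
      subst hTe
      have e1 : q * th = t - 1 := by linarith
      have E : (a + b) * (t * th) = a * t * th + (t - y) * (b * th) + y * b * th := by ring
      have E2 : q * (u + y - 1) * (t * th) = (t - 1) * t * (u + y - 1) := by
        rw [← e1]; ring
      have E3 : y * (q * t + 1 - b) * th = y * t * (t - 1) + y * th - y * b * th := by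
        rw [← e1]; ring
      rw [e1] at A4
      rw [E, E2] at A3
      rw [E3] at A1
      nlinarith
    have A6 : 0 ≤ u * y ^ 2 := by positivity
    have A7 : y = 0 := by nlinarith
    subst A7
    have : u = T + 1 := by linarith
    subst this
    have : a + b ≤ q * T := hab
    have h4 : t * (T + 1) ≤ b * th := by linarith
    have h5 : b * th ≤ q * T * th := mul_le_mul_of_nonneg_right (by linarith) (by linarith)
    nlinarith
  · push Not at hyT
    have hbt : 0 ≤ q * t + 1 - b := by nlinarith
    have : (T + 1) * (q * t + 1 - b) ≤ y * (q * t + 1 - b) := mul_le_mul_of_nonneg_right hyT.le hbt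
    have : b * (T + 1) ≤ b * t := mul_le_mul_of_nonneg_left ht0 hb
    have : (a + b) * t ≤ q * T * t := mul_le_mul_of_nonneg_right hab (by linarith)
    nlinarith

section
variable {L : Type} [Lattice L] {q : ℕ}

def Blk (r : L → ℤ) (k : ℕ) (A C : L) (B0 Bn : Finset L) : Prop :=
  A ≤ C ∧ r C = r A + 2 * k + 2 ∧ (∀ p ∈ B0, A ≤ p ∧ p ≤ C ∧ r p = r A + 1) ∧
  (∀ h ∈ Bn, A ≤ h ∧ h ≤ C ∧ r h = r C - 1) ∧
  ∀ W, A ≤ W → W ≤ C → r W = r A + k + 1 → (∃ p ∈ B0, p ≤ W) ∨ ∃ h ∈ Bn, W ≤ h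

open Classical in
def Rcon (r : L → ℤ) (q : ℕ) (A C : L) (B0 Bn : Finset L) : Prop :=
  ∃ G, A ≤ G ∧ G ≤ C ∧ r G = r C - 1 ∧
    ((G ∉ Bn ∧ q * #{p ∈ B0 | p ≤ G} ≤ #B0) ∨ (G ∈ Bn ∧ #{p ∈ B0 | p ≤ G} = 0))
end

def Thm (q k : ℕ) : Prop := ∀ (L : Type) [Lattice L] [Fintype L] (r : L → ℤ) (_ : PGS r q)
  (A C : L) (B0 Bn : Finset L), Blk r k A C B0 Bn → #B0 + #Bn ≤ (q + 1) * q ^ k →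
    #B0 + #Bn = (q + 1) * q ^ k ∧ q ^ k ∣ #B0 ∧ Rcon r q A C B0 Bn

open Classical in
theorem thm_zero (q : ℕ) : Thm q 0 := by
  intro L _ _ r h A C B0 Bn hB hs
  obtain ⟨hAC, hr, h0, hn, hbl⟩ := hB
  simp only [Nat.cast_zero, mul_zero, add_zero] at hr hbl
  have hl := h.card_line hAC hr
  have hsub : ({z : L | A ≤ z ∧ z ≤ C ∧ r z = r A + 1} : Finset L) ⊆ B0 ∪ Bn := by
    intro W hW
    simp only [mem_filter, mem_univ, true_and] at hW
    obtain ⟨h1, h2, h3⟩ := hW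
    rw [mem_union]
    rcases hbl W h1 h2 h3 with ⟨p, hp, hpW⟩ | ⟨p, hp, hpW⟩
    · have := h.eq_of hpW (by have := (h0 p hp).2.2; omega)
      left; rwa [← this]
    · have := h.eq_of hpW (by have := (hn p hp).2.2; omega)
      right; rwa [this]
  have h1 := card_le_card hsub
  have h2 := card_union_add_card_inter B0 Bn
  simp only [pow_zero, mul_one] at hs ⊢
  refine ⟨by omega, one_dvd _, ?_⟩
  have hdis : #(B0 ∩ Bn) = 0 := by omega
  rw [card_eq_zero] at hdis
  by_cases hne : Bn.Nonempty
  · obtain ⟨G, hG⟩ := hne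
    obtain ⟨g1, g2, g3⟩ := hn G hG
    refine ⟨G, g1, g2, g3, Or.inr ⟨hG, ?_⟩⟩
    rw [card_eq_zero, filter_eq_empty_iff]
    intro p hp hpG
    have := h.eq_of hpG (by have := (h0 p hp).2.2; omega)
    subst this
    have : p ∈ B0 ∩ Bn := mem_inter.2 ⟨hp, hG⟩
    rw [hdis] at this
    simp at this
  · rw [not_nonempty_iff_eq_empty] at hne
    have : (({z : L | A ≤ z ∧ z ≤ C ∧ r z = r A + 1} : Finset L)).Nonempty := by
      rw [← card_pos]; omega
    obtain ⟨G, hG⟩ := this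
    simp only [mem_filter, mem_univ, true_and] at hG
    obtain ⟨g1, g2, g3⟩ := hG
    refine ⟨G, g1, g2, by omega, Or.inl ⟨by simp [hne], ?_⟩⟩
    have : #{p ∈ B0 | p ≤ G} ≤ 1 := by
      rw [card_le_one]
      intro x hx y hy
      simp only [mem_filter] at hx hy
      have e1 := h.eq_of hx.2 (by have := (h0 x hx.1).2.2; omega)
      have e2 := h.eq_of hy.2 (by have := (h0 y hy.1).2.2; omega)
      rw [e1, e2]
    have hb : #Bn = 0 := by simp [hne]
    have : q * #{p ∈ B0 | p ≤ G} ≤ q * 1 := Nat.mul_le_mul_left _ this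
    omega

section
variable {L : Type} [Lattice L] {r : L → ℤ} {q : ℕ}

open Classical in
theorem Blk.ind (hp : PGS r q) {k : ℕ} {A C : L} {B0 Bn : Finset L}
    (hB : Blk r (k + 1) A C B0 Bn) {P H : L} (hAP : A ≤ P) (rP : r P = r A + 1) (hHC : H ≤ C)
    (rH : r H = r C - 1) (hPH : P ≤ H) (hP0 : P ∉ B0) (hHn : H ∉ Bn) :
    Blk r k P H (image (fun p => p ⊔ P) {p ∈ B0 | p ≤ H})
      (image (fun h => h ⊓ H) {h ∈ Bn | P ≤ h}) := by
  obtain ⟨hAC, hr, h0, hn, hbl⟩ := hB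
  push_cast at hr hbl
  refine ⟨hPH, by linarith, ?_, ?_, ?_⟩
  · intro x hx
    simp only [mem_image, mem_filter] at hx
    obtain ⟨p, ⟨p1, p2⟩, rfl⟩ := hx
    obtain ⟨a1, a2, a3⟩ := h0 p p1
    refine ⟨le_sup_right, sup_le p2 hPH, ?_⟩
    have := (hp.sup_pts a1 hAP a3 rP (by rintro rfl; exact hP0 p1)).1
    omega
  · intro x hx
    simp only [mem_image, mem_filter] at hx
    obtain ⟨p, ⟨p1, p2⟩, rfl⟩ := hx
    obtain ⟨a1, a2, a3⟩ := hn p p1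
    refine ⟨le_inf p2 hPH, inf_le_right, ?_⟩
    have := (hp.inf_hyp a2 hHC a3 rH (by rintro rfl; exact hHn p1)).1
    omega
  · intro W hW1 hW2 hW3
    rcases hbl W (hAP.trans hW1) (hW2.trans hHC) (by linarith) with ⟨p, p1, p2⟩ | ⟨h, h1, h2⟩
    · left
      exact ⟨p ⊔ P, mem_image.2 ⟨p, mem_filter.2 ⟨p1, p2.trans hW2⟩, rfl⟩, sup_le p2 hW1⟩
    · right
      exact ⟨h ⊓ H, mem_image.2 ⟨h, mem_filter.2 ⟨h1, hW1.trans h2⟩, rfl⟩, le_inf h2 hW2⟩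

open Classical in
theorem inc_bound [Fintype L] (hp : PGS r q) {k : ℕ} (IH : Thm q k) {A C : L} {B0 Bn : Finset L}
    (hB : Blk r (k + 1) A C B0 Bn) {P H : L} (hAP : A ≤ P) (rP : r P = r A + 1) (hHC : H ≤ C)
    (rH : r H = r C - 1) (hPH : P ≤ H) (hP0 : P ∉ B0) (hHn : H ∉ Bn) :
    (q + 1) * q ^ k ≤ #{p ∈ B0 | p ≤ H} + #{h ∈ Bn | P ≤ h} := by
  have hI := hB.ind hp hAP rP hHC rH hPH hP0 hHn
  have c1 := card_image_le (s := {p ∈ B0 | p ≤ H}) (f := fun p => p ⊔ P)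
  have c2 := card_image_le (s := {h ∈ Bn | P ≤ h}) (f := fun h => h ⊓ H)
  by_contra hc
  have := (IH L r hp P H _ _ hI (by omega)).1
  omega

open Classical in
theorem pencil (hp : PGS r q) {C G : L} (B0 S : Finset L)
    (rG : r G = r C - 2)
    (hS : ∀ z ∈ S, G ≤ z ∧ z ≤ C ∧ r z = r C - 1) (c : ℕ)
    (hc : ∀ z ∈ S, c ≤ #{p ∈ B0 | p ≤ z}) :
    (#S : ℤ) * ((c : ℤ) - #{p ∈ B0 | p ≤ G}) + #{p ∈ B0 | p ≤ G} ≤ #B0 := by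
  have h1 : ∑ z ∈ S, #{p ∈ B0 | p ≤ z ∧ ¬ p ≤ G} ≤ #{p ∈ B0 | ¬ p ≤ G} := by
    rw [← card_biUnion]
    · apply card_le_card
      intro p hpp
      simp only [mem_biUnion, mem_filter] at hpp ⊢
      obtain ⟨z, -, h1, h2, h3⟩ := hpp
      exact ⟨h1, h3⟩
    · intro x hx y hy hxy
      rw [Function.onFun, disjoint_left]
      intro p hp1 hp2
      simp only [mem_filter] at hp1 hp2
      apply hp1.2.2
      obtain ⟨x1, x2, x3⟩ := hS x hx
      obtain ⟨y1, y2, y3⟩ := hS y hy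
      have e1 := (hp.inf_hyp x2 y2 x3 y3 hxy).1
      have e2 : G = x ⊓ y := hp.eq_of (le_inf x1 y1) (by omega)
      rw [e2]
      exact le_inf hp1.2.1 hp2.2.1
  have h2 : #{p ∈ B0 | p ≤ G} + #{p ∈ B0 | ¬ p ≤ G} = #B0 :=
    card_filter_add_card_filter_not _
  have h3 : ∀ z ∈ S, (c : ℤ) - #{p ∈ B0 | p ≤ G} ≤ (#{p ∈ B0 | p ≤ z ∧ ¬ p ≤ G} : ℤ) := by
    intro z hz
    have e := hc z hz
    have : #{p ∈ B0 | p ≤ z} ≤ #{p ∈ B0 | p ≤ G} + #{p ∈ B0 | p ≤ z ∧ ¬ p ≤ G} := by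
      refine le_trans (card_le_card ?_) (card_union_le _ _)
      intro p hpp
      simp only [mem_union, mem_filter, mem_sdiff] at hpp ⊢
      tauto
    omega
  have h4 := sum_le_sum h3
  rw [sum_const, nsmul_eq_mul] at h4
  have h5 : (∑ z ∈ S, (#{p ∈ B0 | p ≤ z ∧ ¬ p ≤ G} : ℤ)) ≤ #{p ∈ B0 | ¬ p ≤ G} := by
    exact_mod_cast h1
  have h6 : (#{p ∈ B0 | p ≤ G} : ℤ) + #{p ∈ B0 | ¬ p ≤ G} = #B0 := by exact_mod_cast h2
  linarith

open Classical in
theorem tight_bound [Fintype L] (hp : PGS r q) {k : ℕ} (IH : Thm q k) {A C : L}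
    {B0 Bn : Finset L}
    (hB : Blk r (k + 1) A C B0 Bn) {P H : L} (hAP : A ≤ P) (rP : r P = r A + 1) (hHC : H ≤ C)
    (rH : r H = r C - 1) (hPH : P ≤ H) (hP0 : P ∉ B0) (hHn : H ∉ Bn)
    (ht : #{p ∈ B0 | p ≤ H} + #{h ∈ Bn | P ≤ h} ≤ (q + 1) * q ^ k) :
    q * #{p ∈ B0 | p ≤ H} ≤ #B0 ∧ q ^ k ∣ #{p ∈ B0 | p ≤ H} := by
  have hI := hB.ind hp hAP rP hHC rH hPH hP0 hHn
  have c1 := card_image_le (s := {p ∈ B0 | p ≤ H}) (f := fun p => p ⊔ P)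
  have c2 := card_image_le (s := {h ∈ Bn | P ≤ h}) (f := fun h => h ⊓ H)
  obtain ⟨i1, i2, G, g1, g2, g3, g4⟩ := IH L r hp P H _ _ hI (by omega)
  have e1 : #(image (fun p => p ⊔ P) {p ∈ B0 | p ≤ H}) = #{p ∈ B0 | p ≤ H} := by omega
  have e2 : #(image (fun h => h ⊓ H) {h ∈ Bn | P ≤ h}) = #{h ∈ Bn | P ≤ h} := by omega
  have inj1 := card_image_iff.1 e1
  have inj2 := card_image_iff.1 e2
  rw [e1] at i2 g4
  refine ⟨?_, i2⟩
  have rG : r G = r C - 2 := by omega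
  have hg : #{p ∈ B0 | p ≤ G} ≤ #{p ∈ image (fun p => p ⊔ P) {p ∈ B0 | p ≤ H} | p ≤ G} := by
    apply card_le_card_of_injOn (fun p => p ⊔ P)
    · intro p hpp
      simp only [coe_filter, Set.mem_ofPred_eq, mem_image, mem_filter] at hpp ⊢
      exact ⟨⟨p, ⟨hpp.1, hpp.2.trans g2⟩, rfl⟩, sup_le hpp.2 g1⟩
    · apply inj1.mono
      intro p hpp
      simp only [coe_filter, Set.mem_ofPred_eq] at hpp ⊢
      exact ⟨hpp.1, hpp.2.trans g2⟩
  have hline := hp.card_line (x := G) (y := C) (g2.trans hHC) (by omega)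
  set ℋ : Finset L := {z : L | G ≤ z ∧ z ≤ C ∧ r z = r G + 1} with hℋ
  have hS : ∀ z ∈ {z ∈ ℋ | z ∉ Bn}, G ≤ z ∧ z ≤ C ∧ r z = r C - 1 := by
    intro z hz
    simp only [hℋ, mem_filter, mem_univ, true_and] at hz
    exact ⟨hz.1.1, hz.1.2.1, by omega⟩
  have hc : ∀ z ∈ {z ∈ ℋ | z ∉ Bn}, #{p ∈ B0 | p ≤ H} ≤ #{p ∈ B0 | p ≤ z} := by
    intro z hz
    obtain ⟨z1, z2, z3⟩ := hS z hz
    have := inc_bound hp IH hB hAP rP z2 z3 (g1.trans z1) hP0 (mem_filter.1 hz).2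
    omega
  have hpen := pencil hp B0 {z ∈ ℋ | z ∉ Bn} rG hS _ hc
  have hsplit : #{z ∈ ℋ | z ∈ Bn} + #{z ∈ ℋ | z ∉ Bn} = #ℋ :=
    card_filter_add_card_filter_not _
  have htr : ∀ z ∈ ℋ, z ∈ Bn → z ⊓ H = G := by
    intro z hz hzn
    simp only [hℋ, mem_filter, mem_univ, true_and] at hz
    have := (hp.inf_hyp hz.2.1 hHC (by omega) rH (by rintro rfl; exact hHn hzn)).1
    exact (hp.eq_of (le_inf hz.1 g2) (by omega)).symm
  rcases g4 with ⟨g4, g5⟩ | ⟨g4, g5⟩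
  · have : #{z ∈ ℋ | z ∈ Bn} = 0 := by
      rw [card_eq_zero, filter_eq_empty_iff]
      intro z hz hzn
      apply g4
      rw [mem_image]
      refine ⟨z, mem_filter.2 ⟨hzn, ?_⟩, htr z hz hzn⟩
      simp only [hℋ, mem_filter, mem_univ, true_and] at hz
      exact g1.trans hz.1
    have hcard : #{z ∈ ℋ | z ∉ Bn} = q + 1 := by omega
    rw [hcard] at hpen
    have h7 : q * #{p ∈ B0 | p ≤ G} ≤ #{p ∈ B0 | p ≤ H} :=
      le_trans (Nat.mul_le_mul_left _ hg) g5
    zify at h7 ⊢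
    push_cast at hpen
    nlinarith
  · have : #{z ∈ ℋ | z ∈ Bn} ≤ 1 := by
      rw [card_le_one]
      intro x hx y hy
      simp only [mem_filter] at hx hy
      apply inj2
      · simp only [coe_filter, Set.mem_ofPred_eq]
        refine ⟨hx.2, ?_⟩
        have := hx.1
        simp only [hℋ, mem_filter, mem_univ, true_and] at this
        exact g1.trans this.1
      · simp only [coe_filter, Set.mem_ofPred_eq]
        refine ⟨hy.2, ?_⟩
        have := hy.1
        simp only [hℋ, mem_filter, mem_univ, true_and] at this
        exact g1.trans this.1
      · simp only
        rw [htr x hx.1 hx.2, htr y hy.1 hy.2]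
    have hcard : q ≤ #{z ∈ ℋ | z ∉ Bn} := by omega
    have hg0 : #{p ∈ B0 | p ≤ G} = 0 := by omega
    rw [hg0] at hpen
    simp only [Nat.cast_zero, sub_zero, add_zero] at hpen
    have h8 : #{z ∈ ℋ | z ∉ Bn} * #{p ∈ B0 | p ≤ H} ≤ #B0 := by exact_mod_cast hpen
    exact le_trans (Nat.mul_le_mul_right _ hcard) h8

open Classical in
theorem exists_tight [Fintype L] (hp : PGS r q) (hq : 2 ≤ q) {k : ℕ} {A C : L}
    {B0 Bn : Finset L}
    (hB : Blk r (k + 1) A C B0 Bn) (hs : #B0 + #Bn ≤ (q + 1) * q ^ (k + 1)) :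
    ∃ P H, A ≤ P ∧ r P = r A + 1 ∧ H ≤ C ∧ r H = r C - 1 ∧ P ≤ H ∧ P ∉ B0 ∧ H ∉ Bn ∧
      #{p ∈ B0 | p ≤ H} + #{h ∈ Bn | P ≤ h} ≤ (q + 1) * q ^ k := by
  by_contra hcon
  push Not at hcon
  obtain ⟨hAC, hr, h0, hn, hbl⟩ := hB
  push_cast at hr
  have hNb := NN_bound q hq k
  set T := (q + 1) * q ^ k with hT
  have hT1 : 1 ≤ T := by
    have : 1 ≤ q ^ k := Nat.one_le_pow _ _ (by omega)
    rw [hT]; nlinarith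
  have hs' : #B0 + #Bn ≤ q * T := by rw [hT]; rw [pow_succ] at hs; linarith
  have hth : T ≤ NN q (2 * k + 2) := by
    refine le_trans ?_ (NN_ge q (2 * k))
    exact Nat.mul_le_mul_left _ (Nat.pow_le_pow_right (by omega) (by omega))
  have hHyp := hp.card_hyp A C (2 * k + 4) hAC (by push_cast; linarith)
  set ℋ : Finset L := {z : L | A ≤ z ∧ z ≤ C ∧ r z = r C - 1} with hℋ
  have hBsub : Bn ⊆ ℋ := by
    intro x hx
    simp only [hℋ, mem_filter, mem_univ, true_and]
    exact hn x hx
  have hgood : #(ℋ \ Bn) = NN q (2 * k + 4) - #Bn := by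
    rw [card_sdiff_of_subset hBsub, hHyp]
  have e3 : NN q (2 * k + 3) = q * NN q (2 * k + 2) + 1 := rfl
  have e4 : NN q (2 * k + 4) = q * NN q (2 * k + 3) + 1 := rfl
  have hbN : #Bn < NN q (2 * k + 4) := by
    rw [e4, e3]
    nlinarith
  have hne : (ℋ \ Bn).Nonempty := by rw [← card_pos]; omega
  obtain ⟨H, hH, hmin⟩ := exists_min_image (ℋ \ Bn) (fun H => #{p ∈ B0 | p ≤ H}) hne
  have hH' := hH
  simp only [hℋ, mem_sdiff, mem_filter, mem_univ, true_and] at hH'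
  obtain ⟨⟨hAH, hHC, rH⟩, hHn⟩ := hH'
  have C1 : #{p ∈ B0 | p ≤ H} * (NN q (2 * k + 4) - #Bn) ≤ #B0 * NN q (2 * k + 3) := by
    rw [← hgood, mul_comm]
    calc #(ℋ \ Bn) * #{p ∈ B0 | p ≤ H} ≤ ∑ z ∈ ℋ \ Bn, #{p ∈ B0 | p ≤ z} := by
          rw [← smul_eq_mul]; exact card_nsmul_le_sum _ _ _ hmin
      _ = ∑ p ∈ B0, #{z ∈ ℋ \ Bn | p ≤ z} := by
          exact sum_card_bipartiteAbove_eq_sum_card_bipartiteBelow (fun z p => p ≤ z)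
      _ ≤ ∑ p ∈ B0, NN q (2 * k + 3) := by
          apply sum_le_sum
          intro p hpp
          obtain ⟨p1, p2, p3⟩ := h0 p hpp
          rw [← hp.card_hyp p C (2 * k + 3) p2 (by push_cast; linarith)]
          apply card_le_card
          intro z hz
          simp only [hℋ, mem_sdiff, mem_filter, mem_univ, true_and] at hz ⊢
          exact ⟨hz.2, hz.1.1.2⟩
      _ = _ := by simp
  -- second count
  have hPts := hp.card_pts H (2 * k + 3) A hAH (by push_cast; linarith)
  set PP : Finset L := {z : L | A ≤ z ∧ z ≤ H ∧ r z = r A + 1} with hPP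
  have hgp : #(PP \ {p ∈ B0 | p ≤ H}) = NN q (2 * k + 3) - #{p ∈ B0 | p ≤ H} := by
    rw [card_sdiff_of_subset, hPts]
    intro x hx
    simp only [hPP, mem_filter, mem_univ, true_and] at hx ⊢
    have := h0 x hx.1
    exact ⟨this.1, hx.2, this.2.2⟩
  have hyN : #{p ∈ B0 | p ≤ H} ≤ NN q (2 * k + 3) := by
    rw [← hPts]
    apply card_le_card
    intro x hx
    simp only [hPP, mem_filter, mem_univ, true_and] at hx ⊢
    have := h0 x hx.1
    exact ⟨this.1, hx.2, this.2.2⟩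
  have C2 : (NN q (2 * k + 3) - #{p ∈ B0 | p ≤ H}) * (T + 1 - #{p ∈ B0 | p ≤ H}) ≤
      #Bn * NN q (2 * k + 2) := by
    rw [← hgp]
    calc #(PP \ {p ∈ B0 | p ≤ H}) * (T + 1 - #{p ∈ B0 | p ≤ H})
        ≤ ∑ P ∈ PP \ {p ∈ B0 | p ≤ H}, #{h ∈ Bn | P ≤ h} := by
          rw [← smul_eq_mul]
          apply card_nsmul_le_sum
          intro P hP
          simp only [hPP, mem_sdiff, mem_filter, mem_univ, true_and, not_and] at hP
          obtain ⟨⟨q1, q2, q3⟩, q4⟩ := hP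
          have := hcon P H q1 q3 hHC rH q2 (fun hx => q4 hx q2) hHn
          omega
      _ = ∑ h ∈ Bn, #{P ∈ PP \ {p ∈ B0 | p ≤ H} | P ≤ h} := by
          exact sum_card_bipartiteAbove_eq_sum_card_bipartiteBelow (fun P h => P ≤ h)
      _ ≤ ∑ h ∈ Bn, NN q (2 * k + 2) := by
          apply sum_le_sum
          intro h hh
          obtain ⟨p1, p2, p3⟩ := hn h hh
          have := (hp.inf_hyp p2 hHC p3 rH (by rintro rfl; exact hHn hh)).1
          rw [← hp.card_pts (h ⊓ H) (2 * k + 2) A (le_inf p1 hAH) (by push_cast; linarith)]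
          apply card_le_card
          intro z hz
          simp only [hPP, mem_sdiff, mem_filter, mem_univ, true_and] at hz ⊢
          exact ⟨hz.1.1.1, le_inf hz.2 hz.1.1.2.1, hz.1.1.2.2⟩
      _ = _ := by simp
  generalize #{p ∈ B0 | p ≤ H} = y at *
  refine numeric q #B0 #Bn y T (NN q (2 * k + 2)) (by exact_mod_cast hq) (by positivity)
    (by positivity) (by positivity) (by exact_mod_cast hT1) (by exact_mod_cast hNb)
    (by exact_mod_cast hs') (by exact_mod_cast hth) ?_ ?_
  · zify [hbN.le] at C1
    rw [e4, e3] at C1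
    push_cast at C1
    exact C1
  · intro hy
    have hy' : y ≤ T + 1 := by exact_mod_cast hy
    zify [hy', hyN] at C2
    rw [e3] at C2
    push_cast at C2
    exact C2

theorem Blk.dual {k : ℕ} {A C : L} {B0 Bn : Finset L} (hB : Blk r k A C B0 Bn) :
    Blk (L := Lᵒᵈ) (fun x => - r (OrderDual.ofDual x)) k (OrderDual.toDual C) (OrderDual.toDual A)
      (Bn.map OrderDual.toDual.toEmbedding) (B0.map OrderDual.toDual.toEmbedding) := by
  obtain ⟨hAC, hr, h0, hn, hbl⟩ := hB
  refine ⟨hAC, by simp only [OrderDual.ofDual_toDual]; linarith, ?_, ?_, ?_⟩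
  · intro p hp
    simp only [mem_map, Equiv.coe_toEmbedding] at hp
    obtain ⟨p, hp, rfl⟩ := hp
    obtain ⟨h1, h2, h3⟩ := hn p hp
    exact ⟨h2, h1, by simp only [OrderDual.ofDual_toDual]; linarith⟩
  · intro p hp
    simp only [mem_map, Equiv.coe_toEmbedding] at hp
    obtain ⟨p, hp, rfl⟩ := hp
    obtain ⟨h1, h2, h3⟩ := h0 p hp
    exact ⟨h2, h1, by simp only [OrderDual.ofDual_toDual]; linarith⟩
  · intro W h1 h2 h3
    simp only [OrderDual.ofDual_toDual] at h3
    rcases hbl (OrderDual.ofDual W) h2 h1 (by linarith) with ⟨p, p1, p2⟩ | ⟨p, p1, p2⟩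
    · right
      exact ⟨OrderDual.toDual p, by simpa using p1, p2⟩
    · left
      exact ⟨OrderDual.toDual p, by simpa using p1, p2⟩
end

open Classical in
theorem thm_succ (q : ℕ) (hq : 2 ≤ q) (k : ℕ) (IH : Thm q k) : Thm q (k + 1) := by
  intro L _ _ r hp A C B0 Bn hB hs
  obtain ⟨P, H, hAP, rP, hHC, rH, hPH, hP0, hHn, ht⟩ := exists_tight hp hq hB hs
  have hge := inc_bound hp IH hB hAP rP hHC rH hPH hP0 hHn
  obtain ⟨t1, t2⟩ := tight_bound hp IH hB hAP rP hHC rH hPH hP0 hHn ht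
  have d1 : #{p ∈ Bn.map OrderDual.toDual.toEmbedding | p ≤ OrderDual.toDual P} =
      #{h ∈ Bn | P ≤ h} := by
    rw [filter_map, card_map]
    rfl
  have d2 : #{h ∈ B0.map OrderDual.toDual.toEmbedding | OrderDual.toDual H ≤ h} =
      #{p ∈ B0 | p ≤ H} := by
    rw [filter_map, card_map]
    rfl
  have hd := tight_bound hp.dual IH hB.dual (P := OrderDual.toDual H) (H := OrderDual.toDual P)
    hHC (by simp only [OrderDual.ofDual_toDual]; linarith) hAP
    (by simp only [OrderDual.ofDual_toDual]; linarith) hPH (by simpa using hHn)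
    (by simpa using hP0) (by rw [d1, d2]; omega)
  obtain ⟨t3, -⟩ := hd
  rw [d1, card_map] at t3
  have e : (q + 1) * q ^ (k + 1) = q * ((q + 1) * q ^ k) := by ring
  have e2 : q * ((q + 1) * q ^ k) = q * #{p ∈ B0 | p ≤ H} + q * #{h ∈ Bn | P ≤ h} := by
    rw [← mul_add]; congr 1; omega
  have e3 : #B0 = q * #{p ∈ B0 | p ≤ H} := by omega
  refine ⟨by omega, ?_, ?_⟩
  · rw [e3, pow_succ, mul_comm]
    exact Nat.mul_dvd_mul_left _ t2
  · exact ⟨H, hAP.trans hPH, hHC, rH, Or.inl ⟨hHn, t1⟩⟩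

theorem thm_all (q : ℕ) (hq : 2 ≤ q) (k : ℕ) : Thm q k := by
  induction k with
  | zero => exact thm_zero q
  | succ k ih => exact thm_succ q hq k ih

end Helpers

section
variable {F V : Type} [Field F] [Fintype F] [AddCommGroup V] [Module F V] [FiniteDimensional F V]

theorem card_pts_sub (D : Submodule F V) (hD : Module.finrank F D = 2) :
    Set.ncard {z : Submodule F V | z ≤ D ∧ Module.finrank F z = 1} = Fintype.card F + 1 := by
  have h1 := Projectivization.card_of_finrank_two F D hD
  rw [Nat.card_congr (Projectivization.equivSubmodule F D), Nat.card_eq_fintype_card (α := F)] at h1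
  rw [← h1, ← Nat.card_coe_set_eq]
  apply Nat.card_congr
  refine Equiv.symm ⟨fun z => ⟨z.1.map D.subtype, Submodule.map_subtype_le _ _, ?_⟩,
    fun z => ⟨z.1.comap D.subtype, ?_⟩, ?_, ?_⟩
  · exact (Submodule.equivMapOfInjective D.subtype D.injective_subtype z.1).symm.finrank_eq.trans z.2
  · exact (Submodule.comapSubtypeEquivOfLe z.2.1).finrank_eq.trans z.2.2
  · intro z
    ext1
    exact Submodule.comap_map_eq_of_injective D.injective_subtype _
  · intro z
    ext1
    simp only [Submodule.map_comap_subtype]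
    exact inf_eq_right.2 z.2.1

theorem pgs_sub : PGS (fun z : Submodule F V => (Module.finrank F z : ℤ)) (Fintype.card F) where
  md x y := by exact_mod_cast Submodule.finrank_sup_add_finrank_inf_eq x y
  mono x y h := by exact_mod_cast Submodule.finrank_lt_finrank_of_lt h
  up x y h := by
    obtain ⟨v, hv, hvx⟩ := SetLike.exists_of_lt h
    refine ⟨x ⊔ Submodule.span F {v}, le_sup_left, sup_le h.le (by simpa using hv), ?_⟩
    have h1 := Submodule.finrank_sup_add_finrank_inf_eq x (Submodule.span F {v})
    have hv0 : v ≠ 0 := by rintro rfl; exact hvx (zero_mem _)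
    rw [finrank_span_singleton hv0] at h1
    have h2 : x ⊓ Submodule.span F {v} = ⊥ :=
      (Submodule.disjoint_span_singleton' hv0).2 hvx |>.eq_bot
    rw [h2, finrank_bot] at h1
    exact_mod_cast h1
  dn x y h := by
    have hlt := Submodule.finrank_lt_finrank_of_lt h
    suffices H : ∀ n, ∀ x : Submodule F V, x ≤ y → Module.finrank F x + n + 1 = Module.finrank F y →
        ∃ z, x ≤ z ∧ z ≤ y ∧ Module.finrank F z + 1 = Module.finrank F y by
      obtain ⟨z, h1, h2, h3⟩ := H (Module.finrank F y - Module.finrank F x - 1) x h.le (by omega)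
      exact ⟨z, h1, h2, by omega⟩
    intro n
    induction n with
    | zero => exact fun x hx hr => ⟨x, le_rfl, hx, by omega⟩
    | succ n ih =>
      intro x hx hr
      have hxy : x < y := lt_of_le_of_ne hx (by rintro rfl; omega)
      obtain ⟨v, hv, hvx⟩ := SetLike.exists_of_lt hxy
      have h1 := Submodule.finrank_sup_add_finrank_inf_eq x (Submodule.span F {v})
      have hv0 : v ≠ 0 := by rintro rfl; exact hvx (zero_mem _)
      rw [finrank_span_singleton hv0] at h1
      have h2 : x ⊓ Submodule.span F {v} = ⊥ :=
        (Submodule.disjoint_span_singleton' hv0).2 hvx |>.eq_bot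
      rw [h2, finrank_bot] at h1
      obtain ⟨z, z1, z2, z3⟩ := ih (x ⊔ Submodule.span F {v}) (sup_le hx (by simpa using hv))
        (by omega)
      exact ⟨z, le_sup_left.trans z1, z2, z3⟩
  line x y hxy hr := by
    have hr' : Module.finrank F y = Module.finrank F x + 2 := by exact_mod_cast hr
    obtain ⟨E, hE⟩ := exists_isCompl x
    have hmod : x ⊔ (E ⊓ y) = y := by
      rw [← sup_inf_assoc_of_le E hxy, hE.sup_eq_top, top_inf_eq]
    have hdis : ∀ l, l ≤ E ⊓ y → x ⊓ l = ⊥ := fun l hl =>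
      (hE.disjoint.mono_right (hl.trans inf_le_left)).eq_bot
    have hfr : ∀ l, l ≤ E ⊓ y →
        Module.finrank F ↥(x ⊔ l) = Module.finrank F x + Module.finrank F l := by
      intro l hl
      have := Submodule.finrank_sup_add_finrank_inf_eq x l
      rw [hdis l hl, finrank_bot] at this
      simpa using this
    have hD : Module.finrank F ↥(E ⊓ y) = 2 := by
      have := hfr _ le_rfl
      rw [hmod] at this
      omega
    have hz : ∀ z, x ≤ z → z ≤ y → x ⊔ (E ⊓ z) = z := by
      intro z h1 h2
      rw [← sup_inf_assoc_of_le E h1, hE.sup_eq_top, top_inf_eq]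
    rw [← card_pts_sub _ hD]
    symm
    apply Set.ncard_congr (fun l _ => x ⊔ l)
    · rintro l ⟨l1, l2⟩
      refine ⟨le_sup_left, sup_le hxy (l1.trans inf_le_right), ?_⟩
      have := hfr l l1
      omega
    · rintro l l' ⟨l1, l2⟩ ⟨m1, m2⟩ he
      have key : ∀ l, l ≤ E ⊓ y → (x ⊔ l) ⊓ E = l := by
        intro l hl
        rw [sup_comm, sup_inf_assoc_of_le x (hl.trans inf_le_left), hE.inf_eq_bot, sup_bot_eq]
      rw [← key l l1, ← key l' m1, he]
    · rintro z ⟨z1, z2, z3⟩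
      have hz' := hz z z1 z2
      have hle : E ⊓ z ≤ E ⊓ y := inf_le_inf_left _ z2
      refine ⟨E ⊓ z, ⟨hle, ?_⟩, hz'⟩
      have := hfr _ hle
      rw [hz'] at this
      omega
end

/-- Let `B = B0 ∪ Bn` be a blocking set of points and hyperplanes
with respect to `k`-spaces in `PG(2k+1,q)` with `|B| = (q+1)·q^k`.  Then `q^k`
divides `|B0|`. -/
theorem stmt_11 {F : Type} [Field F] [Fintype F] (k : ℕ) (hk : 1 ≤ k)
    (B0 Bn : Set (Submodule F (Fin (2 * k + 2) → F)))
    (hB0 : ∀ p ∈ B0, Module.finrank F p = 1)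
    (hBn : ∀ H ∈ Bn, Module.finrank F H = 2 * k + 1)
    (hblock : ∀ W : Submodule F (Fin (2 * k + 2) → F), Module.finrank F W = k + 1 →
      (∃ p ∈ B0, p ≤ W) ∨ (∃ H ∈ Bn, W ≤ H))
    (hsize : B0.ncard + Bn.ncard = (Fintype.card F + 1) * (Fintype.card F) ^ k) :
    (Fintype.card F) ^ k ∣ B0.ncard := by
  classical
  haveI : Finite (Submodule F (Fin (2 * k + 2) → F)) := inferInstance
  haveI : Fintype (Submodule F (Fin (2 * k + 2) → F)) := Fintype.ofFinite _
  have hq : 2 ≤ Fintype.card F := Fintype.one_lt_card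
  rw [Set.ncard_eq_toFinset_card' B0] at hsize ⊢
  rw [Set.ncard_eq_toFinset_card' Bn] at hsize
  refine (thm_all _ hq k _ _ (pgs_sub (F := F) (V := Fin (2 * k + 2) → F)) ⊥ ⊤ B0.toFinset
    Bn.toFinset ⟨bot_le, ?_, ?_, ?_, ?_⟩ hsize.le).2.1
  · simp
  · intro p hp
    have := hB0 p (by simpa using hp)
    exact ⟨bot_le, le_top, by simp [this]⟩
  · intro p hp
    have := hBn p (by simpa using hp)
    exact ⟨bot_le, le_top, by simp [this]; ring⟩
  · intro W _ _ hW
    simp only [finrank_bot] at hW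
    rcases hblock W (by omega) with ⟨p, h1, h2⟩ | ⟨p, h1, h2⟩
    · exact Or.inl ⟨p, by simpa using h1, h2⟩
    · exact Or.inr ⟨p, by simpa using h1, h2⟩
end

section
/- Let q be a prime power, k ≥ 1, and n = 2k+1. Let B = B_0 ∪ B_{n-1} be a blocking set with respect to k-spaces in PG(2k+1,q) consisting of points and hyperplanes with |B| = (q+1)·q^k. Then no point P not in B_0 lies simultaneously on a tangent line to B_0 and on a secant line to B_0. -/
namespace S12
set_option linter.unusedSectionVars false
open Classical

variable {F : Type} [Field F] [Fintype F] {V : Type} [AddCommGroup V] [Module F V] [Fintype V]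

/-- vectors of a subspace -/
noncomputable def vec (U : Submodule F V) : Finset V := Finset.univ.filter (· ∈ U)

lemma mem_vec (U : Submodule F V) (v : V) : v ∈ vec U ↔ v ∈ U := by simp [vec]

lemma card_vec (U : Submodule F V) : (vec U).card = Fintype.card F ^ Module.finrank F U := by
  have h := Module.card_eq_pow_finrank (K := F) (V := U)
  rw [← h, vec, Fintype.card_subtype]

lemma vec_mono {U W : Submodule F V} (h : U ≤ W) : vec U ⊆ vec W := by
  intro v hv
  rw [mem_vec] at *
  exact h hv

/-- blocking -/
def Blk (k : ℕ) (B0 Bn : Finset (Submodule F V)) : Prop :=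
  ∀ W : Submodule F V, Module.finrank F W = k + 1 → (∃ p ∈ B0, p ≤ W) ∨ (∃ H ∈ Bn, W ≤ H)

/-- adding a point -/
lemma finrank_sup_point {U p : Submodule F V} (hp : Module.finrank F p = 1) (h : ¬ p ≤ U) :
    Module.finrank F ↥(U ⊔ p) = Module.finrank F U + 1 := by
  have h1 := Submodule.finrank_sup_add_finrank_inf_eq U p
  have h2 : U ⊓ p < p := lt_of_le_of_ne inf_le_right (fun e => h (inf_eq_right.mp e))
  have h3 := Submodule.finrank_lt_finrank_of_lt h2
  omega

lemma point_eq {p r : Submodule F V} (hp : Module.finrank F p = 1) (hr : Module.finrank F r = 1)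
    (h : p ≤ r) : p = r := Submodule.eq_of_le_of_finrank_eq h (by omega)

lemma span_point {U : Submodule F V} {v : V} (h : v ∉ U) : Module.finrank F (F ∙ v) = 1 :=
  finrank_span_singleton (by rintro rfl; exact h U.zero_mem)

lemma card_hyp_union (k : ℕ) (S : Submodule F V) (hV : Module.finrank F V = 2 * k + 2)
    (hS : Module.finrank F S = k) (X : Finset (Submodule F V)) :
    (∀ H ∈ X, Module.finrank F H = 2 * k + 1 ∧ S ≤ H) →
    (vec S ∪ X.biUnion vec).card + X.card * Fintype.card F ^ (2 * k) ≤
      Fintype.card F ^ (2 * k) + X.card * Fintype.card F ^ (2 * k + 1) := by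
  have hq : 0 < Fintype.card F := Fintype.card_pos
  induction X using Finset.induction_on with
  | empty =>
    intro _
    simp only [Finset.biUnion_empty, Finset.union_empty, card_vec, hS]
    have := Nat.pow_le_pow_right hq (show k ≤ 2 * k by omega)
    simpa using this
  | insert H X hH ih =>
    intro h
    have ih := ih (fun H' h' => h H' (Finset.mem_insert_of_mem h'))
    have hH1 := h H (Finset.mem_insert_self _ _)
    rw [Finset.card_insert_of_notMem hH]
    rcases X.eq_empty_or_nonempty with rfl | ⟨H', hH'⟩
    · have : vec S ∪ (insert H (∅ : Finset (Submodule F V))).biUnion vec = vec H := by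
        simp [vec_mono hH1.2]
      rw [this, card_vec, hH1.1]
      simp
      omega
    · have hH2 := h H' (Finset.mem_insert_of_mem hH')
      have e : vec S ∪ (insert H X).biUnion vec ⊆
          (vec S ∪ X.biUnion vec) ∪ (vec H \ vec H') := by
        intro v
        simp only [Finset.mem_union, Finset.mem_biUnion, Finset.mem_insert, Finset.mem_sdiff]
        rintro (h | ⟨G, rfl | hG, hv⟩)
        · tauto
        · by_cases hv' : v ∈ vec H'
          · exact Or.inl (Or.inr ⟨H', hH', hv'⟩)
          · tauto
        · exact Or.inl (Or.inr ⟨G, hG, hv⟩)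
      have e1 := (Finset.card_le_card e).trans (Finset.card_union_le _ _)
      have e2 : (vec H \ vec H').card + (vec (H ⊓ H')).card = (vec H).card := by
        have : vec (H ⊓ H') = vec H ∩ vec H' := by ext; simp [mem_vec]
        rw [this]; exact Finset.card_sdiff_add_card_inter _ _
      have e3 : 2 * k ≤ Module.finrank F ↥(H ⊓ H') := by
        have h1 := Submodule.finrank_sup_add_finrank_inf_eq H H'
        have h2 := Submodule.finrank_le (H ⊔ H')
        omega
      have e4 := Nat.pow_le_pow_right hq e3
      rw [card_vec, card_vec, hH1.1] at e2
      rw [add_mul, add_mul]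
      omega

lemma lemA (k : ℕ) (hV : Module.finrank F V = 2 * k + 2) (B0 Bn : Finset (Submodule F V))
    (hB0 : ∀ p ∈ B0, Module.finrank F p = 1) (hBn : ∀ H ∈ Bn, Module.finrank F H = 2 * k + 1)
    (hb : Blk k B0 Bn) (S : Submodule F V) (hS : Module.finrank F S = k)
    (hS0 : ∀ p ∈ B0, ¬ p ≤ S) :
    (Fintype.card F + 1) * Fintype.card F ^ k ≤
      (B0.image (fun p => S ⊔ p)).card +
        (Bn.filter (fun H => S ≤ H)).card * Fintype.card F ^ k := by
  set X := Bn.filter (fun H => S ≤ H) with hX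
  set G := B0.image (fun p => S ⊔ p) with hG
  have hq : 1 < Fintype.card F := Fintype.one_lt_card
  have h1 := card_hyp_union k S hV hS X (fun H hH => by
    rw [hX, Finset.mem_filter] at hH; exact ⟨hBn H hH.1, hH.2⟩)
  have h2 : (Finset.univ : Finset V) ⊆
      (vec S ∪ X.biUnion vec) ∪ G.biUnion (fun g => vec g \ vec S) := by
    intro v _
    simp only [Finset.mem_union, Finset.mem_biUnion, Finset.mem_sdiff, mem_vec]
    by_cases hv : v ∈ S
    · tauto
    have hn : ¬ (F ∙ v) ≤ S := by rwa [Submodule.span_singleton_le_iff_mem]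
    have hW := finrank_sup_point (span_point hv) hn
    rw [hS] at hW
    have hvW : v ∈ S ⊔ (F ∙ v) := Submodule.mem_sup_right (Submodule.mem_span_singleton_self v)
    rcases hb _ hW with ⟨p, hp, hpW⟩ | ⟨H, hH, hWH⟩
    · right
      refine ⟨S ⊔ p, Finset.mem_image_of_mem _ hp, ?_, hv⟩
      have : S ⊔ p = S ⊔ (F ∙ v) := by
        apply Submodule.eq_of_le_of_finrank_eq (sup_le le_sup_left hpW)
        rw [hW, finrank_sup_point (hB0 p hp) (hS0 p hp), hS]
      rw [this]; exact hvW
    · left; right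
      exact ⟨H, by rw [hX, Finset.mem_filter]; exact ⟨hH, le_sup_left.trans hWH⟩, hWH hvW⟩
  have h3 := (Finset.card_le_card h2).trans (Finset.card_union_le _ _)
  have h4 : (G.biUnion (fun g => vec g \ vec S)).card ≤
      G.card * (Fintype.card F ^ (k + 1) - Fintype.card F ^ k) := by
    apply Finset.card_biUnion_le_card_mul
    intro g hg
    rw [hG, Finset.mem_image] at hg
    obtain ⟨p, hp, rfl⟩ := hg
    rw [Finset.card_sdiff_of_subset (vec_mono le_sup_left), card_vec, card_vec,
      finrank_sup_point (hB0 p hp) (hS0 p hp), hS]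
  rw [Finset.card_univ, Module.card_eq_pow_finrank (K := F) (V := V), hV] at h3
  obtain ⟨q, hq'⟩ : ∃ q, Fintype.card F = q + 1 := ⟨Fintype.card F - 1, by omega⟩
  simp only [hq'] at h1 h3 h4 hq ⊢
  have e : (q + 1) ^ (k + 1) - (q + 1) ^ k = q * (q + 1) ^ k := by
    rw [pow_succ, mul_comm, add_mul]; omega
  rw [e] at h4
  have hq0 : 0 < q := by omega
  have hpos : 0 < q * (q + 1) ^ k := by positivity
  refine Nat.le_of_mul_le_mul_left ?_ hpos
  have e1 : (q + 1) ^ (2 * k) = (q + 1) ^ k * (q + 1) ^ k := by rw [two_mul, pow_add]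
  have e2 : (q + 1) ^ (2 * k + 1) = (q + 1) ^ k * (q + 1) ^ k * (q + 1) := by rw [pow_succ, e1]
  have e3 : (q + 1) ^ (2 * k + 2) = (q + 1) ^ k * (q + 1) ^ k * (q + 1) * (q + 1) := by
    rw [pow_succ, e2]
  rw [e1, e2] at h1
  rw [e3] at h3
  nlinarith

/-- hyperplanes only -/
lemma only_hyp (k : ℕ) (hV : Module.finrank F V = 2 * k + 2) (Bn : Finset (Submodule F V))
    (hBn : ∀ H ∈ Bn, Module.finrank F H = 2 * k + 1)
    (hb : Blk k ∅ Bn) (i : ℕ) : ∀ U : Submodule F V, Module.finrank F U + i = k →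
    (Fintype.card F + 1) * Fintype.card F ^ i ≤ (Bn.filter (fun H => U ≤ H)).card := by
  have hq : 0 < Fintype.card F := Fintype.card_pos
  induction i with
  | zero =>
    intro U hU
    have := lemA k hV ∅ Bn (by simp) hBn hb U (by omega) (by simp)
    simp only [Finset.image_empty, Finset.card_empty, zero_add] at this
    have := Nat.le_of_mul_le_mul_right this (by positivity)
    simpa using this
  | succ i ih =>
    intro U hU
    set X := Bn.filter (fun H => U ≤ H) with hX
    have h1 : ∀ v : V, (Fintype.card F + 1) * Fintype.card F ^ i ≤
        (X.filter (fun H => v ∈ H)).card := by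
      intro v
      obtain ⟨U', hU', hvU, hUU⟩ : ∃ U' : Submodule F V, Module.finrank F U' + i = k ∧ v ∈ U' ∧
          U ≤ U' := by
        have key : ∀ w, w ∉ U → Module.finrank F ↥(U ⊔ (F ∙ w)) + i = k := by
          intro w hw
          rw [finrank_sup_point (span_point hw)
            (by rwa [Submodule.span_singleton_le_iff_mem])]
          omega
        by_cases hv : v ∈ U
        · obtain ⟨w, hw⟩ : ∃ w, w ∉ U := by
            by_contra hc
            push Not at hc
            have : U = ⊤ := by ext x; simp [hc x]
            rw [this, finrank_top] at hU
            omega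
          exact ⟨_, key w hw, Submodule.mem_sup_left hv, le_sup_left⟩
        · exact ⟨_, key v hv, Submodule.mem_sup_right (Submodule.mem_span_singleton_self v),
            le_sup_left⟩
      refine (ih U' hU').trans (Finset.card_le_card ?_)
      intro H hH
      simp only [hX, Finset.mem_filter] at hH ⊢
      exact ⟨⟨hH.1, hUU.trans hH.2⟩, hH.2 hvU⟩
    have h2 : ∑ v : V, (X.filter (fun H => v ∈ H)).card = ∑ H ∈ X, (vec H).card := by
      have := Finset.sum_card_bipartiteAbove_eq_sum_card_bipartiteBelow
        (s := (Finset.univ : Finset V)) (t := X) (fun v H => v ∈ H)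
      simpa [Finset.bipartiteAbove, Finset.bipartiteBelow, vec] using this
    have h3 : ∑ H ∈ X, (vec H).card = X.card * Fintype.card F ^ (2 * k + 1) := by
      rw [Finset.sum_const_nat]
      intro H hH
      rw [card_vec, hBn H (Finset.mem_filter.mp hH).1]
    have h4 := Finset.card_nsmul_le_sum Finset.univ _ _ (fun v _ => h1 v)
    rw [h2, h3, Finset.card_univ, Module.card_eq_pow_finrank (K := F) (V := V), hV,
      smul_eq_mul] at h4
    have h5 : 0 < Fintype.card F ^ (2 * k + 1) := by positivity
    refine Nat.le_of_mul_le_mul_right ?_ h5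
    calc _ = Fintype.card F ^ (2 * k + 2) * ((Fintype.card F + 1) * Fintype.card F ^ i) := by ring
      _ ≤ _ := h4

/-- complements of `R` in `W` -/
lemma exists_family (k : ℕ) (W R : Submodule F V) (hW : Module.finrank F W = k + 1)
    (hR : Module.finrank F R = 1) (hRW : R ≤ W) :
    ∃ 𝒮 : Finset (Submodule F V), 𝒮.card = Fintype.card F ^ k ∧
      (∀ S ∈ 𝒮, Module.finrank F S = k ∧ S ≤ W ∧ ¬ R ≤ S) ∧
      ∀ P : Submodule F V, P ≤ W → Module.finrank F P = 1 → P ≠ R → ∃ S ∈ 𝒮, P ≤ S := by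
  obtain ⟨r, hr0, hr⟩ := finrank_eq_one_iff'.mp hR
  have hrW : (r : V) ∈ W := hRW r.2
  set w : W := ⟨r, hrW⟩ with hw
  have hRr : ∀ U : Submodule F V, (r : V) ∈ U → R ≤ U := by
    intro U hU x hx
    obtain ⟨c, hc⟩ := hr ⟨x, hx⟩
    have : x = c • (r : V) := by rw [← Submodule.coe_smul, hc]
    rw [this]; exact U.smul_mem c hU
  have hw0 : w ≠ 0 := by
    intro h; apply hr0; ext; exact congrArg (Subtype.val : W → V) h
  have : Finite (Module.Dual F W) := Module.finite_of_finite F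
  let ev : Module.Dual F W →ₗ[F] F := Module.Dual.eval F W w
  have hev : ∀ φ, ev φ = φ w := fun φ => rfl
  have hev0 : ev ≠ 0 := by
    intro h
    apply hw0
    rw [← Module.forall_dual_apply_eq_zero_iff F w]
    intro φ
    rw [← hev, h]; rfl
  have hsurj : Function.Surjective ev := LinearMap.surjective hev0
  obtain ⟨φ₀, hφ₀⟩ := hsurj 1
  have hker : Module.finrank F (LinearMap.ker ev) = k := by
    have h1 := LinearMap.finrank_range_add_finrank_ker ev
    rw [LinearMap.range_eq_top.mpr hsurj, finrank_top, Module.finrank_self,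
      Subspace.dual_finrank_eq, hW] at h1
    omega
  have : Fintype (LinearMap.ker ev) := Fintype.ofFinite _
  let f : LinearMap.ker ev → Submodule F V := fun μ => (LinearMap.ker (φ₀ + μ.1)).map W.subtype
  have hone : ∀ μ : LinearMap.ker ev, (φ₀ + μ.1) w = 1 := by
    intro μ
    have h1 : ev μ.1 = 0 := μ.2
    rw [← hev, map_add, hφ₀, h1, add_zero]
  have hinj : Function.Injective f := by
    intro μ ν h
    have h' := Submodule.map_injective_of_injective W.injective_subtype h
    ext1
    apply add_left_cancel (a := φ₀)
    have h1 := hone μ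
    have h2 := hone ν
    generalize φ₀ + μ.1 = φ at *
    generalize φ₀ + ν.1 = ψ at *
    ext x
    have h3 : x - φ x • w ∈ LinearMap.ker φ := by
      rw [LinearMap.mem_ker, map_sub, map_smul, h1]; simp
    rw [h', LinearMap.mem_ker, map_sub, map_smul, h2] at h3
    simp only [smul_eq_mul, mul_one] at h3
    exact (sub_eq_zero.mp h3).symm
  refine ⟨Finset.univ.image f, ?_, ?_, ?_⟩
  · rw [Finset.card_image_of_injective _ hinj, Finset.card_univ,
      Module.card_eq_pow_finrank (K := F), hker]
  · intro S hS
    obtain ⟨μ, _, rfl⟩ := Finset.mem_image.mp hS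
    have h1 := hone μ
    obtain ⟨φ, hφ⟩ : ∃ φ : Module.Dual F W, φ = φ₀ + μ.1 := ⟨_, rfl⟩
    have hf : f μ = (LinearMap.ker φ).map W.subtype := by rw [hφ]
    rw [hf]
    rw [← hφ] at h1
    refine ⟨?_, Submodule.map_subtype_le _ _, ?_⟩
    · have hφ0 : φ ≠ 0 := by
        rintro rfl
        exact zero_ne_one h1
      have h2 := Module.Dual.finrank_ker_add_one_of_ne_zero hφ0
      rw [Submodule.finrank_map_subtype_eq]
      omega
    · intro h
      obtain ⟨y, hy, hyr⟩ := h r.2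
      have : y = w := Subtype.ext hyr
      rw [this] at hy
      have hy : φ w = 0 := hy
      rw [hy] at h1
      exact zero_ne_one h1
  · intro P hPW hP hPR
    have hnot : w ∉ P.comap W.subtype := by
      intro h
      exact hPR (point_eq hR hP (hRr P h)).symm
    obtain ⟨g, hg, hgP⟩ := Submodule.exists_dual_map_eq_bot_of_notMem hnot inferInstance
    have hmem : (g w)⁻¹ • g - φ₀ ∈ LinearMap.ker ev := by
      rw [LinearMap.mem_ker, map_sub, hφ₀, map_smul, hev, smul_eq_mul, inv_mul_cancel₀ hg, sub_self]
    refine ⟨f ⟨_, hmem⟩, Finset.mem_image_of_mem _ (Finset.mem_univ _), ?_⟩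
    intro x hx
    refine ⟨⟨x, hPW hx⟩, ?_, rfl⟩
    have : g ⟨x, hPW hx⟩ = 0 := by
      rw [← Submodule.mem_bot F, ← hgP]
      exact ⟨_, hx, rfl⟩
    simp [this]

/-- greedy extension -/
lemma greedy (k : ℕ) (hV : Module.finrank F V = 2 * k + 2) (B0 : Finset (Submodule F V))
    (hB0 : ∀ p ∈ B0, Module.finrank F p = 1)
    (hc : B0.card ≤ (Fintype.card F + 1) * Fintype.card F ^ k) (R : Submodule F V) (hR : R ∈ B0)
    (j : ℕ) : ∀ U : Submodule F V, (∀ p ∈ B0, p ≤ U → p = R) → Module.finrank F U + j = k + 1 →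
    ∃ W : Submodule F V, U ≤ W ∧ Module.finrank F W = k + 1 ∧ ∀ p ∈ B0, p ≤ W → p = R := by
  have hq : 1 < Fintype.card F := Fintype.one_lt_card
  induction j with
  | zero => intro U hU hd; exact ⟨U, le_rfl, hd, hU⟩
  | succ j ih =>
    intro U hU hd
    obtain ⟨v, hv⟩ : ∃ v, v ∉ vec U ∪ (B0.erase R).biUnion (fun p => vec (U ⊔ p) \ vec U) := by
      by_contra hcon
      push Not at hcon
      have h2 : (Finset.univ : Finset V) ⊆ _ := fun v _ => hcon v
      have h3 := (Finset.card_le_card h2).trans (Finset.card_union_le _ _)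
      have h4 : ((B0.erase R).biUnion (fun p => vec (U ⊔ p) \ vec U)).card ≤ (B0.erase R).card *
          (Fintype.card F ^ (Module.finrank F U + 1) - Fintype.card F ^ (Module.finrank F U)) := by
        apply Finset.card_biUnion_le_card_mul
        intro p hp
        rw [Finset.mem_erase] at hp
        rw [Finset.card_sdiff_of_subset (vec_mono le_sup_left), card_vec, card_vec,
          finrank_sup_point (hB0 p hp.2) (fun h => hp.1 (hU p hp.2 h))]
      have h5 := Finset.card_erase_add_one hR
      rw [Finset.card_univ, Module.card_eq_pow_finrank (K := F) (V := V), hV, card_vec] at h3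
      obtain ⟨q, hq'⟩ : ∃ q, Fintype.card F = q + 1 := ⟨Fintype.card F - 1, by omega⟩
      have h6 := Nat.pow_le_pow_right (show 0 < Fintype.card F by omega)
        (show Module.finrank F U ≤ k by omega)
      simp only [hq'] at h3 h4 h6 hq hc
      generalize Module.finrank F U = d at *
      have e : (q + 1) ^ (d + 1) - (q + 1) ^ d = q * (q + 1) ^ d := by
        rw [pow_succ, mul_comm, add_mul]; omega
      have e3 : (q + 1) ^ (2 * k + 2) = (q + 1) ^ k * (q + 1) ^ k * (q + 1) * (q + 1) := by ring
      rw [e] at h4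
      rw [e3] at h3
      have ha : 0 < (q + 1) ^ d := by positivity
      generalize (q + 1) ^ d = a at *
      generalize (q + 1) ^ k = b at *
      generalize (B0.erase R).card = m at *
      have hq0 : 0 < q := by omega
      have h7 : m + 1 ≤ (q + 1 + 1) * b := by omega
      have h8 : b * b * (q + 1) * (q + 1) ≤ a + m * (q * a) := by omega
      have h9 : (m + 1) * (q * a) ≤ (q + 1 + 1) * b * (q * a) := Nat.mul_le_mul_right _ h7
      have h10 : a * (b * ((q + 1) * (q + 1))) ≤ b * (b * ((q + 1) * (q + 1))) :=
        Nat.mul_le_mul_right _ h6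
      have h11 : a ≤ q * a := Nat.le_mul_of_pos_left _ hq0
      have h12 : 0 < a * b := Nat.mul_pos ha (by omega)
      nlinarith
    simp only [Finset.mem_union, Finset.mem_biUnion, Finset.mem_sdiff, mem_vec, Finset.mem_erase,
      not_or, not_exists, not_and, not_not] at hv
    have hn : ¬ (F ∙ v) ≤ U := by rw [Submodule.span_singleton_le_iff_mem]; exact hv.1
    have hd' := finrank_sup_point (span_point hv.1) hn
    have hvW : v ∈ U ⊔ (F ∙ v) := Submodule.mem_sup_right (Submodule.mem_span_singleton_self v)
    obtain ⟨W, h1, h2⟩ := ih (U ⊔ (F ∙ v)) (by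
      intro p hp hpU
      by_contra hpR
      have hpU' : ¬ p ≤ U := fun h => hpR (hU p hp h)
      have : U ⊔ p = U ⊔ (F ∙ v) := by
        apply Submodule.eq_of_le_of_finrank_eq (sup_le le_sup_left hpU)
        rw [hd', finrank_sup_point (hB0 p hp) hpU']
      exact hv.1 (hv.2 p ⟨hpR, hp⟩ (by rw [this]; exact hvW))) (by omega)
    exact ⟨W, le_sup_left.trans h1, h2⟩

lemma lemC (k : ℕ) (hV : Module.finrank F V = 2 * k + 2) (B0 Bn : Finset (Submodule F V))
    (hB0 : ∀ p ∈ B0, Module.finrank F p = 1) (hBn : ∀ H ∈ Bn, Module.finrank F H = 2 * k + 1)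
    (hb : Blk k B0 Bn) (R W : Submodule F V) (hR : R ∈ B0) (hRW : R ≤ W)
    (hW : Module.finrank F W = k + 1) (hWR : ∀ p ∈ B0, p ≤ W → p = R)
    (hWn : ∀ H ∈ Bn, ¬ W ≤ H) :
    (Fintype.card F + 1) * Fintype.card F ^ k ≤ B0.card + (Bn.filter (fun H => ¬ R ≤ H)).card ∧
    ∀ P : Submodule F V, P ≤ W → Module.finrank F P = 1 → P ≠ R →
      (∃ p₁ ∈ B0, ∃ p₂ ∈ B0, p₁ ≠ p₂ ∧ P ⊔ p₁ = P ⊔ p₂) →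
      (Fintype.card F + 1) * Fintype.card F ^ k < B0.card + Bn.card := by
  have hq : 0 < Fintype.card F := Fintype.card_pos
  obtain ⟨𝒮, h𝒮c, h𝒮, h𝒮P⟩ := exists_family k W R hW (hB0 R hR) hRW
  have hS0 : ∀ S ∈ 𝒮, ∀ p ∈ B0, ¬ p ≤ S := by
    intro S hS p hp hpS
    have := hWR p hp (hpS.trans (h𝒮 S hS).2.1)
    subst this
    exact (h𝒮 S hS).2.2 hpS
  have hsum : ∑ S ∈ 𝒮, (Bn.filter (fun H => S ≤ H)).card ≤
      (Bn.filter (fun H => ¬ R ≤ H)).card := by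
    rw [← Finset.card_biUnion]
    · apply Finset.card_le_card
      intro H hH
      simp only [Finset.mem_biUnion, Finset.mem_filter] at hH ⊢
      obtain ⟨S, hS, hH, hSH⟩ := hH
      refine ⟨hH, fun hRH => hWn H hH ?_⟩
      obtain ⟨h1, h2, h3⟩ := h𝒮 S hS
      have : S ⊔ R = W := by
        apply Submodule.eq_of_le_of_finrank_eq (sup_le h2 hRW)
        rw [finrank_sup_point (hB0 R hR) h3, h1, hW]
      rw [← this]
      exact sup_le hSH hRH
    · intro S hS S' hS' hne
      rw [Function.onFun, Finset.disjoint_left]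
      intro H hH hH'
      simp only [Finset.mem_filter] at hH hH'
      apply hne
      have hlt : H ⊓ W < W := lt_of_le_of_ne inf_le_right (fun e => hWn H hH.1 (inf_eq_right.mp e))
      have hlt' := Submodule.finrank_lt_finrank_of_lt hlt
      have key : ∀ S ∈ 𝒮, S ≤ H → S = H ⊓ W := by
        intro S hS hSH
        apply Submodule.eq_of_le_of_finrank_le (le_inf hSH (h𝒮 S hS).2.1)
        rw [(h𝒮 S hS).1]; omega
      rw [key S hS hH.2, key S' hS' hH'.2]
  have hA : ∀ S ∈ 𝒮, _ := fun S hS =>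
    lemA k hV B0 Bn hB0 hBn hb S (h𝒮 S hS).1 (hS0 S hS)
  have hA' : ∀ S ∈ 𝒮, (Fintype.card F + 1) * Fintype.card F ^ k ≤
      B0.card + (Bn.filter (fun H => S ≤ H)).card * Fintype.card F ^ k := fun S hS =>
    (hA S hS).trans (Nat.add_le_add_right Finset.card_image_le _)
  have hr : ∑ S ∈ 𝒮, (B0.card + (Bn.filter (fun H => S ≤ H)).card * Fintype.card F ^ k) ≤
      Fintype.card F ^ k * (B0.card + (Bn.filter (fun H => ¬ R ≤ H)).card) := by
    rw [Finset.sum_add_distrib, Finset.sum_const, h𝒮c, ← Finset.sum_mul, smul_eq_mul, mul_add]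
    have := Nat.mul_le_mul_right (Fintype.card F ^ k) hsum
    linarith
  have hpos : 0 < Fintype.card F ^ k := by positivity
  refine ⟨?_, ?_⟩
  · refine Nat.le_of_mul_le_mul_left ?_ hpos
    refine le_trans ?_ hr
    have := Finset.card_nsmul_le_sum 𝒮 _ _ hA'
    rwa [h𝒮c, smul_eq_mul] at this
  · rintro P hPW hP hPR ⟨p₁, hp₁, p₂, hp₂, hne, he⟩
    obtain ⟨S, hS, hPS⟩ := h𝒮P P hPW hP hPR
    have hlt : (B0.image (fun p => S ⊔ p)).card < B0.card := by
      refine lt_of_le_of_ne Finset.card_image_le ?_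
      intro h
      rw [Finset.card_image_iff] at h
      apply hne
      apply h hp₁ hp₂
      show S ⊔ p₁ = S ⊔ p₂
      rw [← sup_eq_left.mpr hPS, sup_assoc, he, sup_assoc]
    have h1 := Finset.sum_lt_sum hA' ⟨S, hS, lt_of_le_of_lt (hA S hS) (Nat.add_lt_add_right hlt _)⟩
    rw [Finset.sum_const, h𝒮c, smul_eq_mul] at h1
    have h2 := Nat.lt_of_mul_lt_mul_left (lt_of_lt_of_le h1 hr)
    have h3 := Finset.card_filter_le Bn (fun H => ¬ R ≤ H)
    omega

lemma essential (k : ℕ) (B0 Bn : Finset (Submodule F V)) (hb : Blk k B0 Bn)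
    (R : Submodule F V) (h : ¬ Blk k (B0.erase R) Bn) :
    ∃ W : Submodule F V, R ≤ W ∧ Module.finrank F W = k + 1 ∧ (∀ p ∈ B0, p ≤ W → p = R) ∧
    (∀ H ∈ Bn, ¬ W ≤ H) := by
  unfold Blk at h
  push Not at h
  obtain ⟨W, hW, h1, h2⟩ := h
  have h3 : ∀ p ∈ B0, p ≤ W → p = R := by
    intro p hp hpW
    by_contra hpR
    exact h1 p (Finset.mem_erase.mpr ⟨hpR, hp⟩) hpW
  refine ⟨W, ?_, hW, h3, h2⟩
  rcases hb W hW with ⟨p, hp, hpW⟩ | ⟨H, hH, hWH⟩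
  · rw [← h3 p hp hpW]; exact hpW
  · exact absurd hWH (h2 H hH)

lemma lower (k : ℕ) (hV : Module.finrank F V = 2 * k + 2) (Bn : Finset (Submodule F V))
    (hBn : ∀ H ∈ Bn, Module.finrank F H = 2 * k + 1) (n : ℕ) : ∀ (B0 : Finset (Submodule F V))
    (_ : ∀ p ∈ B0, Module.finrank F p = 1) (_ : Blk k B0 Bn), B0.card = n →
    (Fintype.card F + 1) * Fintype.card F ^ k ≤ B0.card + Bn.card := by
  induction n with
  | zero =>
    intro B0 _ hb h0
    rw [Finset.card_eq_zero] at h0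
    subst h0
    have := only_hyp k hV Bn hBn hb k ⊥ (by simp)
    simpa using this
  | succ n ih =>
    intro B0 hB0 hb hc
    obtain ⟨R, hR⟩ := Finset.card_pos.mp (show 0 < B0.card by omega)
    have hce := Finset.card_erase_add_one hR
    by_cases h : Blk k (B0.erase R) Bn
    · have := ih (B0.erase R) (fun p hp => hB0 p (Finset.mem_of_mem_erase hp)) h (by omega)
      omega
    · obtain ⟨W, h1, h2, h3, h4⟩ := essential k B0 Bn hb R h
      have := (lemC k hV B0 Bn hB0 hBn hb R W hR h1 h2 h3 h4).1
      have h5 := Finset.card_filter_le Bn (fun H => ¬ R ≤ H)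
      omega

lemma main (k : ℕ) (hk : 1 ≤ k) (hV : Module.finrank F V = 2 * k + 2)
    (B0 Bn : Finset (Submodule F V))
    (hB0 : ∀ p ∈ B0, Module.finrank F p = 1) (hBn : ∀ H ∈ Bn, Module.finrank F H = 2 * k + 1)
    (hb : Blk k B0 Bn) (hs : B0.card + Bn.card = (Fintype.card F + 1) * Fintype.card F ^ k)
    (P l₁ R : Submodule F V) (hP : Module.finrank F P = 1) (hPB : P ∉ B0)
    (hl : Module.finrank F l₁ = 2) (hPl : P ≤ l₁) (hR : R ∈ B0) (hRl : R ≤ l₁)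
    (ht : ∀ p ∈ B0, p ≤ l₁ → p = R) (p₁ p₂ : Submodule F V) (hp₁ : p₁ ∈ B0) (hp₂ : p₂ ∈ B0)
    (hne : p₁ ≠ p₂) (he : P ⊔ p₁ = P ⊔ p₂) : False := by
  have hn : ¬ Blk k (B0.erase R) Bn := by
    intro h
    have := lower k hV Bn hBn _ (B0.erase R) (fun p hp => hB0 p (Finset.mem_of_mem_erase hp)) h rfl
    have := Finset.card_erase_add_one hR
    omega
  have hR0 : ∀ H ∈ Bn, ¬ R ≤ H := by
    obtain ⟨W, h1, h2, h3, h4⟩ := essential k B0 Bn hb R hn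
    have h5 := (lemC k hV B0 Bn hB0 hBn hb R W hR h1 h2 h3 h4).1
    have h6 := Finset.card_filter_le Bn (fun H => ¬ R ≤ H)
    exact Finset.card_filter_eq_iff.mp (by omega)
  obtain ⟨W, h1, h2, h3⟩ := greedy k hV B0 hB0 (by omega) R hR (k - 1) l₁ ht (by omega)
  have := (lemC k hV B0 Bn hB0 hBn hb R W hR (hRl.trans h1) h2 h3
    (fun H hH h => hR0 H hH ((hRl.trans h1).trans h))).2 P (hPl.trans h1) hP
    (by rintro rfl; exact hPB hR) ⟨p₁, hp₁, p₂, hp₂, hne, he⟩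
  omega

end S12

/-- Let `B = B0 ∪ Bn` be a blocking set of points and hyperplanes
with respect to `k`-spaces in `PG(2k+1,q)` with `|B| = (q+1)·q^k`.  Then no point
`P ∉ B0` lies both on a tangent line to `B0` (a line containing exactly one point of
`B0`) and on a secant line to `B0` (a line containing at least two points of `B0`). -/
theorem stmt_12 {F : Type} [Field F] [Fintype F] (k : ℕ) (hk : 1 ≤ k)
    (B0 Bn : Set (Submodule F (Fin (2 * k + 2) → F)))
    (hB0 : ∀ p ∈ B0, Module.finrank F p = 1)
    (hBn : ∀ H ∈ Bn, Module.finrank F H = 2 * k + 1)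
    (hblock : ∀ W : Submodule F (Fin (2 * k + 2) → F), Module.finrank F W = k + 1 →
      (∃ p ∈ B0, p ≤ W) ∨ (∃ H ∈ Bn, W ≤ H))
    (hsize : B0.ncard + Bn.ncard = (Fintype.card F + 1) * (Fintype.card F) ^ k) :
    ∀ P l₁ l₂ : Submodule F (Fin (2 * k + 2) → F),
      Module.finrank F P = 1 → P ∉ B0 →
      Module.finrank F l₁ = 2 → P ≤ l₁ → {p ∈ B0 | p ≤ l₁}.ncard = 1 →
      Module.finrank F l₂ = 2 → P ≤ l₂ → ¬ 2 ≤ {p ∈ B0 | p ≤ l₂}.ncard := by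
  classical
  intro P l₁ l₂ hP hPB hl₁ hPl₁ ht hl₂ hPl₂ hsec
  have hfin0 : B0.Finite := Set.toFinite _
  have hfinn : Bn.Finite := Set.toFinite _
  obtain ⟨R, hR⟩ := Set.ncard_eq_one.mp ht
  have hR1 : R ∈ {p ∈ B0 | p ≤ l₁} := by rw [hR]; rfl
  obtain ⟨p₁, hp₁, p₂, hp₂, hne⟩ := (Set.one_lt_ncard (Set.toFinite _)).mp hsec
  have key : ∀ p, p ∈ B0 ∧ p ≤ l₂ → P ⊔ p = l₂ := by
    intro p hp
    apply Submodule.eq_of_le_of_finrank_eq (sup_le hPl₂ hp.2)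
    rw [S12.finrank_sup_point (hB0 p hp.1), hP, hl₂]
    intro h
    exact hPB (S12.point_eq (hB0 p hp.1) hP h ▸ hp.1)
  refine S12.main k hk (by simp) hfin0.toFinset hfinn.toFinset (by simpa using hB0)
    (by simpa using hBn) (by simpa [S12.Blk] using hblock) ?_ P l₁ R hP (by simpa using hPB) hl₁
    hPl₁ (by simpa using hR1.1) hR1.2 ?_ p₁ p₂ (by simpa using hp₁.1) (by simpa using hp₂.1) hne
    ((key p₁ hp₁).trans (key p₂ hp₂).symm)
  · rw [← Set.ncard_eq_toFinset_card, ← Set.ncard_eq_toFinset_card]; exact hsize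
  · intro p hp hpl
    have : p ∈ {p ∈ B0 | p ≤ l₁} := ⟨by simpa using hp, hpl⟩
    rw [hR] at this
    exact this
end

section
/- Let q be a prime power, n ≥ 1, and let S be a nonempty set of points of PG(n,q) such that no point P outside S lies simultaneously on a tangent line to S and on a secant line to S. Then the set Σ consisting of S together with all points P outside S that lie on no tangent line to S is (the point set of) a projective subspace of PG(n,q), and its projective dimension equals the least integer m with |S| ≤ θ_m. -/
/-- `theta q m = (q^(m+1) - 1)/(q - 1)` is the number of points of `PG(m,q)`. -/
def theta (q m : ℕ) : ℕ := (q ^ (m + 1) - 1) / (q - 1)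

section helpers
open Module

variable {F V : Type} [Field F] [AddCommGroup V] [Module F V] [FiniteDimensional F V]

lemma aux_eq_of_le {A B : Submodule F V} (hA : finrank F A = 1) (hB : finrank F B = 1)
    (h : A ≤ B) : A = B :=
  Submodule.eq_of_le_of_finrank_eq h (by rw [hA, hB])

lemma aux_sup {A B : Submodule F V} (hA : finrank F A = 1) (hB : finrank F B = 1)
    (h : A ≠ B) : finrank F (A ⊔ B : Submodule F V) = 2 := by
  have h1 := Submodule.finrank_sup_add_finrank_inf_eq A B
  have h2 : finrank F (A ⊓ B : Submodule F V) ≤ 1 := by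
    rw [← hA]; exact Submodule.finrank_mono inf_le_left
  have h3 : finrank F (A ⊓ B : Submodule F V) ≠ 1 := by
    intro h3
    exact h ((aux_eq_of_le h3 hA inf_le_left).symm.trans (aux_eq_of_le h3 hB inf_le_right))
  omega

lemma aux_line {A B l : Submodule F V} (hA : finrank F A = 1) (hB : finrank F B = 1)
    (h : A ≠ B) (hl : finrank F l = 2) (hAl : A ≤ l) (hBl : B ≤ l) : A ⊔ B = l :=
  Submodule.eq_of_le_of_finrank_eq (sup_le hAl hBl) (by rw [hl, aux_sup hA hB h])

lemma aux_pt {W : Submodule F V} (hW : finrank F W ≠ 0) :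
    ∃ P : Submodule F V, finrank F P = 1 ∧ P ≤ W := by
  have : W ≠ ⊥ := by rintro rfl; simp at hW
  obtain ⟨w, hw, hw0⟩ := Submodule.exists_mem_ne_zero_of_ne_bot this
  exact ⟨F ∙ w, finrank_span_singleton hw0, by simpa using hw⟩

lemma aux_meet {l k T : Submodule F V} (hl : finrank F l = 2) (hk : finrank F k = 2)
    (hT : finrank F T ≤ 3) (hlT : l ≤ T) (hkT : k ≤ T) :
    ∃ P : Submodule F V, finrank F P = 1 ∧ P ≤ l ∧ P ≤ k := by
  have h1 := Submodule.finrank_sup_add_finrank_inf_eq l k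
  have h2 := Submodule.finrank_mono (sup_le hlT hkT)
  obtain ⟨P, hP, hP'⟩ := aux_pt (W := l ⊓ k) (by omega)
  exact ⟨P, hP, hP'.trans inf_le_left, hP'.trans inf_le_right⟩

lemma aux_count [Fintype F] (W : Submodule F V) :
    {P : Submodule F V | finrank F P = 1 ∧ P ≤ W}.ncard
      = ∑ i ∈ Finset.range (finrank F W), Fintype.card F ^ i := by
  have h1 : {P : Submodule F V | finrank F P = 1 ∧ P ≤ W}
      = (fun p : Submodule F W => p.map W.subtype) '' {p : Submodule F W | finrank F p = 1} := by
    ext P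
    constructor
    · rintro ⟨hP, hPW⟩
      refine ⟨P.comap W.subtype, ?_, ?_⟩
      · show finrank F (P.comap W.subtype) = 1
        rw [← hP]
        exact (Submodule.comapSubtypeEquivOfLe hPW).finrank_eq
      · simpa [Submodule.map_comap_subtype] using hPW
    · rintro ⟨p, hp, rfl⟩
      refine ⟨?_, Submodule.map_subtype_le W p⟩
      show finrank F (p.map W.subtype) = 1
      rw [Submodule.finrank_map_subtype_eq]
      exact hp
  rw [h1, Set.ncard_image_of_injective _ (Submodule.map_injective_of_injective W.subtype_injective)]
  rw [← Nat.card_eq_fintype_card, ← Projectivization.card_of_finrank F W rfl]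
  rw [← Nat.card_coe_set_eq]
  exact Nat.card_congr (Projectivization.equivSubmodule F W).symm

lemma aux_theta [Fintype F] (m : ℕ) :
    theta (Fintype.card F) m = ∑ i ∈ Finset.range (m + 1), Fintype.card F ^ i := by
  rw [theta, Nat.geomSum_eq Fintype.one_lt_card]

end helpers

section main
open Module

variable {F V : Type} [Field F] [Fintype F] [AddCommGroup V] [Module F V] [FiniteDimensional F V]

/-- the closure set -/
def Sig (S : Set (Submodule F V)) : Set (Submodule F V) :=
  S ∪ {P : Submodule F V | finrank F P = 1 ∧ P ∉ S ∧
          ∀ l : Submodule F V, finrank F l = 2 → P ≤ l → {p ∈ S | p ≤ l}.ncard ≠ 1}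

lemma sig_pt {S : Set (Submodule F V)} (hSpts : ∀ p ∈ S, finrank F p = 1)
    {P : Submodule F V} (hP : P ∈ Sig S) : finrank F P = 1 := by
  rcases hP with h | h
  · exact hSpts _ h
  · exact h.1

/-- condition on S -/
def Cond (S : Set (Submodule F V)) : Prop :=
  ∀ P : Submodule F V, finrank F P = 1 → P ∉ S →
      ¬ ((∃ l : Submodule F V, finrank F l = 2 ∧ P ≤ l ∧ {p ∈ S | p ≤ l}.ncard = 1) ∧
         (∃ l : Submodule F V, finrank F l = 2 ∧ P ≤ l ∧ 2 ≤ {p ∈ S | p ≤ l}.ncard))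

lemma sig_secant {S : Set (Submodule F V)} (hS : Cond S) {s t l P : Submodule F V}
    (hs : s ∈ S) (ht : t ∈ S) (hst : s ≠ t) (hl : finrank F l = 2) (hsl : s ≤ l) (htl : t ≤ l)
    (hP : finrank F P = 1) (hPl : P ≤ l) : P ∈ Sig S := by
  have : Finite V := Module.finite_of_finite F
  by_cases hPS : P ∈ S
  · exact Or.inl hPS
  refine Or.inr ⟨hP, hPS, fun k hk hPk hk1 => hS P hP hPS ⟨⟨k, hk, hPk, hk1⟩, l, hl, hPl, ?_⟩⟩
  have h2 : ({s, t} : Set (Submodule F V)).ncard = 2 := Set.ncard_pair hst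
  rw [← h2]
  apply Set.ncard_le_ncard _ (Set.toFinite _)
  rintro x (rfl | rfl)
  · exact ⟨hs, hsl⟩
  · exact ⟨ht, htl⟩

lemma sig_other {S : Set (Submodule F V)} (hSpts : ∀ p ∈ S, finrank F p = 1)
    {A s : Submodule F V} (hA : A ∈ Sig S) (hs : s ∈ S) (hne : A ≠ s) :
    ∃ t ∈ S, t ≠ s ∧ t ≤ A ⊔ s := by
  rcases hA with hA | ⟨hA1, hAS, hA⟩
  · exact ⟨A, hA, hne, le_sup_left⟩
  · by_contra! hcon
    refine hA (A ⊔ s) (aux_sup hA1 (hSpts s hs) hne) le_sup_left ?_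
    rw [Set.ncard_eq_one]
    refine ⟨s, ?_⟩
    ext x
    constructor
    · rintro ⟨hx, hx'⟩
      by_contra h
      exact hcon x hx h hx'
    · rintro rfl
      exact ⟨hs, le_sup_right⟩

lemma sig_join {S : Set (Submodule F V)} (hSpts : ∀ p ∈ S, finrank F p = 1) (hS : Cond S)
    {A s P : Submodule F V} (hA : A ∈ Sig S) (hs : s ∈ S)
    (hP : finrank F P = 1) (hPl : P ≤ A ⊔ s) : P ∈ Sig S := by
  by_cases hne : A = s
  · subst hne
    rw [sup_idem] at hPl
    rw [aux_eq_of_le hP (hSpts _ hs) hPl]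
    exact hA
  obtain ⟨t, ht, hts, htl⟩ := sig_other hSpts hA hs hne
  exact sig_secant hS ht hs hts (aux_sup (sig_pt hSpts hA) (hSpts _ hs) hne) htl le_sup_right hP hPl

lemma sig_closed {S : Set (Submodule F V)} (hSpts : ∀ p ∈ S, finrank F p = 1) (hS : Cond S)
    {A B X : Submodule F V} (hA : A ∈ Sig S) (hB : B ∈ Sig S)
    (hX : finrank F X = 1) (hXl : X ≤ A ⊔ B) : X ∈ Sig S := by
  by_contra hXS
  have hA1 := sig_pt hSpts hA
  have hB1 := sig_pt hSpts hB
  have hXS' : X ∉ S := fun h => hXS (Or.inl h)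
  have : ∃ l : Submodule F V, finrank F l = 2 ∧ X ≤ l ∧ {p ∈ S | p ≤ l}.ncard = 1 := by
    by_contra! hcon
    exact hXS (Or.inr ⟨hX, hXS', hcon⟩)
  obtain ⟨l, hl, hXl', hl1⟩ := this
  have hl1' := hl1
  obtain ⟨s, hs⟩ := Set.ncard_eq_one.1 hl1
  have hsm : s ∈ {p ∈ S | p ≤ l} := by rw [hs]; rfl
  obtain ⟨hsS, hsl⟩ := hsm
  have hs1 := hSpts s hsS
  have hXs : X ≠ s := by rintro rfl; exact hXS' hsS
  by_cases hAs : A = s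
  · subst hAs
    rw [sup_comm] at hXl
    exact hXS (sig_join hSpts hS hB hsS hX hXl)
  obtain ⟨t, ht, hts, htl⟩ := sig_other hSpts hA hsS hAs
  have ht1 := hSpts t ht
  by_cases hBt : B = t
  · subst hBt
    exact hXS (sig_join hSpts hS hA ht hX hXl)
  have hlX : X ⊔ s = l := aux_line hX hs1 hXs hl hXl' hsl
  have hT : finrank F ((A ⊔ s) ⊔ B : Submodule F V) ≤ 3 := by
    have h1 := Submodule.finrank_add_le_finrank_add_finrank (A ⊔ s) B
    have h2 := aux_sup hA1 hs1 hAs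
    omega
  have hXT : X ≤ (A ⊔ s) ⊔ B := hXl.trans (sup_le (le_sup_left.trans le_sup_left) le_sup_right)
  have hsT : s ≤ (A ⊔ s) ⊔ B := le_sup_right.trans le_sup_left
  obtain ⟨Y, hY, hYl, hYk⟩ := aux_meet hl (aux_sup hB1 ht1 hBt) hT
    (hlX ▸ sup_le hXT hsT) (sup_le le_sup_right (htl.trans le_sup_left))
  have hYS : Y ∈ S := by
    rcases sig_join hSpts hS hB ht hY hYk with h | h
    · exact h
    · exact absurd hl1' (h.2.2 l hl hYl)
  have hYs : Y = s := by
    have : Y ∈ {p ∈ S | p ≤ l} := ⟨hYS, hYl⟩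
    rw [hs] at this; exact this
  subst hYs
  have e1 := aux_line ht1 hs1 hts (aux_sup hB1 ht1 hBt) le_sup_right hYk
  have e2 := aux_line ht1 hs1 hts (aux_sup hA1 hs1 hAs) htl le_sup_right
  have hBA : B ≤ A ⊔ Y := by rw [← e2, e1]; exact le_sup_left
  exact hXS (sig_join hSpts hS hA hsS hX (hXl.trans (sup_le le_sup_left hBA)))

lemma sig_subspace {S : Set (Submodule F V)} (hSpts : ∀ p ∈ S, finrank F p = 1) (hS : Cond S) :
    ∃ W : Submodule F V, Sig S = {P : Submodule F V | finrank F P = 1 ∧ P ≤ W} := by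
  have key : ∀ v : V, v ≠ 0 → ∀ P : Submodule F V, finrank F P = 1 → v ∈ P → P = F ∙ v := by
    intro v hv P hP hvP
    exact (aux_eq_of_le (finrank_span_singleton hv) hP (by simpa using hvP)).symm
  let W : Submodule F V :=
    { carrier := {v | v = 0 ∨ (F ∙ v) ∈ Sig S}
      zero_mem' := Or.inl rfl
      add_mem' := by
        rintro a b (rfl | ha) (rfl | hb)
        · left; simp
        · right; simpa using hb
        · right; simpa using ha
        · by_cases hab : a + b = 0
          · exact Or.inl hab
          · right
            refine sig_closed hSpts hS ha hb (finrank_span_singleton hab) ?_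
            rw [Submodule.span_singleton_le_iff_mem]
            exact Submodule.add_mem_sup (Submodule.mem_span_singleton_self a)
              (Submodule.mem_span_singleton_self b)
      smul_mem' := by
        rintro c a (rfl | ha)
        · left; simp
        · by_cases hc : c = 0
          · left; simp [hc]
          · right
            rwa [Submodule.span_singleton_smul_eq (IsUnit.mk0 c hc)] }
  refine ⟨W, ?_⟩
  ext P
  constructor
  · intro hP
    have hP1 := sig_pt hSpts hP
    refine ⟨hP1, fun v hv => ?_⟩
    by_cases hv0 : v = 0
    · exact Or.inl hv0
    · right
      rwa [← key v hv0 P hP1 hv]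
  · rintro ⟨hP1, hPW⟩
    have : P ≠ ⊥ := by rintro rfl; simp at hP1
    obtain ⟨w, hw, hw0⟩ := Submodule.exists_mem_ne_zero_of_ne_bot this
    rw [key w hw0 P hP1 hw]
    exact (hPW hw).resolve_left hw0

lemma sig_lower {S : Set (Submodule F V)} (hSpts : ∀ p ∈ S, finrank F p = 1)
    {W : Submodule F V} (hW : Sig S = {P : Submodule F V | finrank F P = 1 ∧ P ≤ W})
    (hSne : S.Nonempty) {m : ℕ} (hm : finrank F W = m + 1) :
    ∑ i ∈ Finset.range m, Fintype.card F ^ i < S.ncard := by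
  have : Finite V := Module.finite_of_finite F
  obtain ⟨s, hs⟩ := hSne
  have hs1 := hSpts s hs
  have hsW : s ≤ W := by
    have : s ∈ Sig S := Or.inl hs
    rw [hW] at this; exact this.2
  have hdim : m ≤ finrank F (W.map s.mkQ) := by
    have h1 := LinearMap.finrank_range_add_finrank_ker (s.mkQ.domRestrict W)
    rw [LinearMap.range_domRestrict, LinearMap.ker_domRestrict, Submodule.ker_mkQ] at h1
    have h2 : finrank F (Submodule.comap W.subtype s) = 1 := by
      rw [← hs1]; exact (Submodule.comapSubtypeEquivOfLe hsW).finrank_eq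
    have h3 : finrank F (s.submoduleOf W) = 1 := h2
    omega
  have hle : ∑ i ∈ Finset.range m, Fintype.card F ^ i ≤ (S \ {s}).ncard := by
    calc _ ≤ ∑ i ∈ Finset.range (finrank F (W.map s.mkQ)), Fintype.card F ^ i :=
          Finset.sum_le_sum_of_subset (Finset.range_mono hdim)
      _ = _ := (aux_count (W.map s.mkQ)).symm
      _ ≤ ((fun P : Submodule F V => P.map s.mkQ) '' (S \ {s})).ncard := by
          apply Set.ncard_le_ncard _ (Set.toFinite _)
          rintro Q ⟨hQ1, hQW⟩
          have : Q ≠ ⊥ := by rintro rfl; simp at hQ1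
          obtain ⟨x, hx, hx0⟩ := Submodule.exists_mem_ne_zero_of_ne_bot this
          obtain ⟨w, hw, rfl⟩ := hQW hx
          have hws : w ∉ s := by
            intro h; apply hx0; simpa using h
          have hw0 : w ≠ 0 := by rintro rfl; exact hws s.zero_mem
          have hA : (F ∙ w) ∈ Sig S := by
            rw [hW]; exact ⟨finrank_span_singleton hw0, by simpa using hw⟩
          have hAs : (F ∙ w) ≠ s := by
            rintro rfl; exact hws (Submodule.mem_span_singleton_self w)
          obtain ⟨t, ht, hts, htl⟩ := sig_other hSpts hA hs hAs
          refine ⟨t, ⟨ht, hts⟩, ?_⟩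
          have h1 : t.map s.mkQ ≤ Q := by
            refine (Submodule.map_mono htl).trans ?_
            rw [Submodule.map_sup, Submodule.mkQ_map_self, sup_bot_eq, Submodule.map_span_le]
            simpa using hx
          have h2 : t.map s.mkQ ≠ ⊥ := by
            intro h
            rw [← le_bot_iff, Submodule.map_le_iff_le_comap, Submodule.comap_bot, Submodule.ker_mkQ] at h
            exact hts (aux_eq_of_le (hSpts t ht) hs1 h)
          have h3 := Submodule.finrank_mono h1
          have h4 : finrank F (t.map s.mkQ) ≠ 0 := by
            rwa [Ne, Submodule.finrank_eq_zero]
          have h5 : finrank F (t.map s.mkQ) = finrank F Q := by omega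
          exact Submodule.eq_of_le_of_finrank_eq h1 h5
      _ ≤ _ := Set.ncard_image_le (Set.toFinite _)
  have := Set.ncard_sdiff_singleton_lt_of_mem hs (Set.toFinite S)
  omega

end main

/-- Let `S` be a nonempty set of points of `PG(n,q)` such that no
point outside `S` lies both on a tangent line to `S` and on a secant line to `S`.
Then `S` together with all points outside `S` lying on no tangent line to `S` is the
point set of a projective subspace whose projective dimension is the least `m` with
`|S| ≤ θ_m`. -/
theorem stmt_13 {F : Type} [Field F] [Fintype F] (n : ℕ) (hn : 1 ≤ n)
    (S : Set (Submodule F (Fin (n + 1) → F)))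
    (hSpts : ∀ p ∈ S, Module.finrank F p = 1)
    (hSne : S.Nonempty)
    (hS : ∀ P : Submodule F (Fin (n + 1) → F), Module.finrank F P = 1 → P ∉ S →
      ¬ ((∃ l : Submodule F (Fin (n + 1) → F), Module.finrank F l = 2 ∧ P ≤ l ∧ {p ∈ S | p ≤ l}.ncard = 1) ∧
         (∃ l : Submodule F (Fin (n + 1) → F), Module.finrank F l = 2 ∧ P ≤ l ∧ 2 ≤ {p ∈ S | p ≤ l}.ncard))) :
    ∃ (W : Submodule F (Fin (n + 1) → F)) (m : ℕ),
      IsLeast {m : ℕ | S.ncard ≤ theta (Fintype.card F) m} m ∧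
      Module.finrank F W = m + 1 ∧
      S ∪ {P : Submodule F (Fin (n + 1) → F) | Module.finrank F P = 1 ∧ P ∉ S ∧
          ∀ l : Submodule F (Fin (n + 1) → F), Module.finrank F l = 2 → P ≤ l → {p ∈ S | p ≤ l}.ncard ≠ 1} =
        {P : Submodule F (Fin (n + 1) → F) | Module.finrank F P = 1 ∧ P ≤ W} := by

  have : Finite (Submodule F (Fin (n + 1) → F)) := inferInstance
  obtain ⟨W, hW⟩ := sig_subspace hSpts (show Cond S from hS)
  obtain ⟨s, hs⟩ := hSne
  have hsub : S ⊆ {P : Submodule F (Fin (n + 1) → F) | Module.finrank F P = 1 ∧ P ≤ W} := by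
    rw [← hW]; exact Set.subset_union_left
  have hpos : 1 ≤ Module.finrank F W := by
    have h1 := Submodule.finrank_mono (hsub hs).2
    rw [hSpts s hs] at h1; exact h1
  obtain ⟨m, hm⟩ := Nat.exists_eq_add_of_le' hpos
  refine ⟨W, m, ⟨?_, ?_⟩, hm, hW⟩
  · show S.ncard ≤ theta (Fintype.card F) m
    rw [aux_theta, ← hm, ← aux_count W]
    exact Set.ncard_le_ncard hsub (Set.toFinite _)
  · intro k hk
    have hk' : S.ncard ≤ theta (Fintype.card F) k := hk
    rw [aux_theta] at hk'
    have h1 := sig_lower hSpts hW ⟨s, hs⟩ hm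
    by_contra hlt
    have h2 : ∑ i ∈ Finset.range (k + 1), Fintype.card F ^ i
        ≤ ∑ i ∈ Finset.range m, Fintype.card F ^ i :=
      Finset.sum_le_sum_of_subset (Finset.range_mono (by omega))
    omega
end

section
/- Let q be a prime power, k ≥ 1, and n = 2k+1. Let B = B_0 ∪ B_{n-1} be a blocking set with respect to k-spaces in PG(2k+1,q) consisting of points and hyperplanes. Assume that B_0 is contained in a (k+1)-space Σ and let P be a point of Σ not in B_0. Let B_P be the set of hyperplanes of B_{n-1} that contain P but do not contain Σ. Then at least one of the following holds: (1) there exists a k-space ρ ⊂ Σ such that B_P contains every hyperplane π with π ∩ Σ = ρ, in which case |B_P| ≥ q^k; or (2) |B_P| ≥ q^{k-1}·(q+1). -/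
section comb
variable {F : Type*} [Field F] [Fintype F] {Y : Type*} [AddCommGroup Y] [Module F Y] [Finite Y]

/-- The elements of `X` lying over the line `v0 v1` minus the point `v0`. -/
def lineSet {W : Type*} [AddCommGroup W] [Module F W] (X : Set (W × Y)) (v0 v1 : W) :
    Set (W × Y) := {x ∈ X | ∃ s t : F, s ≠ 0 ∧ x.1 = s • v1 + t • v0}

lemma line_count {W : Type*} [AddCommGroup W] [Module F W] [Finite W] (X : Set (W × Y))
    (hs : ∀ c : F, c ≠ 0 → ∀ v a, (v, a) ∈ X → (c • v, c • a) ∈ X)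
    (v0 v1 : W) (a0 : Y) (hli : ∀ s t : F, s • v1 + t • v0 = 0 → s = 0 ∧ t = 0)
    (h : ∀ b : Y, ∃ c : F, (v1 + c • v0, b + c • a0) ∈ X) :
    (Fintype.card F - 1) * Nat.card Y ≤ (lineSet (F := F) X v0 v1).ncard := by
  classical
  choose c hc using h
  have : Nat.card (Fˣ × Y) = (Fintype.card F - 1) * Nat.card Y := by
    rw [Nat.card_prod, Nat.card_eq_fintype_card, Fintype.card_units]
  rw [← this, ← Nat.card_coe_set_eq]
  let f : Fˣ × Y → lineSet (F := F) X v0 v1 := fun p =>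
    ⟨((p.1 : F) • (v1 + c p.2 • v0), (p.1 : F) • (p.2 + c p.2 • a0)),
      hs _ p.1.ne_zero _ _ (hc _), p.1, p.1 * c p.2, p.1.ne_zero, by simp [smul_add, mul_smul]⟩
  apply Nat.card_le_card_of_injective f
  rintro ⟨s, b⟩ ⟨s', b'⟩ hh
  have h1 : (s : F) • (v1 + c b • v0) = (s' : F) • (v1 + c b' • v0) :=
    congrArg (fun z => z.1.1) hh
  have h2 : (s : F) • (b + c b • a0) = (s' : F) • (b' + c b' • a0) :=
    congrArg (fun z => z.1.2) hh
  have h3 := hli (s - s') (s * c b - s' * c b') (by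
    rw [smul_add, smul_add, smul_smul, smul_smul] at h1
    rw [sub_smul, sub_smul]
    rw [← sub_eq_zero] at h1
    rw [← h1]; abel)
  have e : s = s' := Units.ext (sub_eq_zero.1 h3.1)
  subst e
  have e2 : c b = c b' := by
    have := h3.2
    rw [← mul_sub] at this
    exact sub_eq_zero.1 ((mul_eq_zero.1 this).resolve_left s.ne_zero)
  rw [e2] at h2
  have h4 := smul_right_injective Y s.ne_zero h2
  simpa using h4

lemma pt_count {W : Type*} [AddCommGroup W] [Module F W] [Finite W] (X : Set (W × Y))
    (hs : ∀ c : F, c ≠ 0 → ∀ v a, (v, a) ∈ X → (c • v, c • a) ∈ X)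
    (v0 : W) (hv0 : v0 ≠ 0) :
    (Fintype.card F - 1) * {a | (v0, a) ∈ X}.ncard ≤
      {x ∈ X | ∃ t : F, x.1 = t • v0}.ncard := by
  classical
  have : Nat.card (Fˣ × {a | (v0, a) ∈ X}) = (Fintype.card F - 1) * {a | (v0, a) ∈ X}.ncard := by
    rw [Nat.card_prod, Nat.card_eq_fintype_card, Fintype.card_units, Nat.card_coe_set_eq]
  rw [← this, ← Nat.card_coe_set_eq]
  let f : Fˣ × {a | (v0, a) ∈ X} → {x ∈ X | ∃ t : F, x.1 = t • v0} := fun p =>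
    ⟨((p.1 : F) • v0, (p.1 : F) • p.2.1),
      hs _ p.1.ne_zero _ _ p.2.2, p.1, rfl⟩
  apply Nat.card_le_card_of_injective f
  rintro ⟨s, b, hb⟩ ⟨s', b', hb'⟩ hh
  simp only [f, Subtype.mk.injEq, Prod.mk.injEq] at hh
  obtain ⟨h1, h2⟩ := hh
  have e : s = s' := Units.ext (smul_left_injective F hv0 h1)
  subst e
  have h4 := smul_right_injective Y s.ne_zero h2
  simpa using h4

set_option linter.unusedSectionVars false in
lemma fib_count {W : Type*} [Fintype W] (X : Set (W × Y)) :
    X.ncard = ∑ v : W, {a | (v, a) ∈ X}.ncard := by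
  classical
  have : Fintype Y := Fintype.ofFinite Y
  have e : X ≃ Σ v : W, {a | (v, a) ∈ X} :=
    { toFun := fun x => ⟨x.1.1, x.1.2, x.2⟩
      invFun := fun x => ⟨(x.1, x.2.1), x.2.2⟩
      left_inv := fun x => rfl
      right_inv := fun x => rfl }
  rw [← Nat.card_coe_set_eq, Nat.card_congr e, Nat.card_sigma]
  exact Finset.sum_congr rfl (fun v _ => Nat.card_coe_set_eq _)

lemma base_case {W : Type*} [AddCommGroup W] [Module F W] [Finite W]
    (hW : Module.finrank F W = 2) (R : ℕ) (hR : Nat.card Y = Fintype.card F * R)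
    (X : Set (W × Y)) (h0 : ∀ v a, (v, a) ∈ X → v ≠ 0)
    (hs : ∀ c : F, c ≠ 0 → ∀ v a, (v, a) ∈ X → (c • v, c • a) ∈ X)
    (hb : ∀ A : W →ₗ[F] Y, ∃ v, (v, A v) ∈ X) :
    (∃ v ≠ 0, ∀ a, (v, a) ∈ X) ∨
      (Fintype.card F - 1) * ((Fintype.card F + 1) * R) ≤ X.ncard := by
  classical
  by_cases hfull : ∃ v ≠ 0, ∀ a, (v, a) ∈ X
  · exact Or.inl hfull
  right
  push Not at hfull
  have hfd : Module.Finite F W := Module.Finite.of_finite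
  have : Fintype W := Fintype.ofFinite W
  have key : ∀ v0 : W, v0 ≠ 0 → (Fintype.card F - 1) * (Fintype.card F * R) +
      (Fintype.card F - 1) * {a | (v0, a) ∈ X}.ncard ≤ X.ncard := by
    intro v0 hv0
    obtain ⟨a0, ha0⟩ := hfull v0 hv0
    obtain ⟨v1, hv1⟩ : ∃ v1, v1 ∉ Submodule.span F {v0} := by
      by_contra! hcon
      have h1 : Submodule.span F {v0} = ⊤ := by
        rw [eq_top_iff]; intro x _; exact hcon x
      have h2 := finrank_span_singleton (K := F) hv0
      rw [h1, finrank_top] at h2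
      omega
    have hli : ∀ s t : F, s • v1 + t • v0 = 0 → s = 0 ∧ t = 0 := by
      intro s t hst
      have hs0 : s = 0 := by
        by_contra hs0
        apply hv1
        rw [Submodule.mem_span_singleton]
        refine ⟨- s⁻¹ * t, ?_⟩
        rw [mul_smul, eq_neg_of_add_eq_zero_right hst, smul_neg, neg_smul, neg_neg, smul_smul,
          inv_mul_cancel₀ hs0, one_smul]
      subst hs0
      simpa [hv0] using hst
    have hli2 : LinearIndependent F ![v1, v0] := LinearIndependent.pair_iff.2 hli
    let bs := basisOfLinearIndependentOfCardEqFinrank hli2 (by simp [hW])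
    have hl := line_count X hs v0 v1 a0 hli (by
      intro b
      obtain ⟨v, hv⟩ := hb (bs.constr F ![b, a0])
      have e1 : bs.constr F ![b, a0] v1 = b := by
        have := bs.constr_basis F ![b, a0] 0
        simpa [bs] using this
      have e0 : bs.constr F ![b, a0] v0 = a0 := by
        have := bs.constr_basis F ![b, a0] 1
        simpa [bs] using this
      have hvv := bs.sum_repr v
      rw [Fin.sum_univ_two] at hvv
      generalize bs.repr v 0 = s at hvv
      generalize bs.repr v 1 = t at hvv
      have hvv' : v = s • v1 + t • v0 := by simpa [bs] using hvv.symm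
      rw [hvv', map_add, map_smul, map_smul, e1, e0] at hv
      by_cases hs0 : s = 0
      · exfalso
        subst hs0
        simp only [zero_smul, zero_add] at hv
        have ht : t ≠ 0 := by
          rintro rfl
          exact h0 _ _ hv (by simp)
        have := hs t⁻¹ (inv_ne_zero ht) _ _ hv
        rw [smul_smul, smul_smul, inv_mul_cancel₀ ht, one_smul, one_smul] at this
        exact ha0 this
      · refine ⟨s⁻¹ * t, ?_⟩
        have := hs s⁻¹ (inv_ne_zero hs0) _ _ hv
        simpa only [smul_add, smul_smul, inv_mul_cancel₀ hs0, one_smul] using this)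
    have hp := pt_count X hs v0 hv0
    rw [hR] at hl
    refine (add_le_add hl hp).trans ?_
    rw [← Set.ncard_union_eq ?_ (Set.toFinite _) (Set.toFinite _)]
    · exact Set.ncard_le_ncard (by rintro x (h | h) <;> exact h.1) (Set.toFinite _)
    · rw [Set.disjoint_left]
      rintro x ⟨_, s, t, hs0, hx⟩ ⟨_, t', hx'⟩
      apply hs0
      refine (hli s (t - t') ?_).1
      rw [sub_smul, ← hx', hx]; abel
  have hsum := Finset.sum_le_sum (s := Finset.univ.erase (0:W)) (fun v hv => key v (by simpa using hv))
  rw [Finset.sum_add_distrib, ← Finset.mul_sum (f := fun v => {a | (v, a) ∈ X}.ncard)] at hsum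
  have hz : {a | ((0:W), a) ∈ X}.ncard = 0 := by
    rw [Set.ncard_eq_zero]
    ext a
    simp only [Set.mem_ofPred_eq, Set.mem_empty_iff_false, iff_false]
    intro h; exact h0 _ _ h rfl
  rw [Finset.sum_erase (f := fun v => {a | (v, a) ∈ X}.ncard) _ hz, ← fib_count] at hsum
  simp only [Finset.sum_const, smul_eq_mul, Finset.card_erase_of_mem (Finset.mem_univ _),
    Finset.card_univ] at hsum
  have hcW : Fintype.card W = Fintype.card F ^ 2 := by
    rw [Module.card_eq_pow_finrank (K := F), hW]
  rw [hcW] at hsum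
  have hq : 1 < Fintype.card F := Fintype.one_lt_card
  generalize X.ncard = N at *
  obtain ⟨r, hr⟩ : ∃ r, Fintype.card F = r + 2 := ⟨_, (Nat.sub_add_cancel hq).symm⟩
  rw [hr] at hsum ⊢
  have e1 : (r + 2) ^ 2 - 1 = (r + 1) * (r + 3) := by
    rw [Nat.sub_eq_iff_eq_add (by nlinarith)]; ring
  have e2 : r + 2 - 1 = r + 1 := rfl
  rw [e1, e2] at hsum
  rw [e2]
  have h3 : (r + 1) * (r + 2) * ((r + 1) * ((r + 2 + 1) * R)) ≤ (r + 1) * (r + 2) * N := by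
    nlinarith
  exact Nat.le_of_mul_le_mul_left h3 (by positivity)

set_option linter.unusedVariables false in
lemma comb_main (m : ℕ) : ∀ {W : Type*} [AddCommGroup W] [Module F W] [Finite W]
    (hW : Module.finrank F W = m + 2) (R : ℕ) (hR : Nat.card Y = Fintype.card F * R)
    (X : Set (W × Y)) (h0 : ∀ v a, (v, a) ∈ X → v ≠ 0)
    (hs : ∀ c : F, c ≠ 0 → ∀ v a, (v, a) ∈ X → (c • v, c • a) ∈ X)
    (hb : ∀ A : W →ₗ[F] Y, ∃ v, (v, A v) ∈ X),
    (∃ v ≠ 0, ∀ a, (v, a) ∈ X) ∨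
      (Fintype.card F - 1) * ((Fintype.card F + 1) * R) ≤ X.ncard := by
  classical
  induction m with
  | zero => intro W _ _ _ hW R hR X h0 hs hb; exact base_case hW R hR X h0 hs hb
  | succ m ih =>
    intro W _ _ _ hW R hR X h0 hs hb
    by_contra hcon
    push Not at hcon
    obtain ⟨hfull, hlt⟩ := hcon
    have hfd : Module.Finite F W := Module.Finite.of_finite
    have : Nontrivial W := Module.nontrivial_of_finrank_pos (R := F) (by omega)
    obtain ⟨v0, hv0⟩ := exists_ne (0 : W)
    have step : ∀ a0, (v0, a0) ∉ X → ∃ v1, v1 ∉ Submodule.span F {v0} ∧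
        ∀ b : Y, ∃ c : F, (v1 + c • v0, b + c • a0) ∈ X := by
      intro a0 ha0
      obtain ⟨A0, hA0⟩ : ∃ A0 : W →ₗ[F] Y, A0 v0 = a0 := by
        obtain ⟨f, _, hf⟩ := LinearMap.exists_extend_of_notMem
          (p := (⊥ : Submodule F W)) (v := v0) (0 : _ →ₗ[F] Y) (by simpa using hv0) a0
        exact ⟨f, hf⟩
      let L := Submodule.span F {v0}
      let g : W × Y → (W ⧸ L) × Y := fun x => (L.mkQ x.1, x.2 - A0 x.1)
      let X' : Set ((W ⧸ L) × Y) := g '' {x ∈ X | x.1 ∉ L}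
      have hX' : X'.ncard ≤ X.ncard :=
        (Set.ncard_image_le (Set.toFinite _)).trans
          (Set.ncard_le_ncard (fun x hx => hx.1) (Set.toFinite _))
      have hfr : Module.finrank F (W ⧸ L) = m + 2 := by
        have h1 := L.finrank_quotient_add_finrank
        have h2 := finrank_span_singleton (K := F) hv0
        change Module.finrank F L = 1 at h2
        omega
      have : Finite (W ⧸ L) := Finite.of_surjective _ L.mkQ_surjective
      have := ih hfr R hR X' ?_ ?_ ?_
      · rcases this with ⟨u, hu, hall⟩ | h
        · obtain ⟨v1, rfl⟩ := L.mkQ_surjective u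
          refine ⟨v1, ?_, ?_⟩
          · intro h
            exact hu (by simpa using h)
          · intro b
            obtain ⟨⟨v, a⟩, ⟨hx, _⟩, hg⟩ := hall (b - A0 v1)
            simp only [g, Prod.mk.injEq] at hg
            obtain ⟨g1, g2⟩ := hg
            have g3 : v - v1 ∈ L := (Submodule.Quotient.eq L).1 g1
            obtain ⟨c, hc⟩ := Submodule.mem_span_singleton.1 g3
            refine ⟨c, ?_⟩
            have ev : v = v1 + c • v0 := by rw [hc]; abel
            have ea : a = b + c • a0 := by
              rw [sub_eq_iff_eq_add] at g2
              rw [g2, ev, map_add, map_smul, hA0]; abel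
            rw [← ev, ← ea]; exact hx
        · omega
      · rintro u a ⟨⟨v, b⟩, ⟨_, hv⟩, hg⟩ rfl
        simp only [g, Prod.mk.injEq] at hg
        exact hv (by simpa using hg.1)
      · rintro c hc u a ⟨⟨v, b⟩, ⟨hx, hv⟩, hg⟩
        simp only [g, Prod.mk.injEq] at hg
        refine ⟨(c • v, c • b), ⟨hs c hc _ _ hx, ?_⟩, ?_⟩
        · intro h
          exact hv ((Submodule.smul_mem_iff L hc).1 h)
        · simp only [g, Prod.mk.injEq]
          rw [map_smul, map_smul, ← smul_sub, hg.1, hg.2]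
          exact ⟨rfl, rfl⟩
      · intro B
        obtain ⟨v, hv⟩ := hb (A0 + B ∘ₗ L.mkQ)
        refine ⟨L.mkQ v, (v, _), ⟨hv, ?_⟩, ?_⟩
        · intro hvL
          obtain ⟨c, rfl⟩ := Submodule.mem_span_singleton.1 hvL
          have hc : c ≠ 0 := by
            rintro rfl
            exact h0 _ _ hv (by simp)
          have h1 := hs c⁻¹ (inv_ne_zero hc) _ _ hv
          have h2 : L.mkQ v0 = 0 := by simp [L, Submodule.mem_span_singleton_self]
          rw [LinearMap.add_apply, LinearMap.comp_apply, map_smul, map_smul, h2, smul_zero,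
            map_zero, add_zero, hA0, smul_smul, smul_smul, inv_mul_cancel₀ hc, one_smul,
            one_smul] at h1
          exact ha0 h1
        · simp [g]
    have hlin : ∀ v1, v1 ∉ Submodule.span F {v0} →
        ∀ s t : F, s • v1 + t • v0 = 0 → s = 0 ∧ t = 0 := by
      intro v1 hv1 s t hst
      have hs0 : s = 0 := by
        by_contra hs0
        apply hv1
        rw [Submodule.mem_span_singleton]
        refine ⟨- s⁻¹ * t, ?_⟩
        rw [mul_smul, eq_neg_of_add_eq_zero_right hst, smul_neg, neg_smul, neg_neg, smul_smul,
          inv_mul_cancel₀ hs0, one_smul]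
      subst hs0
      simpa [hv0] using hst
    obtain ⟨a0, ha0⟩ := hfull v0 hv0
    obtain ⟨v1, hv1, hf1⟩ := step a0 ha0
    let l := Submodule.span F {v1, v0}
    have hq : 1 < Fintype.card F := Fintype.one_lt_card
    have hv0l : v0 ∈ l := Submodule.subset_span (by simp)
    have same : ∀ a, (v0, a) ∉ X → ∃ v ∈ l,
        ∀ b : Y, ∃ c : F, (v + c • v0, b + c • a) ∈ X := by
      intro a ha
      obtain ⟨v2, hv2, hf2⟩ := step a ha
      refine ⟨v2, ?_, hf2⟩
      by_contra hv2l
      have c1 := line_count X hs v0 v1 a0 (hlin v1 hv1) hf1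
      have c2 := line_count X hs v0 v2 a (hlin v2 hv2) hf2
      have c3 := Set.ncard_union_eq (s := lineSet (F := F) X v0 v1)
        (t := lineSet (F := F) X v0 v2) (by
        rw [Set.disjoint_left]
        rintro x ⟨_, s, t, hs0, hx⟩ ⟨_, s', t', hs0', hx'⟩
        apply hv2l
        have : s' • v2 = s • v1 + (t - t') • v0 := by
          rw [sub_smul, ← add_sub_assoc, ← hx, hx']; abel
        rw [← Submodule.smul_mem_iff l hs0', this]
        exact l.add_mem (l.smul_mem _ (Submodule.subset_span (by simp))) (l.smul_mem _ hv0l))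
        (Set.toFinite _) (Set.toFinite _)
      have c4 : (lineSet (F := F) X v0 v1 ∪ lineSet (F := F) X v0 v2).ncard ≤ X.ncard :=
        Set.ncard_le_ncard (by rintro x (h | h) <;> exact h.1) (Set.toFinite _)
      have c5 : (Fintype.card F - 1) * ((Fintype.card F + 1) * R) ≤
          (Fintype.card F - 1) * (Nat.card Y + Nat.card Y) := by
        apply Nat.mul_le_mul_left
        rw [hR]; nlinarith
      rw [mul_add] at c5
      omega
    have hfl : Module.finrank F l = 2 := by
      have hli2 : LinearIndependent F ![v1, v0] := LinearIndependent.pair_iff.2 (hlin v1 hv1)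
      have := finrank_span_eq_card hli2
      rw [Matrix.range_cons, Matrix.range_cons, Matrix.range_empty, Set.union_empty,
        Set.singleton_union] at this
      simpa [l] using this
    let g : l × Y → W × Y := fun x => (x.1, x.2)
    have hg : Function.Injective g := by
      rintro ⟨x, a⟩ ⟨y, b⟩ h
      simpa [g] using h
    have := base_case hfl R hR (g ⁻¹' X) ?_ ?_ ?_
    · rcases this with ⟨v, hv, hall⟩ | h
      · obtain ⟨a, ha⟩ := hfull v (by simpa using hv)
        exact ha (hall a)
      · have h2 : (g ⁻¹' X).ncard ≤ X.ncard := by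
          rw [← Set.ncard_image_of_injective _ hg]
          exact Set.ncard_le_ncard (Set.image_preimage_subset _ _) (Set.toFinite _)
        omega
    · rintro v a h rfl
      exact h0 _ _ h rfl
    · intro c hc v a h
      exact hs c hc _ _ h
    · intro A
      by_cases hA : (v0, A ⟨v0, hv0l⟩) ∈ X
      · exact ⟨⟨v0, hv0l⟩, hA⟩
      · obtain ⟨v, hvl, hf⟩ := same _ hA
        obtain ⟨c, hc⟩ := hf (A ⟨v, hvl⟩)
        refine ⟨⟨v, hvl⟩ + c • ⟨v0, hv0l⟩, ?_⟩
        simp only [g, Set.mem_preimage, map_add, map_smul]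
        exact hc
end comb


section geom
variable {F : Type*} [Field F] {V : Type*} [AddCommGroup V] [Module F V]

lemma exists_smul_of_ker_le (f g : Module.Dual F V) (h : LinearMap.ker f ≤ LinearMap.ker g) :
    ∃ c : F, g = c • f := by
  have := mem_span_of_iInf_ker_le_ker (ι := Unit) (L := fun _ => f) (K := g) (by simpa using h)
  rw [Set.range_const, Submodule.mem_span_singleton] at this
  obtain ⟨c, hc⟩ := this
  exact ⟨c, hc.symm⟩

lemma exists_ker_eq [FiniteDimensional F V] (H : Submodule F V)
    (hH : Module.finrank F H + 1 = Module.finrank F V) :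
    ∃ f : Module.Dual F V, f ≠ 0 ∧ LinearMap.ker f = H := by
  have h1 := Subspace.finrank_add_finrank_dualAnnihilator_eq H
  have h2 : Module.finrank F H.dualAnnihilator = 1 := by omega
  obtain ⟨f, hf, hf0⟩ := Submodule.exists_mem_ne_zero_of_ne_bot (p := H.dualAnnihilator) (by
    intro h
    rw [h, finrank_bot] at h2
    omega)
  refine ⟨f, hf0, ?_⟩
  symm
  apply Submodule.eq_of_le_of_finrank_eq
  · intro x hx
    exact (Submodule.mem_dualAnnihilator f).1 hf x hx
  · have := Module.Dual.finrank_ker_add_one_of_ne_zero hf0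
    omega

/-- Each hyperplane is the kernel of at most `q - 1` functionals. -/
lemma ker_count [Fintype F] [Finite V] (S : Set (Submodule F V)) (T : Set (Module.Dual F V))
    (hT : ∀ f ∈ T, f ≠ 0 ∧ LinearMap.ker f ∈ S) :
    T.ncard ≤ (Fintype.card F - 1) * S.ncard := by
  classical
  have hfin : Finite (Module.Dual F V) := 
    Finite.of_injective (fun f : Module.Dual F V => (f : V → F)) DFunLike.coe_injective
  have : Nat.card (Fˣ × S) = (Fintype.card F - 1) * S.ncard := by
    rw [Nat.card_prod, Nat.card_eq_fintype_card, Fintype.card_units, Nat.card_coe_set_eq]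
  rw [← this, ← Nat.card_coe_set_eq]
  have hch : ∀ s : S, ∃ g : Module.Dual F V, (∃ f ∈ T, LinearMap.ker f = s) →
      LinearMap.ker g = s := by
    intro s
    by_cases h : ∃ f ∈ T, LinearMap.ker f = s
    · obtain ⟨f, _, hf⟩ := h
      exact ⟨f, fun _ => hf⟩
    · exact ⟨0, fun h' => absurd h' h⟩
  choose g hg using hch
  have h2 : ∀ t : T, ∃ c : Fˣ, t.1 = (c : F) • g ⟨LinearMap.ker t.1, (hT _ t.2).2⟩ := by
    intro t
    obtain ⟨c, hc⟩ := exists_smul_of_ker_le (g ⟨LinearMap.ker t.1, (hT _ t.2).2⟩) t.1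
      (hg ⟨LinearMap.ker t.1, (hT _ t.2).2⟩ ⟨t.1, t.2, rfl⟩).le
    have hc0 : c ≠ 0 := by
      rintro rfl
      exact (hT _ t.2).1 (by rw [hc, zero_smul])
    exact ⟨Units.mk0 c hc0, hc⟩
  choose c hc using h2
  apply Nat.card_le_card_of_injective
    (fun t : T => (c t, (⟨LinearMap.ker t.1, (hT _ t.2).2⟩ : S)))
  intro t t' h
  have e1 : c t = c t' := congrArg Prod.fst h
  have e2 : (⟨LinearMap.ker t.1, (hT _ t.2).2⟩ : S) = ⟨LinearMap.ker t'.1, (hT _ t'.2).2⟩ :=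
    congrArg Prod.snd h
  apply Subtype.ext
  rw [hc t, hc t', e1, e2]

lemma geom_main [Fintype F] [Finite V] (k : ℕ) (hk : 1 ≤ k)
    (hV : Module.finrank F V = 2 * k + 2)
    (B0 Bn : Set (Submodule F V))
    (hB0 : ∀ p ∈ B0, Module.finrank F p = 1)
    (hBn : ∀ H ∈ Bn, Module.finrank F H = 2 * k + 1)
    (hblock : ∀ W : Submodule F V, Module.finrank F W = k + 1 →
      (∃ p ∈ B0, p ≤ W) ∨ (∃ H ∈ Bn, W ≤ H))
    (SIG : Submodule F V) (hSIG : Module.finrank F SIG = k + 2)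
    (hB0SIG : ∀ p ∈ B0, p ≤ SIG)
    (P : Submodule F V) (hP : Module.finrank F P = 1) (hPS : P ≤ SIG) (hPB : P ∉ B0)
    (BP : Set (Submodule F V)) (hBP : BP = {H ∈ Bn | P ≤ H ∧ ¬ SIG ≤ H}) :
    (∃ ρ : Submodule F V, Module.finrank F ρ = k + 1 ∧ ρ ≤ SIG ∧
      (∀ H : Submodule F V, Module.finrank F H = 2 * k + 1 → H ⊓ SIG = ρ → H ∈ BP) ∧
      (Fintype.card F) ^ k ≤ BP.ncard) ∨
    (Fintype.card F) ^ (k - 1) * (Fintype.card F + 1) ≤ BP.ncard := by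
  classical
  have hfd : FiniteDimensional F V := Module.Finite.of_finite
  have hfin : Finite (Module.Dual F V) := 
    Finite.of_injective (fun f : Module.Dual F V => (f : V → F)) DFunLike.coe_injective
  let L := SIG.dualAnnihilator
  let Q := P.dualAnnihilator
  have hLf : Module.finrank F L = k := by
    have := Subspace.finrank_add_finrank_dualAnnihilator_eq SIG
    simp only [L]; omega
  have hQf : Module.finrank F Q = 2 * k + 1 := by
    have := Subspace.finrank_add_finrank_dualAnnihilator_eq P
    simp only [Q]; omega
  have hLQ : L ≤ Q := Submodule.dualAnnihilator_anti hPS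
  obtain ⟨L', hL'⟩ := Submodule.exists_isCompl L
  let W := L' ⊓ Q
  have hsup : L ⊔ W = Q := by
    simp only [W]
    rw [← sup_inf_assoc_of_le _ hLQ, hL'.sup_eq_top, top_inf_eq]
  have hinf : L ⊓ W = ⊥ := by
    rw [eq_bot_iff, ← hL'.inf_eq_bot]
    exact inf_le_inf le_rfl inf_le_left
  have hWf : Module.finrank F W = k + 1 := by
    have := Submodule.finrank_sup_add_finrank_inf_eq L W
    rw [hsup, hinf, finrank_bot] at this
    omega
  have hdis : ∀ f : Module.Dual F V, f ∈ L → f ∈ W → f = 0 := by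
    intro f h1 h2
    have : f ∈ L ⊓ W := ⟨h1, h2⟩
    rwa [hinf, Submodule.mem_bot] at this
  have hmemL : ∀ f : Module.Dual F V, f ∈ L ↔ SIG ≤ LinearMap.ker f := fun f =>
    Submodule.mem_dualAnnihilator f
  let X : Set (W × L) := {x | x.1 ≠ 0 ∧ LinearMap.ker (x.1.1 + x.2.1) ∈ BP}
  have hne : ∀ (w : W) (a : L), w ≠ 0 → w.1 + a.1 ∉ L := by
    intro w a hw h
    apply hw
    apply Subtype.ext
    refine hdis _ ?_ w.2
    have := L.sub_mem h a.2
    simpa using this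
  obtain ⟨R, hR⟩ : ∃ R, R = Fintype.card F ^ (k - 1) := ⟨_, rfl⟩
  have hcL : Nat.card L = Fintype.card F ^ k := by
    rw [Module.natCard_eq_pow_finrank (K := F), hLf, Nat.card_eq_fintype_card]
  have hcR : Nat.card L = Fintype.card F * R := by
    rw [hcL, hR, ← pow_succ', Nat.sub_add_cancel hk]
  have hWf' : Module.finrank F W = (k - 1) + 2 := by omega
  have main := comb_main (F := F) (Y := L) (k - 1) hWf' R hcR X ?_ ?_ ?_
  · rcases main with ⟨w, hw, hall⟩ | hcard
    · left
      have hwL : w.1 ∉ L := by simpa using hne w 0 hw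
      have hker : ∀ a : L, LinearMap.ker (w.1 + a.1) ∈ BP := fun a => (hall a).2
      let g := w.1.domRestrict SIG
      have hg : g ≠ 0 := by
        intro h
        apply hwL
        rw [hmemL]
        intro x hx
        exact DFunLike.congr_fun h (⟨x, hx⟩ : SIG)
      have hρ : LinearMap.ker w.1 ⊓ SIG = (LinearMap.ker g).map SIG.subtype := by
        ext x
        simp [g, and_comm]
      refine ⟨LinearMap.ker w.1 ⊓ SIG, ?_, inf_le_right, ?_, ?_⟩
      · rw [hρ, Submodule.finrank_map_subtype_eq]
        have := Module.Dual.finrank_ker_add_one_of_ne_zero hg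
        omega
      · intro H hH hHS
        obtain ⟨f, hf0, rfl⟩ := exists_ker_eq H (by omega)
        have hle : LinearMap.ker g ≤ LinearMap.ker (f.domRestrict SIG) := by
          intro x hx
          have : (x : V) ∈ LinearMap.ker w.1 ⊓ SIG := ⟨hx, x.2⟩
          rw [← hHS] at this
          exact this.1
        obtain ⟨c, hc⟩ := exists_smul_of_ker_le g (f.domRestrict SIG) hle
        have hc0 : c ≠ 0 := by
          rintro rfl
          apply hwL
          rw [hmemL]
          have : SIG ≤ LinearMap.ker f := by
            intro x hx
            have := DFunLike.congr_fun hc (⟨x, hx⟩ : SIG)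
            simpa using this
          rw [inf_eq_right.2 this] at hHS
          exact inf_eq_right.1 hHS.symm
        have hl : c⁻¹ • f - w.1 ∈ L := by
          rw [hmemL]
          intro x hx
          have := DFunLike.congr_fun hc (⟨x, hx⟩ : SIG)
          simp only [LinearMap.domRestrict_apply, LinearMap.smul_apply, g, smul_eq_mul] at this
          simp [this, hc0]
        have := hker ⟨_, hl⟩
        simp only [add_sub_cancel] at this
        rwa [LinearMap.ker_smul _ _ (inv_ne_zero hc0)] at this
      · rw [← hcL, ← Nat.card_coe_set_eq]
        apply Nat.card_le_card_of_injective
          (fun a : L => (⟨LinearMap.ker (w.1 + a.1), hker a⟩ : BP))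
        intro a b hab
        have hab' : LinearMap.ker (w.1 + a.1) = LinearMap.ker (w.1 + b.1) :=
          congrArg Subtype.val hab
        obtain ⟨c, hc⟩ := exists_smul_of_ker_le _ _ hab'.le
        have hmem : (1 - c) • w.1 ∈ L := by
          have : (1 - c) • w.1 = c • a.1 - b.1 := by
            apply LinearMap.ext
            intro x
            have hx := DFunLike.congr_fun hc x
            simp only [LinearMap.add_apply, LinearMap.smul_apply, LinearMap.sub_apply,
              smul_eq_mul] at hx ⊢
            linear_combination hx
          rw [this]
          exact L.sub_mem (L.smul_mem _ a.2) b.2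
        have hc1 : c = 1 := by
          by_contra h
          exact hwL ((Submodule.smul_mem_iff L (sub_ne_zero.2 (Ne.symm h))).1 hmem)
        rw [hc1, one_smul] at hc
        exact Subtype.ext (add_left_cancel hc).symm
    · right
      let s : W × L → Module.Dual F V := fun x => x.1.1 + x.2.1
      have hs : Function.Injective s := by
        rintro ⟨w, a⟩ ⟨w', a'⟩ h
        have h' : w.1 + a.1 = w'.1 + a'.1 := h
        have hw : w.1 - w'.1 = 0 := by
          refine hdis _ ?_ (W.sub_mem w.2 w'.2)
          have : w.1 - w'.1 = a'.1 - a.1 := by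
            rw [sub_eq_sub_iff_add_eq_add, h']; abel
          rw [this]
          exact L.sub_mem a'.2 a.2
        have hw' : w = w' := Subtype.ext (sub_eq_zero.1 hw)
        subst hw'
        have : a = a' := Subtype.ext (add_left_cancel h')
        rw [this]
      have h1 := ker_count BP (s '' X) (by
        rintro _ ⟨⟨w, a⟩, ⟨hw, hx⟩, rfl⟩
        refine ⟨?_, hx⟩
        intro h
        exact hne w a hw (by
          change w.1 + a.1 = 0 at h
          rw [h]; exact L.zero_mem))
      rw [Set.ncard_image_of_injective _ hs] at h1
      have hq : 1 < Fintype.card F := Fintype.one_lt_card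
      have := Nat.le_of_mul_le_mul_left (hcard.trans h1) (by omega)
      rw [← hR, mul_comm]
      exact this
  · intro v a h
    exact h.1
  · rintro c hc v a ⟨h1, h2⟩
    refine ⟨smul_ne_zero hc h1, ?_⟩
    have : ((c • v : W) : Module.Dual F V) + ((c • a : L) : Module.Dual F V)
      = c • (v.1 + a.1) := by simp
    change LinearMap.ker (((c • v : W) : Module.Dual F V) + ((c • a : L) : Module.Dual F V)) ∈ BP
    rw [this, LinearMap.ker_smul _ _ hc]
    exact h2
  · intro A
    let j : W →ₗ[F] Module.Dual F V := W.subtype + L.subtype ∘ₗ A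
    have hj : ∀ w, j w = w.1 + (A w).1 := fun w => rfl
    have hjinj : Function.Injective j := by
      intro w w' hww
      have hw : j (w - w') = 0 := by
        have h1 := j.map_add (w - w') w'
        have h2 : w - w' + w' = w := sub_add_cancel w w'
        rw [h2, hww] at h1
        exact right_eq_add.1 h1
      by_contra h
      apply hne (w - w') (A (w - w')) (sub_ne_zero.2 h)
      rw [← hj, hw]
      exact L.zero_mem
    let G := LinearMap.range j
    have hGf : Module.finrank F G = k + 1 := by
      rw [LinearMap.finrank_range_of_inj hjinj, hWf]
    let U := G.dualCoannihilator
    have hUf : Module.finrank F U = k + 1 := by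
      have := Subspace.finrank_add_finrank_dualCoannihilator_eq G
      simp only [U]; omega
    have hGQ : G ≤ Q := by
      rintro _ ⟨w, rfl⟩
      rw [hj, ← hsup]
      exact Submodule.add_mem_sup (A w).2 w.2 |> (by rw [add_comm]; exact ·)
    have hPU : P ≤ U := by
      rw [← Submodule.le_dualAnnihilator_iff_le_dualCoannihilator]
      exact hGQ
    have hQG : Q ≤ L ⊔ G := by
      rw [← hsup]
      refine sup_le le_sup_left ?_
      intro w hw
      have : w = -(A ⟨w, hw⟩).1 + j ⟨w, hw⟩ := by rw [hj]; abel
      rw [this]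
      exact Submodule.add_mem_sup (L.neg_mem (A ⟨w, hw⟩).2) ⟨_, rfl⟩
    have hUS : U ⊓ SIG ≤ P := by
      have h1 := Submodule.dualCoannihilator_anti hQG
      rw [Submodule.dualCoannihilator_sup_eq, Subspace.dualAnnihilator_dualCoannihilator_eq,
        Subspace.dualAnnihilator_dualCoannihilator_eq, inf_comm] at h1
      exact h1
    rcases hblock U hUf with ⟨p, hp, hpU⟩ | ⟨H, hH, hUH⟩
    · exfalso
      have hpP : p ≤ P := (le_inf hpU (hB0SIG p hp)).trans hUS
      have : p = P := Submodule.eq_of_le_of_finrank_eq hpP (by rw [hB0 p hp, hP])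
      exact hPB (this ▸ hp)
    · obtain ⟨f, hf0, rfl⟩ := exists_ker_eq H (by rw [hBn H hH, hV])
      have hfG : f ∈ G := by
        have : f ∈ U.dualAnnihilator := (Submodule.mem_dualAnnihilator f).2 hUH
        rwa [Subspace.dualCoannihilator_dualAnnihilator_eq] at this
      obtain ⟨w, rfl⟩ := hfG
      have hw : w ≠ 0 := by
        rintro rfl
        exact hf0 (map_zero j)
      refine ⟨w, hw, ?_⟩
      rw [hBP]
      exact ⟨hH, hPU.trans hUH, fun h => hne w (A w) hw ((hmemL _).2 h)⟩

end geom

/-- Let `B = B0 ∪ Bn` be a blocking set of points and hyperplanes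
with respect to `k`-spaces in `PG(2k+1,q)`, suppose `B0` is contained in a
`(k+1)`-space `SIG`, and let `P` be a point of `SIG` not in `B0`.  Let
`BP = {H ∈ Bn | P ≤ H ∧ ¬ SIG ≤ H}`.  Then either there is a `k`-space `ρ ⊆ SIG`
such that `BP` contains every hyperplane meeting `SIG` exactly in `ρ`, in which case
`|BP| ≥ q^k`, or `|BP| ≥ q^(k-1)·(q+1)`. -/
theorem stmt_14 {F : Type} [Field F] [Fintype F] (k : ℕ) (hk : 1 ≤ k)
    (B0 Bn : Set (Submodule F (Fin (2 * k + 2) → F)))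
    (hB0 : ∀ p ∈ B0, Module.finrank F p = 1)
    (hBn : ∀ H ∈ Bn, Module.finrank F H = 2 * k + 1)
    (hblock : ∀ W : Submodule F (Fin (2 * k + 2) → F), Module.finrank F W = k + 1 →
      (∃ p ∈ B0, p ≤ W) ∨ (∃ H ∈ Bn, W ≤ H))
    (SIG : Submodule F (Fin (2 * k + 2) → F)) (hSIG : Module.finrank F SIG = k + 2)
    (hB0SIG : ∀ p ∈ B0, p ≤ SIG)
    (P : Submodule F (Fin (2 * k + 2) → F)) (hP : Module.finrank F P = 1) (hPS : P ≤ SIG) (hPB : P ∉ B0) :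
    (∃ ρ : Submodule F (Fin (2 * k + 2) → F), Module.finrank F ρ = k + 1 ∧ ρ ≤ SIG ∧
      (∀ H : Submodule F (Fin (2 * k + 2) → F), Module.finrank F H = 2 * k + 1 → H ⊓ SIG = ρ →
        H ∈ {H ∈ Bn | P ≤ H ∧ ¬ SIG ≤ H}) ∧
      (Fintype.card F) ^ k ≤ {H ∈ Bn | P ≤ H ∧ ¬ SIG ≤ H}.ncard) ∨
    (Fintype.card F) ^ (k - 1) * (Fintype.card F + 1) ≤ {H ∈ Bn | P ≤ H ∧ ¬ SIG ≤ H}.ncard := by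
  have : Finite (Fin (2 * k + 2) → F) := inferInstance
  exact geom_main k hk (by simp) B0 Bn hB0 hBn hblock SIG hSIG hB0SIG P hP hPS hPB _ rfl
end

section
/- Let n be an even integer with n ≥ 2, and work in PG(n,2). Let Σ be an (n/2)-space and κ ⊂ Σ an (n/2 - 1)-space. Let B_0 be the set of points of Σ not in κ, and let B_{n-1} be the set of hyperplanes containing κ but not containing Σ. Then every (n/2)-space of PG(n,2) contains a point of B_0 or is contained in a hyperplane of B_{n-1}, and |B_0| + |B_{n-1}| = 2^{n/2+1}. -/
theorem aux_count_s15 {V : Type*} [AddCommGroup V] [Module (ZMod 2) V] [FiniteDimensional (ZMod 2) V]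
    (A B : Submodule (ZMod 2) V) (h : A ≤ B) (m : ℕ)
    (hA : Module.finrank (ZMod 2) A = m) (hB : Module.finrank (ZMod 2) B = m + 1) :
    {p : Submodule (ZMod 2) V | Module.finrank (ZMod 2) p = 1 ∧ p ≤ B ∧ ¬ p ≤ A}.ncard = 2 ^ m := by
  have hfin : Finite V := Module.finite_of_finite (ZMod 2)
  have cA : (A : Set V).ncard = 2 ^ m := by
    have := Module.natCard_eq_pow_finrank (K := ZMod 2) (V := A)
    rw [hA, Nat.card_zmod] at this
    exact this
  have cB : (B : Set V).ncard = 2 ^ (m + 1) := by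
    have := Module.natCard_eq_pow_finrank (K := ZMod 2) (V := B)
    rw [hB, Nat.card_zmod] at this
    exact this
  have cD : ((B : Set V) \ (A : Set V)).ncard = 2 ^ m := by
    rw [Set.ncard_diff (by exact h), cA, cB, pow_succ]
    omega
  have him : {p : Submodule (ZMod 2) V | Module.finrank (ZMod 2) p = 1 ∧ p ≤ B ∧ ¬ p ≤ A}
      = Set.image (fun v : V => Submodule.span (ZMod 2) {v}) ((B : Set V) \ (A : Set V)) := by
    ext p
    simp only [Set.mem_setOf_eq, Set.mem_image, Set.mem_diff, SetLike.mem_coe]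
    constructor
    · rintro ⟨h1, h2, h3⟩
      obtain ⟨v, hv, hvA⟩ := SetLike.not_le_iff_exists.mp h3
      refine ⟨v, ⟨h2 hv, hvA⟩, ?_⟩
      apply Submodule.eq_of_le_of_finrank_eq
      · simpa using hv
      · rw [h1]
        exact finrank_span_singleton (by rintro rfl; exact hvA A.zero_mem)
    · rintro ⟨v, ⟨hv, hvA⟩, rfl⟩
      refine ⟨finrank_span_singleton (by rintro rfl; exact hvA A.zero_mem), by simpa using hv,
        by simpa using hvA⟩
  rw [him, Set.ncard_image_of_injOn, cD]
  rintro v ⟨hv, hvA⟩ w ⟨hw, hwA⟩ hvw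
  have hmem : v ∈ Submodule.span (ZMod 2) {w} := by
    have : v ∈ Submodule.span (ZMod 2) {v} := Submodule.mem_span_singleton_self v
    exact hvw.le this
  obtain ⟨c, hc⟩ := Submodule.mem_span_singleton.mp hmem
  have h01 : ∀ c : ZMod 2, c = 0 ∨ c = 1 := by decide
  rcases h01 c with rfl | rfl
  · rw [zero_smul] at hc
    exact absurd (hc ▸ A.zero_mem) hvA
  · rw [one_smul] at hc
    exact hc.symm

/-- Let `n = 2m` be even with `n ≥ 2` and work in `PG(n,2)`.
Let `SIG` be an `(n/2)`-space and `kap ⊂ SIG` an `(n/2 - 1)`-space.  Let `B0` be the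
set of points of `SIG` not in `kap`, and `Bn` the set of hyperplanes through `kap`
not containing `SIG`.  Then `B0 ∪ Bn` blocks every `(n/2)`-space of `PG(n,2)` and
`|B0| + |Bn| = 2^(n/2+1)`. -/
theorem stmt_15 (m : ℕ) (hm : 1 ≤ m)
    (SIG kap : Submodule (ZMod 2) (Fin (2 * m + 1) → ZMod 2))
    (hSIG : Module.finrank (ZMod 2) SIG = m + 1)
    (hkap : Module.finrank (ZMod 2) kap = m)
    (hsub : kap < SIG)
    (B0 Bn : Set (Submodule (ZMod 2) (Fin (2 * m + 1) → ZMod 2)))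
    (hB0 : B0 = {p : Submodule (ZMod 2) (Fin (2 * m + 1) → ZMod 2) | Module.finrank (ZMod 2) p = 1 ∧ p ≤ SIG ∧ ¬ p ≤ kap})
    (hBn : Bn = {H : Submodule (ZMod 2) (Fin (2 * m + 1) → ZMod 2) | Module.finrank (ZMod 2) H = 2 * m ∧ kap ≤ H ∧ ¬ SIG ≤ H}) :
    (∀ W : Submodule (ZMod 2) (Fin (2 * m + 1) → ZMod 2), Module.finrank (ZMod 2) W = m + 1 →
      (∃ p ∈ B0, p ≤ W) ∨ (∃ H ∈ Bn, W ≤ H)) ∧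
    B0.ncard + Bn.ncard = 2 ^ (m + 1) := by
  subst hB0 hBn
  have hV : Module.finrank (ZMod 2) (Fin (2 * m + 1) → ZMod 2) = 2 * m + 1 := by simp
  refine ⟨?_, ?_⟩
  · intro W _
    by_cases hW : W ⊓ SIG ≤ kap
    · right
      have hn : ¬ SIG ≤ kap ⊔ W := by
        intro hle
        have h1 : SIG = kap ⊔ W ⊓ SIG := by
          rw [← sup_inf_assoc_of_le W hsub.le]
          exact (inf_eq_right.mpr hle).symm
        exact hsub.not_ge (h1.le.trans (sup_le le_rfl hW))
      obtain ⟨x, hx, hxn⟩ := SetLike.not_le_iff_exists.mp hn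
      obtain ⟨f, hf, hfk⟩ := Submodule.exists_le_ker_of_notMem hxn
      have hf0 : f ≠ 0 := by rintro rfl; simp at hf
      have hk := Module.Dual.finrank_ker_add_one_of_ne_zero hf0
      refine ⟨LinearMap.ker f, ⟨by omega, le_sup_left.trans hfk, fun hS => hf (hS hx)⟩,
        le_sup_right.trans hfk⟩
    · left
      obtain ⟨v, hv, hvk⟩ := SetLike.not_le_iff_exists.mp hW
      refine ⟨Submodule.span (ZMod 2) {v}, ⟨finrank_span_singleton ?_, ?_, ?_⟩, ?_⟩
      · rintro rfl; exact hvk kap.zero_mem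
      · simpa using hv.2
      · simpa using hvk
      · simpa using hv.1
  · rw [aux_count_s15 kap SIG hsub.le m hkap hSIG]
    have e1 := Subspace.finrank_add_finrank_dualAnnihilator_eq kap
    have e2 := Subspace.finrank_add_finrank_dualAnnihilator_eq SIG
    have key := aux_count_s15 SIG.dualAnnihilator kap.dualAnnihilator
      (Submodule.dualAnnihilator_anti hsub.le) m (by omega) (by omega)
    have : {H : Submodule (ZMod 2) (Fin (2 * m + 1) → ZMod 2) |
        Module.finrank (ZMod 2) H = 2 * m ∧ kap ≤ H ∧ ¬ SIG ≤ H}.ncard = 2 ^ m := by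
      rw [← key]
      refine Set.ncard_congr (fun H _ => H.dualAnnihilator) ?_ ?_ ?_
      · rintro H ⟨h1, h2, h3⟩
        have e3 := Subspace.finrank_add_finrank_dualAnnihilator_eq H
        exact ⟨by omega, Subspace.dualAnnihilator_le_dualAnnihilator_iff.mpr h2,
          fun h => h3 (Subspace.dualAnnihilator_le_dualAnnihilator_iff.mp h)⟩
      · intro H K _ _ h
        exact Subspace.dualAnnihilator_inj.mp h
      · rintro p ⟨h1, h2, h3⟩
        obtain ⟨H, rfl⟩ : ∃ H : Submodule (ZMod 2) (Fin (2 * m + 1) → ZMod 2),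
            H.dualAnnihilator = p :=
          ⟨p.dualCoannihilator, Subspace.dualCoannihilator_dualAnnihilator_eq⟩
        have e3 := Subspace.finrank_add_finrank_dualAnnihilator_eq H
        exact ⟨H, ⟨by omega, Subspace.dualAnnihilator_le_dualAnnihilator_iff.mp h2,
          fun h => h3 (Subspace.dualAnnihilator_le_dualAnnihilator_iff.mpr h)⟩, rfl⟩
    rw [this, pow_succ]
    omega
end

section
/- Let k, n be integers with 0 ≤ k and k ≤ (n-3)/2. Then the Gaussian binomial coefficient C(n,k)_2 (with q = 2) satisfies C(n,k)_2 < 2^{(n-k-1)(k+1)}. -/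
/-- The Gaussian binomial coefficient `C(a,b)_q`, where `q = Fintype.card F`:
the number of `b`-dimensional linear subspaces of `F^a`; it equals
`∏ i in [1..b], (q^(a-b+i)-1)/(q^i-1)`, and is `0` unless `0 ≤ b ≤ a`. -/
noncomputable def gauss (F : Type) [Field F] [Fintype F] (a b : ℕ) : ℕ :=
  Nat.card {W : Submodule F (Fin a → F) // Module.finrank F W = b}

theorem aux_prod_succ (k : ℕ) :
    ∏ i : Fin (k + 1), (2 ^ (k + 1) - 2 ^ (i : ℕ))
      = (2 ^ (k + 1) - 1) * (2 ^ k * ∏ i : Fin k, (2 ^ k - 2 ^ (i : ℕ))) := by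
  rw [Fin.prod_univ_succ]
  congr 1
  have h : ∀ i : Fin k, (2 ^ (k + 1) - 2 ^ ((i.succ : Fin (k + 1)) : ℕ) : ℕ)
      = 2 * (2 ^ k - 2 ^ (i : ℕ)) := by
    intro i
    rw [Fin.val_succ, pow_succ, pow_succ, Nat.mul_sub]
    congr 1 <;> ring
  rw [Finset.prod_congr rfl (fun i _ => h i), Finset.prod_mul_distrib]
  simp

theorem aux_prod_lower (k : ℕ) :
    2 ^ (k * k) * (2 ^ k + 2) ≤ 4 * 2 ^ k * ∏ i : Fin k, (2 ^ k - 2 ^ (i : ℕ)) := by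
  induction k with
  | zero => simp
  | succ k ih =>
    rw [aux_prod_succ]
    rcases Nat.eq_zero_or_pos k with rfl | hk
    · simp
    generalize (∏ i : Fin k, (2 ^ k - 2 ^ (i : ℕ)) : ℕ) = P at *
    have ha : 2 ≤ 2 ^ k := by
      calc 2 = 2 ^ 1 := rfl
        _ ≤ 2 ^ k := Nat.pow_le_pow_right (by norm_num) hk
    have e : 2 ^ ((k + 1) * (k + 1)) = 2 * 2 ^ k * 2 ^ k * 2 ^ (k * k) := by ring
    rw [e, pow_succ]
    generalize 2 ^ (k * k) = B at *
    generalize 2 ^ k = a at *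
    obtain ⟨c, rfl⟩ := Nat.exists_eq_add_of_le ha
    have : (2 + c) * 2 - 1 = 2 * c + 3 := by omega
    rw [this]
    calc 2 * (2 + c) * (2 + c) * B * ((2 + c) * 2 + 2)
        ≤ 2 * (2 + c) * (2 * c + 3) * (B * (2 + c + 2)) := by
          have : (2 + c) * ((2 + c) * 2 + 2) ≤ (2 * c + 3) * (2 + c + 2) := by nlinarith
          calc _ = 2 * (2 + c) * B * ((2 + c) * ((2 + c) * 2 + 2)) := by ring
            _ ≤ 2 * (2 + c) * B * ((2 * c + 3) * (2 + c + 2)) := Nat.mul_le_mul_left _ this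
            _ = _ := by ring
      _ ≤ 2 * (2 + c) * (2 * c + 3) * (4 * (2 + c) * P) := Nat.mul_le_mul_left _ ih
      _ = _ := by ring

theorem aux_count_s17 (n k : ℕ) (hk : k ≤ n) :
    gauss (ZMod 2) n k * ∏ i : Fin k, (2 ^ k - 2 ^ (i : ℕ)) ≤ 2 ^ (n * k) := by
  classical
  let S := {W : Submodule (ZMod 2) (Fin n → ZMod 2) // Module.finrank (ZMod 2) W = k}
  let T := Σ W : S, {s : Fin k → W.1 // LinearIndependent (ZMod 2) s}
  let f : T → (Fin k → (Fin n → ZMod 2)) := fun t i => (t.2.1 i : Fin n → ZMod 2)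
  have hspan : ∀ t : T, Submodule.span (ZMod 2) (Set.range (f t)) = t.1.1 := by
    rintro ⟨⟨W, hW⟩, ⟨s, hs⟩⟩
    have h1 : Set.range (f ⟨⟨W, hW⟩, ⟨s, hs⟩⟩) = W.subtype '' Set.range s := by
      rw [← Set.range_comp]; rfl
    have h2 := hs.span_eq_top_of_card_eq_finrank' (by simp [hW])
    rw [h1, Submodule.span_image, h2]
    simp
  have hinj : Function.Injective f := by
    intro t t' h
    have hW : t.1 = t'.1 := Subtype.ext (by rw [← hspan t, ← hspan t', h])
    obtain ⟨W, s⟩ := t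
    obtain ⟨W', s'⟩ := t'
    obtain rfl : W = W' := hW
    congr 1
    ext i : 2
    exact Subtype.ext (congrFun h i)
  have h := Nat.card_le_card_of_injective f hinj
  have hT : Nat.card T = gauss (ZMod 2) n k * ∏ i : Fin k, (2 ^ k - 2 ^ (i : ℕ)) := by
    have hc : ∀ W : S, Nat.card {s : Fin k → W.1 // LinearIndependent (ZMod 2) s}
        = ∏ i : Fin k, (2 ^ k - 2 ^ (i : ℕ)) := by
      intro W
      rw [card_linearIndependent (by rw [W.2]), W.2]
      simp
    haveI : Fintype S := Fintype.ofFinite S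
    rw [Nat.card_sigma, Finset.sum_congr rfl (fun W _ => hc W)]
    simp [gauss, S, Nat.card_eq_fintype_card]
  rw [hT] at h
  refine h.trans (le_of_eq ?_)
  simp [Nat.card_eq_fintype_card, pow_mul]

/-- For `q = 2` and integers `0 ≤ k ≤ (n-3)/2` (i.e. `2k + 3 ≤ n`),
the Gaussian binomial coefficient satisfies `C(n,k)_2 < 2^((n-k-1)(k+1))`. -/
theorem stmt_17 (k n : ℕ) (hkn : 2 * k + 3 ≤ n) :
    gauss (ZMod 2) n k < 2 ^ ((n - k - 1) * (k + 1)) := by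
  have h1 := aux_count_s17 n k (by omega)
  have h2 := aux_prod_lower k
  obtain ⟨d, rfl⟩ := Nat.exists_eq_add_of_le hkn
  have e : 2 * k + 3 + d - k - 1 = k + 2 + d := by omega
  rw [e]
  generalize gauss (ZMod 2) (2 * k + 3 + d) k = g at *
  generalize (∏ i : Fin k, (2 ^ k - 2 ^ (i : ℕ)) : ℕ) = P at *
  have h3 : 2 ^ (k * k) < 4 * P := by
    have : 2 ^ k * 2 ^ (k * k) < 2 ^ k * (4 * P) := by
      have : 0 < 2 ^ (k * k) := by positivity
      nlinarith
    exact Nat.lt_of_mul_lt_mul_left this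
  by_contra hg
  push Not at hg
  have h4 : 2 ^ ((k + 2 + d) * (k + 1)) * 2 ^ (k * k) < g * (4 * P) :=
    Nat.mul_lt_mul_of_le_of_lt hg h3 (lt_of_lt_of_le (by positivity) hg)
  have h5 : 2 ^ ((k + 2 + d) * (k + 1)) * 2 ^ (k * k)
      = 2 ^ d * (4 * 2 ^ ((2 * k + 3 + d) * k)) := by
    rw [show (4 : ℕ) = 2 ^ 2 from rfl, ← pow_add, ← pow_add, ← pow_add]
    congr 1
    ring
  have h6 : 1 ≤ 2 ^ d := Nat.one_le_two_pow
  have h7 : 4 * 2 ^ ((2 * k + 3 + d) * k) ≤ 2 ^ d * (4 * 2 ^ ((2 * k + 3 + d) * k)) :=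
    Nat.le_mul_of_pos_left _ h6
  have h8 : g * (4 * P) = 4 * (g * P) := by ring
  omega
end
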